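/- Interior Hessian estimate for σ_k augmented Hessian equations with general H under stronger integrability (a priori form of Theorem 6.1). Let n ≥ 3, let Ω ⊆ ℝⁿ be a domain, let 3 ≤ k ≤ n and p > kn. Let f : Ω×ℝ×ℝⁿ → ℝ be positive and C^{1,1}_loc, and let H : Ω×ℝ×ℝⁿ → Sym_n(ℝ) be C^{1,1}_loc. Fix concentric open balls B_R ⊂ B_{2R} with closure(B_{2R}) ⊂ Ω and a constant M > 0. Then there exists a constant C, depending only on n, k, p, R, f, H and M, such that every u ∈ C²(Ω) satisfying σ_k(A_H[u](x)) = f(x,u(x),∇u(x))^k and λ(A_H[u](x)) ∈ Γ_k^+ for every x ∈ Ω, together with ‖u‖_{W^{2,p}(B_{2R})} ≤ M, obeys sup_{x ∈ B_R} |∇²u(x)| ≤ C. -/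

import Mathlib

open MeasureTheory Metric Set Matrix

noncomputable section

/-- The `k`-th elementary symmetric polynomial of the eigenvalues of an `n × n` real
matrix, defined via the coefficients of the characteristic polynomial. -/
def esymmMat {n : ℕ} (k : ℕ) (A : Matrix (Fin n) (Fin n) ℝ) : ℝ :=
  (-1 : ℝ) ^ k * A.charpoly.coeff (n - k)

/-- `λ(A) ∈ Γ_k^+`, i.e. `σ_j(A) > 0` for all `1 ≤ j ≤ k`. -/
def GammaPlus {n : ℕ} (k : ℕ) (A : Matrix (Fin n) (Fin n) ℝ) : Prop :=
  ∀ j : ℕ, 1 ≤ j → j ≤ k → 0 < esymmMat j A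

/-- The Newton tensors `T_0(A) = I`, `T_j(A) = σ_j(A) I - T_{j-1}(A) A`. -/
def newtonT {n : ℕ} : ℕ → Matrix (Fin n) (Fin n) ℝ → Matrix (Fin n) (Fin n) ℝ
  | 0, _ => 1
  | (j + 1), A => esymmMat (j + 1) A • (1 : Matrix (Fin n) (Fin n) ℝ) - newtonT j A * A

/-- `i`-th partial derivative. -/
def pd {n : ℕ} (i : Fin n) (w : (Fin n → ℝ) → ℝ) (x : Fin n → ℝ) : ℝ :=
  fderiv ℝ w x (Pi.single i 1)

/-- Gradient as a vector. -/
def grad {n : ℕ} (w : (Fin n → ℝ) → ℝ) (x : Fin n → ℝ) : Fin n → ℝ :=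
  fun i => pd i w x

/-- Hessian matrix. -/
def hess {n : ℕ} (w : (Fin n → ℝ) → ℝ) (x : Fin n → ℝ) : Matrix (Fin n) (Fin n) ℝ :=
  Matrix.of fun i j => pd i (pd j w) x

/-- Squared Euclidean norm of a vector. -/
def normSq {n : ℕ} (ξ : Fin n → ℝ) : ℝ := ∑ i, ξ i ^ 2

/-- Euclidean norm of a vector. -/
def vnorm {n : ℕ} (ξ : Fin n → ℝ) : ℝ := Real.sqrt (∑ i, ξ i ^ 2)

/-- Operator norm of a matrix, viewed as a linear map between Euclidean spaces. -/
def matNorm {n : ℕ} (M : Matrix (Fin n) (Fin n) ℝ) : ℝ :=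
  ‖LinearMap.toContinuousLinearMap (Matrix.toEuclideanLin M)‖

/-- Laplacian. -/
def lapl {n : ℕ} (w : (Fin n → ℝ) → ℝ) (x : Fin n → ℝ) : ℝ := ∑ l, pd l (pd l w) x

/-- `W^{2,p}` norm (with classical derivatives) on a set. -/
def W2pNorm {n : ℕ} (p : ℝ) (w : (Fin n → ℝ) → ℝ) (B : Set (Fin n → ℝ)) : ℝ :=
  (∫ x in B, (|w x| ^ p + vnorm (grad w x) ^ p + matNorm (hess w x) ^ p)) ^ (1 / p)

/-- `C^{1,1}_loc` on a set: continuously differentiable with locally Lipschitz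
first derivatives. -/
def C11On {E F : Type*} [NormedAddCommGroup E] [NormedSpace ℝ E]
    [NormedAddCommGroup F] [NormedSpace ℝ F] (f : E → F) (s : Set E) : Prop :=
  ContDiffOn ℝ 1 f s ∧
    ∀ x ∈ s, ∃ (K : NNReal) (t : Set E), t ∈ nhdsWithin x s ∧
      LipschitzOnWith K (fderivWithin ℝ f s) t

/-- First order difference quotient `∇_l^h`. -/
def dq {n : ℕ} (l : Fin n) (h : ℝ) (w : (Fin n → ℝ) → ℝ) (x : Fin n → ℝ) : ℝ :=
  (w (x + h • (Pi.single l 1 : Fin n → ℝ)) - w x) / h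

/-- Second order difference quotient `Δ_{ll}^h`. -/
def ddq {n : ℕ} (l : Fin n) (h : ℝ) (w : (Fin n → ℝ) → ℝ) (x : Fin n → ℝ) : ℝ :=
  (w (x + h • (Pi.single l 1 : Fin n → ℝ)) - 2 * w x + w (x - h • (Pi.single l 1 : Fin n → ℝ))) / h ^ 2

/-- `L^s` seminorm (as an extended real number) of a function on a set. -/
def lpN {n : ℕ} (s : ℝ) (w : (Fin n → ℝ) → ℝ) (S : Set (Fin n → ℝ)) : ENNReal :=
  (∫⁻ x in S, ENNReal.ofReal (|w x| ^ s)) ^ (1 / s)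

end

/-! ### Elementary symmetric functions -/

/-- elementary symmetric function of degree `k` of the variables `x i`, `i ∈ s`. -/
noncomputable def esf {ι : Type} (s : Finset ι) (k : ℕ) (x : ι → ℝ) : ℝ :=
  ∑ t ∈ s.powersetCard k, ∏ i ∈ t, x i

lemma esf_zero {ι : Type} (s : Finset ι) (x : ι → ℝ) : esf s 0 x = 1 := by
  simp [esf]

lemma esf_empty_succ {ι : Type} (k : ℕ) (x : ι → ℝ) : esf (∅ : Finset ι) (k+1) x = 0 := by
  unfold esf
  rw [Finset.powersetCard_eq_empty.2 (by simp)]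
  simp

lemma esf_insert {ι : Type} [DecidableEq ι] {s : Finset ι} {a : ι} (ha : a ∉ s) (k : ℕ)
    (x : ι → ℝ) : esf (insert a s) (k+1) x = esf s (k+1) x + x a * esf s k x := by
  unfold esf
  rw [Finset.powersetCard_succ_insert ha, Finset.sum_union, Finset.sum_image, Finset.mul_sum]
  · congr 1
    refine Finset.sum_congr rfl fun t ht => ?_
    rw [Finset.prod_insert]
    intro h
    exact ha ((Finset.mem_powersetCard.1 ht).1 h)
  · intro t ht t' ht' h
    have h1 : a ∉ t := fun h => ha ((Finset.mem_powersetCard.1 ht).1 h)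
    have h2 : a ∉ t' := fun h => ha ((Finset.mem_powersetCard.1 ht').1 h)
    rw [← Finset.erase_insert h1, ← Finset.erase_insert h2, h]
  · rw [Finset.disjoint_left]
    intro t ht ht'
    obtain ⟨t', _, rfl⟩ := Finset.mem_image.1 ht'
    exact ha ((Finset.mem_powersetCard.1 ht).1 (Finset.mem_insert_self _ _))

lemma esf_erase {ι : Type} [DecidableEq ι] {s : Finset ι} {a : ι} (ha : a ∈ s) (k : ℕ)
    (x : ι → ℝ) : esf s (k+1) x = esf (s.erase a) (k+1) x + x a * esf (s.erase a) k x := by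
  conv_lhs => rw [← Finset.insert_erase ha]
  exact esf_insert (Finset.notMem_erase a s) k x

lemma esf_sum_erase {ι : Type} [DecidableEq ι] (s : Finset ι) (x : ι → ℝ) : ∀ k : ℕ,
    ∑ i ∈ s, x i * esf (s.erase i) k x = (k+1 : ℝ) * esf s (k+1) x := by
  induction s using Finset.induction_on with
  | empty => intro k; simp [esf_empty_succ]
  | insert a s ha ih =>
    intro k
    rw [Finset.sum_insert ha, Finset.erase_insert ha, esf_insert ha]
    have key : ∀ i ∈ s, (insert a s).erase i = insert a (s.erase i) := by
      intro i hi
      rw [Finset.erase_insert_of_ne]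
      rintro rfl; exact ha hi
    have hna : ∀ i, a ∉ s.erase i := fun i h => ha (Finset.mem_of_mem_erase h)
    rw [Finset.sum_congr rfl (fun i hi => by rw [key i hi])]
    cases k with
    | zero =>
      have := ih 0
      simp only [esf_zero] at this ⊢
      rw [this]; push_cast; ring
    | succ k =>
      have h1 := ih (k+1)
      have h2 := ih k
      have : ∑ i ∈ s, x i * esf (insert a (s.erase i)) (k+1) x
          = ∑ i ∈ s, x i * esf (s.erase i) (k+1) x + x a * ∑ i ∈ s, x i * esf (s.erase i) k x := by
        rw [Finset.mul_sum, ← Finset.sum_add_distrib]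
        refine Finset.sum_congr rfl fun i _ => ?_
        rw [esf_insert (hna i)]; ring
      rw [this, h1, h2]; push_cast; ring

lemma esf_hasDerivAt {ι : Type} [DecidableEq ι] (s : Finset ι) (x y : ι → ℝ) : ∀ k : ℕ,
    HasDerivAt (fun t : ℝ => esf s (k+1) (x + t • y)) (∑ i ∈ s, y i * esf (s.erase i) k x) 0 := by
  induction s using Finset.induction_on with
  | empty => intro k; simp [esf_empty_succ, hasDerivAt_const]
  | insert a s ha ih =>
    intro k
    have key : ∀ i ∈ s, (insert a s).erase i = insert a (s.erase i) := by
      intro i hi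
      rw [Finset.erase_insert_of_ne]
      rintro rfl; exact ha hi
    have hna : ∀ i, a ∉ s.erase i := fun i h => ha (Finset.mem_of_mem_erase h)
    rw [Finset.sum_insert ha, Finset.erase_insert ha,
      Finset.sum_congr rfl (fun i hi => by rw [key i hi])]
    have e : (fun t : ℝ => esf (insert a s) (k+1) (x + t • y)) =
        fun t : ℝ => esf s (k+1) (x + t • y) + (x a + t * y a) * esf s k (x + t • y) := by
      funext t; rw [esf_insert ha]; simp
    rw [e]
    have hlin : HasDerivAt (fun t : ℝ => x a + t * y a) (y a) 0 := by
      have := ((hasDerivAt_id (0:ℝ)).mul_const (y a)).const_add (x a)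
      simpa using this
    cases k with
    | zero =>
      have h1 := (ih 0).add hlin
      simp only [esf_zero] at h1 ⊢
      have h2 : HasDerivAt (fun t : ℝ => esf s (0+1) (x + t • y) + (x a + t * y a) * 1)
        (∑ i ∈ s, y i * 1 + y a) 0 := by
        refine h1.congr_of_eventuallyEq (Filter.Eventually.of_forall fun t => ?_)
        simp
      refine h2.congr_deriv ?_
      ring
    | succ k =>
      have h1 := (ih (k+1)).add (hlin.mul (ih k))
      refine h1.congr_deriv ?_
      simp only [zero_smul, add_zero, zero_mul]
      rw [Finset.mul_sum, add_left_comm, ← Finset.sum_add_distrib]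
      congr 1
      refine Finset.sum_congr rfl fun i _ => ?_
      rw [esf_insert (hna i)]; ring

/-! Newton inequality -/

open Polynomial in
lemma splits_coeff_ineq {p : ℝ[X]} (hp : p.Splits) :
    2 * p.coeff 0 * p.coeff 2 ≤ p.coeff 1 ^ 2 := by
  rw [hp.eq_prod_roots]
  have : ∀ m : Multiset ℝ, 2 * ((m.map (fun a => X - C a)).prod).coeff 0 *
      ((m.map (fun a => X - C a)).prod).coeff 2 ≤ ((m.map (fun a => X - C a)).prod).coeff 1 ^ 2 := by
    intro m
    induction m using Multiset.induction_on with
    | empty => simp [coeff_one]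
    | cons a m ih =>
      rw [Multiset.map_cons, Multiset.prod_cons]
      set q := (m.map (fun a => X - C a)).prod
      simp only [sub_mul, coeff_sub, coeff_C_mul]
      have h0 : (X * q).coeff 0 = 0 := by simp
      have h1 : (X * q).coeff 1 = q.coeff 0 := coeff_X_mul q 0
      have h2 : (X * q).coeff 2 = q.coeff 1 := coeff_X_mul q 1
      rw [h0, h1, h2]
      nlinarith [mul_nonneg (sq_nonneg a) (sub_nonneg.2 ih), sq_nonneg (q.coeff 0)]
  have h := this p.roots
  simp only [coeff_C_mul]
  nlinarith [mul_nonneg (sq_nonneg p.leadingCoeff) (sub_nonneg.2 h)]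

open Polynomial in
lemma splits_derivative {p : ℝ[X]} (hp : p.Splits) : (derivative p).Splits := by
  by_cases h0 : derivative p = 0
  · rw [h0]; exact Splits.zero
  rw [splits_iff_card_roots] at hp ⊢
  have h1 := card_roots_le_derivative p
  have h2 := card_roots' (derivative p)
  have h3 := natDegree_derivative_lt (p := p) (by
    intro h; apply h0; rw [natDegree_eq_zero.1 h |>.choose_spec.symm]; simp)
  omega

open Polynomial in
lemma splits_iterate_derivative {p : ℝ[X]} (hp : p.Splits) : ∀ j : ℕ, (derivative^[j] p).Splits := by
  intro j
  induction j with
  | zero => simpa using hp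
  | succ j ih => rw [Function.iterate_succ_apply']; exact splits_derivative ih

open Polynomial in
lemma esf_coeff {ι : Type} [DecidableEq ι] (s : Finset ι) (x : ι → ℝ) : ∀ k : ℕ,
    (∏ i ∈ s, (1 + C (x i) * X)).coeff k = esf s k x := by
  induction s using Finset.induction_on with
  | empty =>
    intro k
    cases k with
    | zero => simp [esf_zero]
    | succ k => simp [esf_empty_succ, coeff_one]
  | insert a s ha ih =>
    intro k
    rw [Finset.prod_insert ha, add_mul, one_mul, coeff_add, mul_assoc, coeff_C_mul, ih]
    cases k with
    | zero => simp [esf_zero]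
    | succ k => rw [coeff_X_mul, ih, esf_insert ha]

open Polynomial in
lemma esf_newton {ι : Type} [DecidableEq ι] (s : Finset ι) (x : ι → ℝ) (k : ℕ) :
    esf s k x * esf s (k+2) x ≤ esf s (k+1) x ^ 2 := by
  have hp : (∏ i ∈ s, (1 + C (x i) * X) : ℝ[X]).Splits := by
    refine Splits.prod fun i _ => ?_
    apply Splits.of_natDegree_le_one
    compute_degree
  have h := splits_coeff_ineq (splits_iterate_derivative hp k)
  simp only [coeff_iterate_derivative, esf_coeff, nsmul_eq_mul] at h
  rw [show 0 + k = k by ring, show 2 + k = k+2 by ring, show 1 + k = k+1 by ring] at h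
  have e0 : ((k.descFactorial k : ℕ):ℝ) = (k.factorial : ℝ) := by rw [Nat.descFactorial_self]
  have e1 : (((k+1).descFactorial k : ℕ):ℝ) = (k+1) * (k.factorial : ℝ) := by
    have := Nat.factorial_mul_descFactorial (n := k+1) (k := k) (by omega)
    rw [show k + 1 - k = 1 by omega, Nat.factorial_one, one_mul, Nat.factorial_succ] at this
    rw [this]; push_cast; ring
  have e2 : (((k+2).descFactorial k : ℕ):ℝ) * 2 = (k+2) * (k+1) * (k.factorial : ℝ) := by
    have := Nat.factorial_mul_descFactorial (n := k+2) (k := k) (by omega)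
    rw [show k + 2 - k = 2 by omega, Nat.factorial_two, Nat.factorial_succ, Nat.factorial_succ] at this
    have h2 : ((2 * (k+2).descFactorial k : ℕ) : ℝ) = (((k + 1 + 1) * ((k + 1) * k.factorial) : ℕ) : ℝ) := by
      exact_mod_cast this
    push_cast at h2
    linarith
  rw [e0, e1] at h
  set K := (k.factorial : ℝ)
  have hK : 0 < K := by positivity
  set A := esf s k x
  set B := esf s (k+1) x
  set D := esf s (k+2) x
  have h' : K^2 * (k+1) * ((k+2) * (A * D)) ≤ K^2 * (k+1) * ((k+1) * B^2) := by
    calc K^2 * (k+1) * ((k+2) * (A * D)) = K * A * D * ((k+2) * (k+1) * K) := by ring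
      _ = 2 * (K * A) * (((k+2).descFactorial k : ℕ) * D) := by rw [← e2]; ring
      _ ≤ _ := h
      _ = _ := by ring
  have h'' := le_of_mul_le_mul_left h' (by positivity)
  by_cases hn : A * D ≤ 0
  · exact hn.trans (sq_nonneg _)
  · push Not at hn
    have hk : (0:ℝ) ≤ k := Nat.cast_nonneg k
    nlinarith

/-- the Garding cone for vectors -/
def gam {ι : Type} (s : Finset ι) (k : ℕ) (x : ι → ℝ) : Prop := ∀ j ≤ k, 0 < esf s j x

lemma gam.mono {ι : Type} {s : Finset ι} {k l : ℕ} {x : ι → ℝ} (h : gam s k x) (hl : l ≤ k) :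
    gam s l x := fun j hj => h j (hj.trans hl)

lemma gam_zero {ι : Type} (s : Finset ι) (x : ι → ℝ) : gam s 0 x := by
  intro j hj
  obtain rfl : j = 0 := by omega
  rw [esf_zero]; exact one_pos

lemma gam_succ {ι : Type} {s : Finset ι} {k : ℕ} {x : ι → ℝ} (h : gam s k x)
    (h' : 0 < esf s (k+1) x) : gam s (k+1) x := by
  intro j hj
  rcases Nat.lt_or_ge j (k+1) with h1 | h1
  · exact h j (by omega)
  · obtain rfl : j = k+1 := by omega
    exact h'

lemma gam_erase {ι : Type} [DecidableEq ι] {s : Finset ι} {a : ι} (ha : a ∈ s) {x : ι → ℝ} :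
    ∀ {k : ℕ}, gam s (k+1) x → gam (s.erase a) k x := by
  intro k
  induction k with
  | zero => intro _; exact gam_zero _ _
  | succ k ih =>
    intro h
    have h1 := ih (h.mono (by omega))
    apply gam_succ h1
    have hN := esf_newton (s.erase a) x k
    have e1 := esf_erase ha k x
    have e2 := esf_erase ha (k+1) x
    have p1 := h (k+1) (by omega)
    have p2 := h (k+2) (by omega)
    have p0 := h1 k le_rfl
    rw [e1] at p1
    rw [show k + 2 = k+1+1 by ring, e2, show k+1+1 = k+2 by ring] at p2
    set A := esf (s.erase a) k x
    set B := esf (s.erase a) (k+1) x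
    set D := esf (s.erase a) (k+2) x
    by_contra hB
    push Not at hB
    have hx : 0 < x a := by
      by_contra hx
      push Not at hx
      nlinarith
    have hD : 0 < D + x a * B := p2
    have h3 : A * (D + x a * B) > 0 := mul_pos p0 hD
    nlinarith [mul_nonneg (neg_nonneg.2 hB) p1.le]

lemma titu {a c P Q S : ℝ} (hP : 0 < P) (hQ : 0 < Q) (hS : P + Q ≤ S) :
    (a + c)^2 / S ≤ a^2 / P + c^2 / Q := by
  have h1 : (a + c)^2 / S ≤ (a+c)^2 / (P + Q) := by
    apply div_le_div_of_nonneg_left (sq_nonneg _) (by positivity) hS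
  refine h1.trans ?_
  rw [div_add_div _ _ hP.ne' hQ.ne', div_le_div_iff₀ (by positivity) (by positivity)]
  nlinarith [sq_nonneg (a * Q - c * P)]

lemma quot_rep {ι : Type} [DecidableEq ι] {s : Finset ι} {x : ι → ℝ} {k : ℕ}
    (h : gam s (k+2) x) : (k+2 : ℝ) * (esf s (k+2) x / esf s (k+1) x) =
      ∑ i ∈ s, (x i - x i ^ 2 / (x i + esf (s.erase i) (k+1) x / esf (s.erase i) k x)) := by
  have h0 := esf_sum_erase s x (k+1)
  have p1 := h (k+1) (by omega)
  have : (k+2 : ℝ) * (esf s (k+2) x / esf s (k+1) x) =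
    (∑ i ∈ s, x i * esf (s.erase i) (k+1) x) / esf s (k+1) x := by
    rw [h0]; push_cast; ring
  rw [this, Finset.sum_div]
  refine Finset.sum_congr rfl fun i hi => ?_
  have e := esf_erase hi k x
  have q0 := (gam_erase hi h) k (by omega)
  rw [e] at p1 ⊢
  have e2 : x i + esf (s.erase i) (k+1) x / esf (s.erase i) k x =
    (esf (s.erase i) (k+1) x + x i * esf (s.erase i) k x) / esf (s.erase i) k x := by
    field_simp; ring
  rw [e2]
  field_simp
  ring

lemma quot_superadd {ι : Type} [DecidableEq ι] : ∀ (k : ℕ) (s : Finset ι) (x y : ι → ℝ),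
    gam s (k+1) x → gam s (k+1) y → gam s (k+1) (x+y) ∧
    esf s (k+1) x / esf s k x + esf s (k+1) y / esf s k y ≤
      esf s (k+1) (x+y) / esf s k (x+y) := by
  intro k
  induction k with
  | zero =>
    intro s x y hx hy
    have e : ∀ z : ι → ℝ, esf s 1 z = ∑ i ∈ s, z i := by
      intro z
      have := esf_sum_erase s z 0
      simp only [esf_zero] at this
      simpa using this.symm
    have e2 : esf s 1 (x+y) = esf s 1 x + esf s 1 y := by
      rw [e, e, e, ← Finset.sum_add_distrib]; rfl
    refine ⟨gam_succ (gam_zero _ _) ?_, ?_⟩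
    · rw [zero_add, e2]; exact add_pos (hx 1 le_rfl) (hy 1 le_rfl)
    · simp only [esf_zero, zero_add, div_one]; rw [e2]
  | succ k ih =>
    intro s x y hx hy
    obtain ⟨hg, _⟩ := ih s x y (hx.mono (by omega)) (hy.mono (by omega))
    have hk : (0:ℝ) < k + 2 := by positivity
    -- representation of the quotient for x + y needs only gam (k+1)
    have hrep : (k+2 : ℝ) * (esf s (k+2) (x+y) / esf s (k+1) (x+y)) =
      ∑ i ∈ s, ((x+y) i - (x+y) i ^ 2 / ((x+y) i +
        esf (s.erase i) (k+1) (x+y) / esf (s.erase i) k (x+y))) := by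
      have h0 := esf_sum_erase s (x+y) (k+1)
      have p1 := hg (k+1) (by omega)
      have : (k+2 : ℝ) * (esf s (k+2) (x+y) / esf s (k+1) (x+y)) =
        (∑ i ∈ s, (x+y) i * esf (s.erase i) (k+1) (x+y)) / esf s (k+1) (x+y) := by
        rw [h0]; push_cast; ring
      rw [this, Finset.sum_div]
      refine Finset.sum_congr rfl fun i hi => ?_
      have e := esf_erase hi k (x+y)
      have q0 := (gam_erase hi hg) k (by omega)
      rw [e] at p1 ⊢
      have e2 : (x+y) i + esf (s.erase i) (k+1) (x+y) / esf (s.erase i) k (x+y) =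
        (esf (s.erase i) (k+1) (x+y) + (x+y) i * esf (s.erase i) k (x+y))
          / esf (s.erase i) k (x+y) := by
        field_simp; ring
      rw [e2]
      field_simp
      ring
    have hpos : ∀ (z : ι → ℝ), gam s (k+2) z → ∀ i ∈ s,
        0 < z i + esf (s.erase i) (k+1) z / esf (s.erase i) k z := by
      intro z hz i hi
      have q0 := (gam_erase hi hz) k (by omega)
      have e := esf_erase hi k z
      have p1 := hz (k+1) (by omega)
      rw [e] at p1
      have e2 : z i + esf (s.erase i) (k+1) z / esf (s.erase i) k z =
        (esf (s.erase i) (k+1) z + z i * esf (s.erase i) k z)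
          / esf (s.erase i) k z := by
        field_simp; ring
      rw [e2]; positivity
    have hmain : esf s (k+2) x / esf s (k+1) x + esf s (k+2) y / esf s (k+1) y ≤
      esf s (k+2) (x+y) / esf s (k+1) (x+y) := by
      refine le_of_mul_le_mul_left ?_ hk
      rw [mul_add, quot_rep hx, quot_rep hy, hrep, ← Finset.sum_add_distrib]
      refine Finset.sum_le_sum fun i hi => ?_
      obtain ⟨_, h2⟩ := ih (s.erase i) x y (gam_erase hi hx) (gam_erase hi hy)
      have := titu (a := x i) (c := y i) (hpos x hx i hi) (hpos y hy i hi)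
        (S := (x+y) i + esf (s.erase i) (k+1) (x+y) / esf (s.erase i) k (x+y))
        (by simp only [Pi.add_apply]; linarith)
      simp only [Pi.add_apply] at this ⊢
      linarith
    refine ⟨gam_succ hg ?_, hmain⟩
    have a1 := hx (k+2) le_rfl
    have a2 := hx (k+1) (by omega)
    have a3 := hy (k+2) le_rfl
    have a4 := hy (k+1) (by omega)
    have a5 := hg (k+1) (by omega)
    have : 0 < esf s (k+2) (x+y) / esf s (k+1) (x+y) :=
      lt_of_lt_of_le (by positivity) hmain
    exact (div_pos_iff_of_pos_right a5).1 this

lemma esf_eq_prod {ι : Type} {s : Finset ι} {x : ι → ℝ} : ∀ {k : ℕ}, gam s k x →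
    esf s k x = ∏ j ∈ Finset.range k, (esf s (j+1) x / esf s j x) := by
  intro k
  induction k with
  | zero => intro _; simp [esf_zero]
  | succ k ih =>
    intro h
    rw [Finset.prod_range_succ, ← ih (h.mono (by omega))]
    have := h k (by omega)
    field_simp

lemma esf_smul {ι : Type} (s : Finset ι) (k : ℕ) (t : ℝ) (x : ι → ℝ) :
    esf s k (t • x) = t ^ k * esf s k x := by
  unfold esf
  rw [Finset.mul_sum]
  refine Finset.sum_congr rfl fun u hu => ?_
  simp only [Pi.smul_apply, smul_eq_mul, Finset.prod_mul_distrib, Finset.prod_const]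
  rw [(Finset.mem_powersetCard.1 hu).2]

lemma gam_smul {ι : Type} {s : Finset ι} {k : ℕ} {t : ℝ} (ht : 0 < t) {x : ι → ℝ}
    (h : gam s k x) : gam s k (t • x) := by
  intro j hj
  rw [esf_smul]
  exact mul_pos (pow_pos ht j) (h j hj)

lemma one_add_sum_le_prod_aux {ι : Type} [DecidableEq ι] (s : Finset ι) (r : ι → ℝ)
    (h : ∀ i ∈ s, 0 ≤ r i) : 1 + ∑ i ∈ s, r i ≤ ∏ i ∈ s, (1 + r i) := by
  induction s using Finset.induction_on with
  | empty => simp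
  | insert a s ha ih =>
    rw [Finset.sum_insert ha, Finset.prod_insert ha]
    have h1 := ih fun i hi => h i (Finset.mem_insert_of_mem hi)
    have h2 := h a (Finset.mem_insert_self a s)
    have h3 : 0 ≤ ∑ i ∈ s, r i := Finset.sum_nonneg fun i hi => h i (Finset.mem_insert_of_mem hi)
    nlinarith [mul_nonneg h2 h3, mul_le_mul_of_nonneg_left h1 h2]

/-- Garding's inequality for vectors. -/
lemma garding_vec {ι : Type} [DecidableEq ι] {k : ℕ} {s : Finset ι} {x y : ι → ℝ}
    (hx : gam s (k+1) x) (hy : gam s (k+1) y) :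
    (k+1 : ℝ) * esf s (k+1) x * (esf s (k+1) y / esf s (k+1) x) ^ (1 / (k+1 : ℝ)) ≤
      ∑ i ∈ s, y i * esf (s.erase i) k x := by
  set r : ℕ → ℝ := fun j => (esf s (j+1) y / esf s j y) / (esf s (j+1) x / esf s j x) with hr
  have hrpos : ∀ j ∈ Finset.range (k+1), 0 < r j := by
    intro j hj
    have hj := Finset.mem_range.1 hj
    have a1 := hx (j+1) (by omega)
    have a2 := hx j (by omega)
    have a3 := hy (j+1) (by omega)
    have a4 := hy j (by omega)
    simp only [hr]; positivity
  have p0 := hx (k+1) le_rfl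
  -- step 1
  have h1 : esf s (k+1) x * ∑ j ∈ Finset.range (k+1), r j ≤ ∑ i ∈ s, y i * esf (s.erase i) k x := by
    have hd := (esf_hasDerivAt s x y k).tendsto_slope_zero_right
    refine ge_of_tendsto hd ?_
    filter_upwards [self_mem_nhdsWithin] with t ht
    have ht : 0 < t := ht
    simp only [zero_add, zero_smul, add_zero, smul_eq_mul]
    have hty := gam_smul ht hy
    have hxy := (quot_superadd k s x (t • y) hx hty).1
    rw [le_inv_mul_iff₀ ht, le_sub_iff_add_le]
    have : ∀ j ∈ Finset.range (k+1), (esf s (j+1) x / esf s j x) * (1 + t * r j) ≤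
        esf s (j+1) (x + t • y) / esf s j (x + t • y) := by
      intro j hj
      have hj := Finset.mem_range.1 hj
      have h2 := (quot_superadd j s x (t • y) (hx.mono (by omega)) (hty.mono (by omega))).2
      refine le_trans (le_of_eq ?_) h2
      have a1 := hx (j+1) (by omega)
      have a2 := hx j (by omega)
      have a4 := hy j (by omega)
      simp only [hr]
      rw [esf_smul, esf_smul, pow_succ]
      field_simp
    calc t * (esf s (k+1) x * ∑ j ∈ Finset.range (k+1), r j) + esf s (k+1) x
        = esf s (k+1) x * (1 + ∑ j ∈ Finset.range (k+1), t * r j) := by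
          rw [← Finset.mul_sum]; ring
      _ ≤ esf s (k+1) x * ∏ j ∈ Finset.range (k+1), (1 + t * r j) := by
          gcongr
          apply one_add_sum_le_prod_aux
          intro j hj
          exact (mul_pos ht (hrpos j hj)).le
      _ = ∏ j ∈ Finset.range (k+1), ((esf s (j+1) x / esf s j x) * (1 + t * r j)) := by
          rw [Finset.prod_mul_distrib, ← esf_eq_prod hx]
      _ ≤ ∏ j ∈ Finset.range (k+1), (esf s (j+1) (x + t • y) / esf s j (x + t • y)) := by
          apply Finset.prod_le_prod
          · intro j hj
            have hj' := Finset.mem_range.1 hj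
            have a1 := hx (j+1) (by omega)
            have a2 := hx j (by omega)
            have := hrpos j hj
            positivity
          · exact this
      _ = esf s (k+1) (x + t • y) := (esf_eq_prod hxy).symm
  refine le_trans ?_ h1
  have h2 := Real.geom_mean_le_arith_mean (Finset.range (k+1)) (fun _ => 1) r
    (fun _ _ => zero_le_one) (by simp; positivity) (fun j hj => (hrpos j hj).le)
  simp only [Real.rpow_one, Finset.sum_const, Finset.card_range, one_mul, nsmul_eq_mul, mul_one] at h2
  have h3 : ∏ j ∈ Finset.range (k+1), r j = esf s (k+1) y / esf s (k+1) x := by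
    simp only [hr]
    rw [Finset.prod_div_distrib, ← esf_eq_prod hx, ← esf_eq_prod hy]
  rw [h3] at h2
  push_cast at h2
  rw [le_div_iff₀ (by positivity)] at h2
  rw [one_div]
  calc _ = esf s (k+1) x * ((esf s (k+1) y / esf s (k+1) x) ^ ((k:ℝ)+1)⁻¹ * (k+1)) := by ring
    _ ≤ _ := by gcongr

lemma esf_comp_perm {n : ℕ} (σ : Equiv.Perm (Fin n)) (k : ℕ) (x : Fin n → ℝ) :
    esf Finset.univ k (x ∘ σ) = esf Finset.univ k x := by
  rw [← esf_coeff, ← esf_coeff]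
  congr 1
  exact Equiv.prod_comp σ (fun i => (1 + Polynomial.C (x i) * Polynomial.X))

lemma gam_comp_perm {n : ℕ} (σ : Equiv.Perm (Fin n)) {k : ℕ} {x : Fin n → ℝ}
    (h : gam Finset.univ k x) : gam Finset.univ k (x ∘ σ) := by
  intro j hj
  rw [esf_comp_perm]; exact h j hj

lemma esymmMat_conj {n : ℕ} (U : Matrix (Fin n) (Fin n) ℝ) (hU : Uᵀ * U = 1) (l : Fin n → ℝ)
    {j : ℕ} (hj : j ≤ n) :
    esymmMat j (U * diagonal l * Uᵀ) = esf Finset.univ j l := by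
  unfold esymmMat
  have h1 : (U * diagonal l * Uᵀ).charpoly = ∏ i, (Polynomial.X - Polynomial.C (l i)) := by
    rw [Matrix.charpoly_mul_comm, ← mul_assoc, hU, one_mul, Matrix.charpoly_diagonal]
  have h2 : ∏ i, (Polynomial.X - Polynomial.C (l i)) =
    (((Finset.univ : Finset (Fin n)).val.map l).map fun t => Polynomial.X - Polynomial.C t).prod := by
    rw [Multiset.map_map]; rfl
  rw [h1, h2, Multiset.prod_X_sub_C_coeff _ (by simp)]
  have e : (Multiset.card ((Finset.univ : Finset (Fin n)).val.map l)) - (n - j) = j := by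
    simp; omega
  rw [e, ← mul_assoc, ← mul_pow, Finset.esymm_map_val]
  simp [esf]

lemma exists_diag {n : ℕ} (A : Matrix (Fin n) (Fin n) ℝ) (hA : A.IsSymm) :
    ∃ (U : Matrix (Fin n) (Fin n) ℝ) (l : Fin n → ℝ), Uᵀ * U = 1 ∧ U * Uᵀ = 1 ∧
      A = U * diagonal l * Uᵀ := by
  have hA' : A.IsHermitian := by
    rw [Matrix.IsHermitian, Matrix.conjTranspose_eq_transpose_of_trivial]; exact hA
  refine ⟨hA'.eigenvectorUnitary, hA'.eigenvalues, ?_, ?_, ?_⟩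
  · have := hA'.eigenvectorUnitary.2
    rw [Matrix.mem_unitaryGroup_iff', Matrix.star_eq_conjTranspose, Matrix.conjTranspose_eq_transpose_of_trivial] at this
    exact this
  · have := hA'.eigenvectorUnitary.2
    rw [Matrix.mem_unitaryGroup_iff, Matrix.star_eq_conjTranspose, Matrix.conjTranspose_eq_transpose_of_trivial] at this
    exact this
  · have := hA'.spectral_theorem
    rw [Unitary.conjStarAlgAut_apply, Matrix.star_eq_conjTranspose, Matrix.conjTranspose_eq_transpose_of_trivial] at this
    exact this

lemma trace_two {n : ℕ} (U V : Matrix (Fin n) (Fin n) ℝ) (a m : Fin n → ℝ) :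
    ((U * diagonal a * Uᵀ) * (V * diagonal m * Vᵀ)).trace =
      ∑ i, ∑ j, a i * ((Uᵀ * V) i j)^2 * m j := by
  have : ((U * diagonal a * Uᵀ) * (V * diagonal m * Vᵀ)).trace =
    (diagonal a * ((Uᵀ * V) * (diagonal m * (Uᵀ * V)ᵀ))).trace := by
    rw [Matrix.transpose_mul, Matrix.transpose_transpose]
    rw [mul_assoc U, mul_assoc U, Matrix.trace_mul_comm U]
    simp only [mul_assoc]
  rw [this]
  simp only [Matrix.trace, Matrix.diag_apply, Matrix.diagonal_mul, Matrix.mul_apply (M := Uᵀ * V),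
    Matrix.transpose_apply, Finset.mul_sum]
  refine Finset.sum_congr rfl fun i _ => Finset.sum_congr rfl fun j _ => ?_
  ring

lemma sq_doublyStochastic {n : ℕ} (W : Matrix (Fin n) (Fin n) ℝ) (h1 : Wᵀ * W = 1)
    (h2 : W * Wᵀ = 1) : (Matrix.of fun i j => (W i j)^2) ∈ doublyStochastic ℝ (Fin n) := by
  rw [mem_doublyStochastic_iff_sum]
  refine ⟨fun i j => sq_nonneg _, fun i => ?_, fun j => ?_⟩
  · have := congrFun (congrFun h2 i) i
    simp only [Matrix.mul_apply, Matrix.transpose_apply, Matrix.one_apply_eq] at this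
    simpa [sq] using this
  · have := congrFun (congrFun h1 j) j
    simp only [Matrix.mul_apply, Matrix.transpose_apply, Matrix.one_apply_eq] at this
    simpa [sq] using this

lemma birkhoff_lower {n : ℕ} (D : Matrix (Fin n) (Fin n) ℝ) (hD : D ∈ doublyStochastic ℝ (Fin n))
    (a m : Fin n → ℝ) (c : ℝ) (h : ∀ σ : Equiv.Perm (Fin n), c ≤ ∑ i, a i * m (σ i)) :
    c ≤ ∑ i, ∑ j, a i * D i j * m j := by
  obtain ⟨w, hw0, hw1, hw⟩ := exists_eq_sum_perm_of_mem_doublyStochastic hD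
  have : ∑ i, ∑ j, a i * D i j * m j = ∑ σ, w σ * ∑ i, a i * m (σ i) := by
    rw [← hw]
    simp only [Matrix.sum_apply, Matrix.smul_apply, smul_eq_mul, Finset.mul_sum, Finset.sum_mul]
    rw [Finset.sum_congr rfl fun i _ => Finset.sum_comm]
    rw [Finset.sum_comm]
    refine Finset.sum_congr rfl fun σ _ => Finset.sum_congr rfl fun i _ => ?_
    rw [Finset.sum_eq_single (σ i)]
    · simp [Equiv.Perm.permMatrix, PEquiv.toMatrix, Equiv.toPEquiv_apply]; ring
    · intro j _ hj
      simp [Equiv.Perm.permMatrix, PEquiv.toMatrix, Equiv.toPEquiv_apply, hj.symm]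
    · simp
  rw [this]
  calc c = ∑ σ, w σ * c := by rw [← Finset.sum_mul, hw1, one_mul]
    _ ≤ _ := Finset.sum_le_sum fun σ _ => mul_le_mul_of_nonneg_left (h σ) (hw0 σ)

lemma esf_pos_of_pos {n k : ℕ} (hkn : k ≤ n) {x : Fin n → ℝ} (hx : ∀ i, 0 < x i) :
    0 < esf Finset.univ k x := by
  unfold esf
  apply Finset.sum_pos
  · intro t _; exact Finset.prod_pos fun i _ => hx i
  · rw [Finset.powersetCard_nonempty]; simpa using hkn

lemma prod_pow_le_esf_pow {n k : ℕ} (hkn : k ≤ n) {x : Fin n → ℝ} (hx : ∀ i, 0 < x i) :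
    (∏ i, x i)^k ≤ (esf Finset.univ k x)^n := by
  rcases Nat.eq_zero_or_pos n with rfl | hn
  · obtain rfl : k = 0 := by omega
    simp
  have : NeZero n := ⟨hn.ne'⟩
  have h1 : ∀ j : Fin n, ∏ i : Fin k, x (j + Fin.castLE hkn i) ≤ esf Finset.univ k x := by
    intro j
    have hinj : Function.Injective (fun i : Fin k => j + Fin.castLE hkn i) := by
      intro a b hab
      exact Fin.castLE_injective hkn (add_left_cancel hab)
    have : ∏ i : Fin k, x (j + Fin.castLE hkn i) =
      ∏ i ∈ Finset.univ.image (fun i : Fin k => j + Fin.castLE hkn i), x i := by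
      rw [Finset.prod_image (fun a _ b _ h => hinj h)]
    rw [this]
    unfold esf
    refine Finset.single_le_sum (f := fun t => ∏ i ∈ t, x i)
      (fun t _ => Finset.prod_nonneg fun i _ => (hx i).le) ?_
    rw [Finset.mem_powersetCard]
    refine ⟨Finset.subset_univ _, ?_⟩
    rw [Finset.card_image_of_injective _ hinj]; simp
  calc (∏ i, x i)^k = ∏ i : Fin k, ∏ j : Fin n, x (j + Fin.castLE hkn i) := by
        have : ∀ i : Fin k, ∏ j : Fin n, x (j + Fin.castLE hkn i) = ∏ j, x j :=
          fun i => Equiv.prod_comp (Equiv.addRight (Fin.castLE hkn i)) x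
        simp [this]
    _ = ∏ j : Fin n, ∏ i : Fin k, x (j + Fin.castLE hkn i) := Finset.prod_comm
    _ ≤ ∏ j : Fin n, esf Finset.univ k x :=
        Finset.prod_le_prod (fun j _ => Finset.prod_nonneg fun i _ => (hx _).le) fun j _ => h1 j
    _ = _ := by simp

lemma esf_one {n : ℕ} (x : Fin n → ℝ) (s : Finset (Fin n)) : esf s 1 x = ∑ i ∈ s, x i := by
  have := esf_sum_erase s x 0
  simp only [esf_zero] at this
  simpa using this.symm

lemma sum_sq_esf {n : ℕ} (x : Fin n → ℝ) :
    ∑ i, (x i)^2 = (∑ i, x i)^2 - 2 * esf Finset.univ 2 x := by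
  have h := esf_sum_erase Finset.univ x 1
  have h2 : ∀ i ∈ (Finset.univ : Finset (Fin n)), x i * esf (Finset.univ.erase i) 1 x =
      x i * (∑ j, x j) - (x i)^2 := by
    intro i hi
    rw [esf_one, ← Finset.add_sum_erase _ _ hi]; ring
  rw [Finset.sum_congr rfl h2, Finset.sum_sub_distrib, ← Finset.sum_mul] at h
  push_cast at h
  norm_num at h
  linarith

lemma trace_conj {n : ℕ} (U : Matrix (Fin n) (Fin n) ℝ) (hU : Uᵀ * U = 1) (l : Fin n → ℝ) :
    (U * diagonal l * Uᵀ).trace = ∑ i, l i := by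
  rw [Matrix.trace_mul_comm, ← mul_assoc, hU, one_mul, Matrix.trace_diagonal]

lemma eig_bound {n : ℕ} {x : Fin n → ℝ} (h : gam Finset.univ 2 x) (i : Fin n) :
    |x i| ≤ ∑ j, x j := by
  have h1 := sum_sq_esf x
  have h2 := h 2 le_rfl
  have h3 := h 1 (by norm_num)
  rw [esf_one] at h3
  apply abs_le_of_sq_le_sq _ h3.le
  have h4 := Finset.single_le_sum (f := fun i => (x i)^2) (fun i _ => sq_nonneg _) (Finset.mem_univ i)
  linarith

lemma entry_bound {n : ℕ} (hn : 2 ≤ n) {k : ℕ} (hk : 2 ≤ k) (A : Matrix (Fin n) (Fin n) ℝ)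
    (hA : A.IsSymm) (hG : GammaPlus k A) (i j : Fin n) : |A i j| ≤ A.trace := by
  obtain ⟨U, l, hU, hU', rfl⟩ := exists_diag A hA
  have h1 := hG 1 le_rfl (by omega)
  have h2 := hG 2 (by omega) hk
  rw [esymmMat_conj U hU l (by omega), esf_one] at h1
  rw [esymmMat_conj U hU l hn] at h2
  have hs := sum_sq_esf l
  have ht := trace_two U U l l
  rw [hU] at ht
  have ht' : ∑ i, ∑ j, l i * ((1 : Matrix (Fin n) (Fin n) ℝ) i j)^2 * l j = ∑ i, (l i)^2 := by
    refine Finset.sum_congr rfl fun i _ => ?_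
    rw [Finset.sum_eq_single i]
    · simp [sq]
    · intro j _ hj; simp [Matrix.one_apply_ne hj.symm]
    · simp
  rw [ht'] at ht
  rw [trace_conj U hU]
  set A := U * diagonal l * Uᵀ
  apply abs_le_of_sq_le_sq _ h1.le
  have hfr : (A * A).trace = ∑ i, ∑ j, (A i j)^2 := by
    simp only [Matrix.trace, Matrix.diag_apply, Matrix.mul_apply]
    refine Finset.sum_congr rfl fun i _ => Finset.sum_congr rfl fun j _ => ?_
    rw [sq, hA.apply i j]
  have h4 : (A i j)^2 ≤ ∑ i, ∑ j, (A i j)^2 := by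
    refine le_trans ?_ (Finset.single_le_sum (f := fun i => ∑ j, (A i j)^2)
      (fun i _ => Finset.sum_nonneg fun j _ => sq_nonneg _) (Finset.mem_univ i))
    exact Finset.single_le_sum (f := fun j => (A i j)^2) (fun j _ => sq_nonneg _) (Finset.mem_univ j)
  linarith

lemma esf_abs_le {n : ℕ} (s : Finset (Fin n)) (k : ℕ) (x : Fin n → ℝ) {T : ℝ} (hT0 : 0 ≤ T)
    (hx : ∀ i, |x i| ≤ T) : esf s k x ≤ 2^n * T^k := by
  unfold esf
  have hT : ∀ t ∈ s.powersetCard k, ∏ i ∈ t, x i ≤ T^k := by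
    intro t ht
    calc ∏ i ∈ t, x i ≤ |∏ i ∈ t, x i| := le_abs_self _
      _ = ∏ i ∈ t, |x i| := Finset.abs_prod _ _
      _ ≤ ∏ i ∈ t, T := Finset.prod_le_prod (fun i _ => abs_nonneg _) fun i _ => hx i
      _ = T^k := by rw [Finset.prod_const, (Finset.mem_powersetCard.1 ht).2]
  calc _ ≤ ∑ t ∈ s.powersetCard k, T^k := Finset.sum_le_sum hT
    _ = (s.powersetCard k).card * T^k := by simp
    _ ≤ _ := by
      gcongr
      have : (s.powersetCard k).card ≤ 2^n := by
        calc _ ≤ s.powerset.card := Finset.card_le_card (fun t ht => Finset.mem_powerset.2 (Finset.mem_powersetCard.1 ht).1)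
          _ = 2^s.card := Finset.card_powerset s
          _ ≤ 2^n := Nat.pow_le_pow_right (by norm_num) (by simpa using Finset.card_le_univ s)
      exact_mod_cast this

lemma support_functional {n k : ℕ} (hk : 2 ≤ k) (hkn : k ≤ n) (A : Matrix (Fin n) (Fin n) ℝ)
    (hA : A.IsSymm) (hG : GammaPlus k A) (f : ℝ) (hf : 0 < f) (hσ : esymmMat k A = f^k) :
    ∃ F : Matrix (Fin n) (Fin n) ℝ,
      (∀ i j, |F i j| ≤ F.trace) ∧ 1 ≤ F.trace ∧
      F.trace ≤ n * 2^n * A.trace^(k-1) * (f / f^k) ∧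
      (F * A).trace = f ∧
      (∀ B : Matrix (Fin n) (Fin n) ℝ, B.IsSymm → GammaPlus k B → ∀ g > 0,
        esymmMat k B = g^k → g ≤ (F * B).trace) ∧
      (∀ N : Matrix (Fin n) (Fin n) ℝ, N.PosSemidef → N.det ≤ (F * N).trace^n) := by
  obtain ⟨U, l, hU, hU', rfl⟩ := exists_diag A hA
  obtain ⟨k, rfl⟩ : ∃ m, k = m + 1 := ⟨k - 1, by omega⟩
  have hgam : ∀ (V : Matrix (Fin n) (Fin n) ℝ) (m : Fin n → ℝ), Vᵀ * V = 1 →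
      GammaPlus (k+1) (V * diagonal m * Vᵀ) → gam Finset.univ (k+1) m := by
    intro V m hV hG j hj
    rcases Nat.eq_zero_or_pos j with rfl | h0
    · rw [esf_zero]; exact one_pos
    · rw [← esymmMat_conj V hV m (by omega)]
      exact hG j h0 hj
  have hl := hgam U l hU hG
  have hσl : esf Finset.univ (k+1) l = f^(k+1) := by rw [← esymmMat_conj U hU l hkn, hσ]
  set c : ℝ := f / ((k+1) * f^(k+1)) with hc
  have hcpos : 0 < c := by positivity
  set a : Fin n → ℝ := fun i => c * esf (Finset.univ.erase i) k l with ha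
  have hapos : ∀ i, 0 < a i := fun i => mul_pos hcpos (gam_erase (Finset.mem_univ i) hl k le_rfl)
  have hgard : ∀ m : Fin n → ℝ, gam Finset.univ (k+1) m → ∀ g > 0,
      esf Finset.univ (k+1) m = g^(k+1) → g ≤ ∑ i, a i * m i := by
    intro m hm g hg hmg
    have h := garding_vec hl hm
    rw [hmg, hσl, ← div_pow, one_div] at h
    have e : (((g/f)^(k+1) : ℝ)) ^ ((k:ℝ)+1)⁻¹ = g / f := by
      have := Real.pow_rpow_inv_natCast (x := g/f) (n := k+1) (by positivity) (by omega)
      push_cast at this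
      exact this
    rw [e] at h
    have e2 : ∑ i, a i * m i = c * ∑ i, m i * esf (Finset.univ.erase i) k l := by
      rw [Finset.mul_sum]; refine Finset.sum_congr rfl fun i _ => ?_
      simp only [ha]; ring
    rw [e2]
    refine le_trans (le_of_eq ?_) (mul_le_mul_of_nonneg_left h hcpos.le)
    rw [hc]; field_simp
  have hrow : ∀ i p, |U i p| ≤ 1 := by
    intro i p
    have h1 := congrFun (congrFun hU' i) i
    simp only [Matrix.mul_apply, Matrix.transpose_apply, Matrix.one_apply_eq] at h1
    have h4 := Finset.single_le_sum (f := fun p => U i p * U i p) (fun p _ => mul_self_nonneg _) (Finset.mem_univ p)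
    rw [h1] at h4
    rw [abs_le_one_iff_mul_self_le_one]
    exact h4
  have horth : ∀ V : Matrix (Fin n) (Fin n) ℝ, Vᵀ * V = 1 → V * Vᵀ = 1 →
      (Matrix.of fun i j => ((Uᵀ * V) i j)^2) ∈ doublyStochastic ℝ (Fin n) := by
    intro V hV hV'
    apply sq_doublyStochastic
    · rw [Matrix.transpose_mul, Matrix.transpose_transpose, mul_assoc, ← mul_assoc U, hU', one_mul, hV]
    · rw [Matrix.transpose_mul, Matrix.transpose_transpose, mul_assoc, ← mul_assoc V, hV', one_mul, hU]
  have hB : ∀ B : Matrix (Fin n) (Fin n) ℝ, B.IsSymm → GammaPlus (k+1) B → ∀ g > 0,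
        esymmMat (k+1) B = g^(k+1) → g ≤ ((U * diagonal a * Uᵀ) * B).trace := by
    intro B hBs hBG g hg hBg
    obtain ⟨V, m, hV, hV', rfl⟩ := exists_diag B hBs
    have hm := hgam V m hV hBG
    rw [esymmMat_conj V hV m hkn] at hBg
    rw [trace_two]
    refine birkhoff_lower _ (horth V hV hV') a m g fun σ => ?_
    exact hgard (m ∘ σ) (gam_comp_perm σ hm) g hg (by rw [esf_comp_perm, hBg])
  have hN : ∀ N : Matrix (Fin n) (Fin n) ℝ, N.PosSemidef →
      0 ≤ ((U * diagonal a * Uᵀ) * N).trace ∧ N.det ≤ ((U * diagonal a * Uᵀ) * N).trace^n := by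
    intro N hN
    have hNs : N.IsSymm := by
      have := hN.1
      rwa [Matrix.IsHermitian, Matrix.conjTranspose_eq_transpose_of_trivial] at this
    obtain ⟨V, m, hV, hV', rfl⟩ := exists_diag N hNs
    have hm0 : ∀ i, 0 ≤ m i := by
      intro i
      have h1 := hN.conjTranspose_mul_mul_same V
      rw [Matrix.conjTranspose_eq_transpose_of_trivial] at h1
      have e : Vᵀ * (V * diagonal m * Vᵀ) * V = diagonal m := by
        rw [← mul_assoc, ← mul_assoc, hV, one_mul, mul_assoc, hV, mul_one]
      rw [e, Matrix.posSemidef_diagonal_iff] at h1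
      exact h1 i
    have hdet : (V * diagonal m * Vᵀ).det = ∏ i, m i := by
      rw [Matrix.det_mul, Matrix.det_mul, Matrix.det_diagonal, mul_right_comm, ← Matrix.det_mul,
        hV', Matrix.det_one, one_mul]
    have hnn : 0 ≤ ((U * diagonal a * Uᵀ) * (V * diagonal m * Vᵀ)).trace := by
      rw [trace_two]
      refine Finset.sum_nonneg fun i _ => Finset.sum_nonneg fun j _ => ?_
      exact mul_nonneg (mul_nonneg (hapos i).le (sq_nonneg _)) (hm0 j)
    refine ⟨hnn, ?_⟩
    rw [hdet]
    by_cases hz : ∀ i, 0 < m i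
    · set P := ∏ i, m i with hP
      have hPpos : 0 < P := Finset.prod_pos fun i _ => hz i
      have hmg : gam Finset.univ (k+1) m := fun j hj => esf_pos_of_pos (hj.trans hkn) hz
      have hs := hmg (k+1) le_rfl
      set g := (esf Finset.univ (k+1) m) ^ (((k+1 : ℕ) : ℝ)⁻¹) with hgdef
      have hg : 0 < g := by positivity
      have hgk : esf Finset.univ (k+1) m = g^(k+1) :=
        (Real.rpow_inv_natCast_pow hs.le (by omega)).symm
      have hgle : g ≤ ((U * diagonal a * Uᵀ) * (V * diagonal m * Vᵀ)).trace := by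
        rw [trace_two]
        refine birkhoff_lower _ (horth V hV hV') a m g fun σ => ?_
        exact hgard (m ∘ σ) (gam_comp_perm σ hmg) g hg (by rw [esf_comp_perm, hgk])
      refine le_trans ?_ (pow_le_pow_left₀ hg.le hgle n)
      have h1 := prod_pow_le_esf_pow hkn hz
      rw [hgk, ← pow_mul, mul_comm, pow_mul] at h1
      exact (pow_le_pow_iff_left₀ hPpos.le (by positivity) (by omega)).1 h1
    · push Not at hz
      obtain ⟨i, hi⟩ := hz
      have : m i = 0 := le_antisymm hi (hm0 i)
      rw [Finset.prod_eq_zero (Finset.mem_univ i) this]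
      positivity
  have htr : (U * diagonal a * Uᵀ).trace = ∑ i, a i := trace_conj U hU a
  refine ⟨U * diagonal a * Uᵀ, ?_, ?_, ?_, ?_, hB, fun N h => (hN N h).2⟩
  · intro i j
    rw [htr]
    have e : (U * diagonal a * Uᵀ) i j = ∑ p, U i p * a p * U j p := by
      rw [Matrix.mul_apply]; simp only [Matrix.mul_diagonal, Matrix.transpose_apply]
    rw [e]
    refine (Finset.abs_sum_le_sum_abs _ _).trans (Finset.sum_le_sum fun p _ => ?_)
    rw [abs_mul, abs_mul, abs_of_pos (hapos p)]
    have h1 := hrow i p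
    have h2 := hrow j p
    have h3 := hapos p
    calc |U i p| * a p * |U j p| ≤ 1 * a p * 1 := by gcongr
      _ = a p := by ring
  · have h1 := hN 1 Matrix.PosSemidef.one
    rw [mul_one, Matrix.det_one] at h1
    exact (one_le_pow_iff_of_nonneg h1.1 (by omega)).1 h1.2
  · rw [htr, trace_conj U hU]
    have hT := eig_bound (hl.mono hk)
    have hT0 : 0 ≤ ∑ i, l i := (abs_nonneg _).trans (hT ⟨0, by omega⟩)
    calc ∑ i, a i ≤ ∑ i : Fin n, (f / f^(k+1)) * (2^n * (∑ i, l i)^k) := by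
          refine Finset.sum_le_sum fun i _ => ?_
          simp only [ha]
          have h1 := esf_abs_le (Finset.univ.erase i) k l hT0 hT
          have h2 := gam_erase (Finset.mem_univ i) hl k le_rfl
          have h3 : c ≤ f / f^(k+1) := by
            rw [hc]
            apply div_le_div_of_nonneg_left hf.le (by positivity)
            have : (0:ℝ) ≤ k := Nat.cast_nonneg k
            have : 0 < f^(k+1) := by positivity
            nlinarith
          calc _ ≤ (f / f^(k+1)) * esf (Finset.univ.erase i) k l := by gcongr
            _ ≤ _ := by gcongr
      _ = _ := by simp; ring
  · rw [trace_two, hU]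
    have : ∑ i, ∑ j, a i * ((1 : Matrix (Fin n) (Fin n) ℝ) i j)^2 * l j = ∑ i, a i * l i := by
      refine Finset.sum_congr rfl fun i _ => ?_
      rw [Finset.sum_eq_single i]
      · simp
      · intro j _ hj; simp [Matrix.one_apply_ne hj.symm]
      · simp
    rw [this]
    have e2 : ∑ i, a i * l i = c * ∑ i, l i * esf (Finset.univ.erase i) k l := by
      rw [Finset.mul_sum]; refine Finset.sum_congr rfl fun i _ => ?_
      simp only [ha]; ring
    rw [e2, esf_sum_erase, hσl, hc]
    field_simp

lemma young_aux {p G s : ℝ} (hp : 1 < p) (hG : 0 ≤ G) (hs : 0 < s) :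
    G ≤ s + s^(1-p) * G^p := by
  by_cases h : G ≤ s
  · have : 0 ≤ s^(1-p) * G^p := by positivity
    linarith
  · push Not at h
    have hG0 : 0 < G := hs.trans h
    have h1 : G^(1-p) ≤ s^(1-p) := Real.rpow_le_rpow_of_nonpos hs h.le (by linarith)
    have h2 : G^(1-p) * G^p = G := by rw [← Real.rpow_add hG0]; simp
    have h3 : 0 ≤ G^p := by positivity
    nlinarith [mul_le_mul_of_nonneg_right h1 h3]

lemma lintegral_contract {n : ℕ} (x₀ : Fin n → ℝ) (ρ : ℝ) (x : Fin n → ℝ) (hx : x ∈ ball x₀ ρ)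
    (φ : (Fin n → ℝ) → ENNReal) (hφ : Measurable φ) (t : ℝ) (ht : 0 < t) (ht1 : t ≤ 1) :
    ∫⁻ y in ball x₀ ρ, φ (x + t • (y - x)) ≤ ENNReal.ofReal ((t^n)⁻¹) * ∫⁻ y in ball x₀ ρ, φ y := by
  have hmap : ∀ y ∈ ball x₀ ρ, x + t • (y - x) ∈ ball x₀ ρ := by
    intro y hy
    have := (convex_ball x₀ ρ).add_smul_sub_mem hx hy ⟨ht.le, ht1⟩
    exact this
  set ψ := (ball x₀ ρ).indicator φ with hψ
  have hψm : Measurable ψ := hφ.indicator measurableSet_ball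
  calc ∫⁻ y in ball x₀ ρ, φ (x + t • (y - x)) ≤ ∫⁻ y, ψ (x + t • (y - x)) := by
        rw [← lintegral_indicator measurableSet_ball]
        refine lintegral_mono fun y => ?_
        by_cases hy : y ∈ ball x₀ ρ
        · rw [indicator_of_mem hy, hψ, indicator_of_mem (hmap y hy)]
        · rw [indicator_of_notMem hy]; exact zero_le
    _ = ∫⁻ y, ψ (x + t • y) := lintegral_sub_right_eq_self (fun y => ψ (x + t • y)) x
    _ = ∫⁻ z, ψ (x + z) ∂(Measure.map (t • ·) volume) := by
        rw [lintegral_map (by fun_prop) (by fun_prop)]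
    _ = ENNReal.ofReal ((t^n)⁻¹) * ∫⁻ z, ψ (x + z) := by
        rw [Measure.map_addHaar_smul volume ht.ne', lintegral_smul_measure]
        simp [abs_of_pos ht]
    _ = ENNReal.ofReal ((t^n)⁻¹) * ∫⁻ z, ψ z := by
        rw [lintegral_add_left_eq_self ψ x]
    _ = _ := by rw [hψ, lintegral_indicator measurableSet_ball]

lemma morrey {n : ℕ} (hn : 1 ≤ n) (p : ℝ) (hp : (n:ℝ) < p) (x₀ : Fin n → ℝ) (ρ : ℝ) (hρ : 0 < ρ)
    (K : ℝ) : ∃ C : ℝ, ∀ (g : (Fin n → ℝ) → ℝ) (Ω : Set (Fin n → ℝ)), IsOpen Ω →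
      ball x₀ ρ ⊆ Ω → ContDiffOn ℝ 1 g Ω →
      ∫⁻ y in ball x₀ ρ, ENNReal.ofReal (|g y|^p) ≤ ENNReal.ofReal K →
      ∫⁻ y in ball x₀ ρ, ENNReal.ofReal (‖fderiv ℝ g y‖^p) ≤ ENNReal.ofReal K →
      ∀ x ∈ ball x₀ ρ, |g x| ≤ C := by
  have hn' : (1:ℝ) ≤ n := by exact_mod_cast hn
  have hp1 : 1 < p := by linarith
  set Q := ball x₀ ρ with hQ
  set V := volume Q with hV
  have hV0 : V ≠ 0 := (measure_ball_pos volume x₀ hρ).ne'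
  have hVt : V ≠ ⊤ := measure_ball_lt_top.ne
  set J : ENNReal := ∫⁻ t in Ioc (0:ℝ) 1, ENNReal.ofReal (t^(-(n/p))) with hJ
  have hnp : (n:ℝ)/p < 1 := by rw [div_lt_one (by linarith)]; exact hp
  have hJt : J ≠ ⊤ := by
    have h := (intervalIntegral.intervalIntegrable_rpow' (a := 0) (b := 1) (r := -(n/p)) (by linarith)).1
    have h2 := h.2
    rw [hasFiniteIntegral_iff_enorm] at h2
    refine ne_of_lt (lt_of_le_of_lt ?_ h2)
    refine lintegral_mono fun t => ?_
    exact Real.ofReal_le_enorm _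
  set W : ENNReal := (V + ENNReal.ofReal K) + ENNReal.ofReal (2*ρ) * (J * (V + ENNReal.ofReal K)) with hW
  have hWt : W ≠ ⊤ := by
    have hVK : V + ENNReal.ofReal K ≠ ⊤ := ENNReal.add_ne_top.2 ⟨hVt, ENNReal.ofReal_ne_top⟩
    exact ENNReal.add_ne_top.2 ⟨hVK, ENNReal.mul_ne_top ENNReal.ofReal_ne_top (ENNReal.mul_ne_top hJt hVK)⟩
  refine ⟨(W / V).toReal, ?_⟩
  intro g Ω hΩ hQΩ hg h0 h1 x hx
  have hWV : W / V ≠ ⊤ := ENNReal.div_ne_top hWt hV0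
  have hφm : Measurable (fun y => ENNReal.ofReal ‖fderiv ℝ g y‖) :=
    (measurable_fderiv ℝ g).norm.ennreal_ofReal
  set φ : (Fin n → ℝ) → ENNReal := fun y => ENNReal.ofReal ‖fderiv ℝ g y‖ with hφ
  have hψm : Measurable (fun y => ENNReal.ofReal (‖fderiv ℝ g y‖^p)) :=
    ((measurable_fderiv ℝ g).norm.pow_const p).ennreal_ofReal
  -- pointwise bound
  have hpt : ∀ y ∈ Q, ‖g x‖ₑ ≤ ‖g y‖ₑ + ∫⁻ t in Ioc (0:ℝ) 1,
      ENNReal.ofReal (2*ρ) * φ (x + t • (y - x)) := by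
    intro y hy
    set γ : ℝ → ℝ := fun t => g (x + t • (y - x)) with hγ
    have hseg : ∀ t ∈ Icc (0:ℝ) 1, x + t • (y - x) ∈ Ω := fun t ht =>
      hQΩ ((convex_ball x₀ ρ).add_smul_sub_mem hx hy ht)
    have hγc : ContDiffOn ℝ 1 γ (Icc 0 1) := by
      apply hg.comp (t := Ω) _ hseg
      fun_prop
    have h3 := enorm_sub_le_lintegral_deriv_of_contDiffOn_Icc hγc zero_le_one
    have e1 : γ 1 = g y := by simp [hγ]
    have e0 : γ 0 = g x := by simp [hγ]
    rw [e1, e0] at h3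
    have h4 : ‖g x‖ₑ ≤ ‖g y‖ₑ + ‖g y - g x‖ₑ := by
      have : g x = g y - (g y - g x) := by ring
      calc ‖g x‖ₑ = ‖g y - (g y - g x)‖ₑ := by rw [← this]
        _ ≤ _ := enorm_sub_le
    refine h4.trans (add_le_add le_rfl (h3.trans ?_))
    rw [← restrict_Ioc_eq_restrict_Icc]
    refine setLIntegral_mono' measurableSet_Ioc fun t ht => ?_
    have hz := hseg t ⟨ht.1.le, ht.2⟩
    have hd : HasFDerivAt g (fderiv ℝ g (x + t • (y - x))) (x + t • (y - x)) :=
      ((hg.contDiffAt (hΩ.mem_nhds hz)).differentiableAt (by norm_num)).hasFDerivAt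
    have hl : HasDerivAt (fun t : ℝ => x + t • (y - x)) (y - x) t := by
      simpa using ((hasDerivAt_id t).smul_const (y - x)).const_add x
    have hdγ : HasDerivAt γ (fderiv ℝ g (x + t • (y - x)) (y - x)) t := hd.comp_hasDerivAt t hl
    rw [hdγ.deriv, ← ofReal_norm_eq_enorm, hφ, ← ENNReal.ofReal_mul (by positivity)]
    apply ENNReal.ofReal_le_ofReal
    refine (ContinuousLinearMap.le_opNorm _ _).trans ?_
    rw [mul_comm]
    gcongr
    have := dist_triangle_right y x x₀
    rw [← dist_eq_norm]
    have a1 := mem_ball.1 hy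
    have a2 := mem_ball.1 hx
    linarith
  have hIntg : V * ‖g x‖ₑ ≤ W := by
    have hmeas : Measurable (Function.uncurry fun (y : Fin n → ℝ) (t : ℝ) =>
        ENNReal.ofReal (2*ρ) * φ (x + t • (y - x))) := by
      apply Measurable.const_mul
      apply hφm.comp
      fun_prop
    calc V * ‖g x‖ₑ = ∫⁻ y in Q, ‖g x‖ₑ := by rw [setLIntegral_const, mul_comm]
      _ ≤ ∫⁻ y in Q, (‖g y‖ₑ + ∫⁻ t in Ioc (0:ℝ) 1, ENNReal.ofReal (2*ρ) * φ (x + t • (y - x))) :=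
          setLIntegral_mono' measurableSet_ball hpt
      _ = (∫⁻ y in Q, ‖g y‖ₑ) + ∫⁻ y in Q, ∫⁻ t in Ioc (0:ℝ) 1,
            ENNReal.ofReal (2*ρ) * φ (x + t • (y - x)) := by
          rw [lintegral_add_right]
          exact hmeas.lintegral_prod_right
      _ ≤ W := by
          rw [hW]
          refine add_le_add ?_ ?_
          · calc ∫⁻ y in Q, ‖g y‖ₑ ≤ ∫⁻ y in Q, (1 + ENNReal.ofReal (|g y|^p)) := by
                  refine lintegral_mono fun y => ?_
                  have h := young_aux hp1 (abs_nonneg (g y)) one_pos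
                  rw [Real.one_rpow, one_mul] at h
                  rw [← ofReal_norm_eq_enorm, Real.norm_eq_abs, ← ENNReal.ofReal_one,
                    ← ENNReal.ofReal_add zero_le_one (by positivity)]
                  exact ENNReal.ofReal_le_ofReal h
              _ = V + ∫⁻ y in Q, ENNReal.ofReal (|g y|^p) := by
                  rw [lintegral_add_left measurable_const]; simp [hV]
              _ ≤ _ := by gcongr
          · rw [lintegral_lintegral_swap hmeas.aemeasurable]
            calc ∫⁻ t in Ioc (0:ℝ) 1, ∫⁻ y in Q, ENNReal.ofReal (2*ρ) * φ (x + t • (y - x))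
                ≤ ∫⁻ t in Ioc (0:ℝ) 1, ENNReal.ofReal (2*ρ) * (ENNReal.ofReal (t^(-(n/p))) *
                    (V + ENNReal.ofReal K)) := by
                  refine setLIntegral_mono' measurableSet_Ioc fun t ht => ?_
                  rw [lintegral_const_mul' _ _ ENNReal.ofReal_ne_top]
                  gcongr
                  have ht0 : 0 < t := ht.1
                  set s := t^(-((n:ℝ)/p)) with hs
                  have hs0 : 0 < s := by positivity
                  calc ∫⁻ y in Q, φ (x + t • (y - x))
                      ≤ ∫⁻ y in Q, (ENNReal.ofReal s + ENNReal.ofReal (s^(1-p)) *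
                        ENNReal.ofReal (‖fderiv ℝ g (x + t • (y - x))‖^p)) := by
                        refine lintegral_mono fun y => ?_
                        rw [← ENNReal.ofReal_mul (by positivity), ← ENNReal.ofReal_add (by positivity) (by positivity)]
                        exact ENNReal.ofReal_le_ofReal (young_aux hp1 (norm_nonneg _) hs0)
                    _ = ENNReal.ofReal s * V + ENNReal.ofReal (s^(1-p)) *
                        ∫⁻ y in Q, ENNReal.ofReal (‖fderiv ℝ g (x + t • (y - x))‖^p) := by
                        rw [lintegral_add_left measurable_const, setLIntegral_const,
                          lintegral_const_mul' _ _ ENNReal.ofReal_ne_top]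
                    _ ≤ ENNReal.ofReal s * V + ENNReal.ofReal (s^(1-p)) *
                        (ENNReal.ofReal ((t^n)⁻¹) * ENNReal.ofReal K) := by
                        gcongr
                        refine (lintegral_contract x₀ ρ x hx _ hψm t ht0 ht.2).trans ?_
                        gcongr
                    _ = _ := by
                        rw [mul_add, ← mul_assoc, ← ENNReal.ofReal_mul (by positivity)]
                        congr 3
                        rw [hs, ← Real.rpow_natCast t n, ← Real.rpow_neg ht0.le, ← Real.rpow_mul ht0.le,
                          ← Real.rpow_add ht0]
                        congr 1
                        field_simp
                        ring
              _ = _ := by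
                  rw [lintegral_const_mul' _ _ ENNReal.ofReal_ne_top, lintegral_mul_const]
                  fun_prop
  have hfin : ‖g x‖ₑ ≤ W / V := by
    rw [ENNReal.le_div_iff_mul_le (Or.inl hV0) (Or.inl hVt), mul_comm]
    exact hIntg
  have := ENNReal.toReal_mono hWV hfin
  simpa using this

theorem taylorC11 {E : Type*} [NormedAddCommGroup E] [NormedSpace ℝ E] {f : E → ℝ} {S K : Set E}
    (hS : IsOpen S) (hf : C11On f S) (hK : IsCompact K) (hKS : K ⊆ S) :
    ∃ δ > 0, ∃ C ≥ 0, ∀ y ∈ K, ∀ y', ‖y' - y‖ < δ →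
      |f y' - f y - fderiv ℝ f y (y' - y)| ≤ C * ‖y' - y‖ ^ 2 := by
  refine hK.induction_on (p := fun T => ∃ δ > 0, ∃ C ≥ 0, ∀ y ∈ T, ∀ y', ‖y' - y‖ < δ →
      |f y' - f y - fderiv ℝ f y (y' - y)| ≤ C * ‖y' - y‖ ^ 2) ?_ ?_ ?_ ?_
  · exact ⟨1, one_pos, 0, le_rfl, by simp⟩
  · rintro s t hst ⟨δ, hδ, C, hC, h⟩
    exact ⟨δ, hδ, C, hC, fun y hy => h y (hst hy)⟩
  · rintro s t ⟨δ, hδ, C, hC, h⟩ ⟨δ', hδ', C', hC', h'⟩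
    refine ⟨min δ δ', lt_min hδ hδ', max C C', le_max_of_le_left hC, ?_⟩
    rintro y (hy | hy) y' hyy
    · refine (h y hy y' (lt_of_lt_of_le hyy (min_le_left _ _))).trans ?_
      gcongr; exact le_max_left _ _
    · refine (h' y hy y' (lt_of_lt_of_le hyy (min_le_right _ _))).trans ?_
      gcongr; exact le_max_right _ _
  · intro x hx
    obtain ⟨L, t, ht, hL⟩ := hf.2 x (hKS hx)
    rw [hS.nhdsWithin_eq (hKS hx)] at ht
    obtain ⟨r, hr, hrt⟩ := Metric.mem_nhds_iff.1 (Filter.inter_mem ht (hS.mem_nhds (hKS hx)))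
    refine ⟨ball x (r / 2), mem_nhdsWithin_of_mem_nhds (ball_mem_nhds _ (by positivity)),
      r / 2, by positivity, L, L.2, ?_⟩
    intro y hy y' hyy
    have hcv : Convex ℝ (ball x r ∩ closedBall y ‖y' - y‖) :=
      (convex_ball _ _).inter (convex_closedBall _ _)
    have hyr : y ∈ ball x r := ball_subset_ball (by linarith) hy
    have hy'r : y' ∈ ball x r := by
      rw [mem_ball] at *
      have := dist_triangle y' y x
      rw [← dist_eq_norm] at hyy
      linarith
    have key := hcv.norm_image_sub_le_of_norm_hasFDerivWithin_le' (f := f) (f' := fderiv ℝ f)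
      (φ := fderiv ℝ f y) (C := L * ‖y' - y‖) (x := y) (y := y') ?_ ?_
      ⟨hyr, by simp⟩ ⟨hy'r, by simp [dist_eq_norm]⟩
    · rw [Real.norm_eq_abs] at key
      calc _ ≤ _ := key
        _ = _ := by ring
    · rintro z ⟨hz, -⟩
      have hzS := (hrt hz).2
      exact ((hf.1.differentiableOn (by norm_num) z hzS).differentiableAt
        (hS.mem_nhds hzS)).hasFDerivAt.hasFDerivWithinAt
    · rintro z ⟨hz, hz2⟩
      have h1 := hL.norm_sub_le (hrt hz).1 (hrt hyr).1
      rw [fderivWithin_of_isOpen hS (hrt hz).2, fderivWithin_of_isOpen hS (hrt hyr).2] at h1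
      refine h1.trans ?_
      gcongr
      simpa [dist_eq_norm] using hz2

theorem taylorC1 {E : Type*} [NormedAddCommGroup E] [NormedSpace ℝ E] {f : E → ℝ} {S K : Set E}
    (hS : IsOpen S) (hf : ContDiffOn ℝ 1 f S) (hK : IsCompact K) (hKS : K ⊆ S) {ε : ℝ}
    (hε : 0 < ε) :
    ∃ δ > 0, ∀ y ∈ K, ∀ y', ‖y' - y‖ < δ → y' ∈ S ∧
      |f y' - f y - fderiv ℝ f y (y' - y)| ≤ ε * ‖y' - y‖ := by
  refine hK.induction_on (p := fun T => ∃ δ > 0, ∀ y ∈ T, ∀ y', ‖y' - y‖ < δ → y' ∈ S ∧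
      |f y' - f y - fderiv ℝ f y (y' - y)| ≤ ε * ‖y' - y‖) ?_ ?_ ?_ ?_
  · exact ⟨1, one_pos, by simp⟩
  · rintro s t hst ⟨δ, hδ, h⟩
    exact ⟨δ, hδ, fun y hy => h y (hst hy)⟩
  · rintro s t ⟨δ, hδ, h⟩ ⟨δ', hδ', h'⟩
    refine ⟨min δ δ', lt_min hδ hδ', ?_⟩
    rintro y (hy | hy) y' hyy
    · exact h y hy y' (lt_of_lt_of_le hyy (min_le_left _ _))
    · exact h' y hy y' (lt_of_lt_of_le hyy (min_le_right _ _))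
  · intro x hx
    have hc : ContinuousAt (fderiv ℝ f) x :=
      (hf.continuousOn_fderiv_of_isOpen hS le_rfl).continuousAt (hS.mem_nhds (hKS hx))
    have ht := hc (ball_mem_nhds _ (half_pos hε))
    obtain ⟨r, hr, hrt⟩ := Metric.mem_nhds_iff.1 (Filter.inter_mem ht (hS.mem_nhds (hKS hx)))
    refine ⟨ball x (r / 2), mem_nhdsWithin_of_mem_nhds (ball_mem_nhds _ (by positivity)),
      r / 2, by positivity, ?_⟩
    intro y hy y' hyy
    have hyr : y ∈ ball x r := ball_subset_ball (by linarith) hy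
    have hy'r : y' ∈ ball x r := by
      rw [mem_ball] at *
      have := dist_triangle y' y x
      rw [← dist_eq_norm] at hyy
      linarith
    refine ⟨(hrt hy'r).2, ?_⟩
    refine (convex_ball x r).norm_image_sub_le_of_norm_hasFDerivWithin_le' (f := f)
      (f' := fderiv ℝ f) (φ := fderiv ℝ f y) (C := ε) (x := y) (y := y') ?_ ?_ hyr hy'r
    · rintro z hz
      have hzS := (hrt hz).2
      exact ((hf.differentiableOn (by norm_num) z hzS).differentiableAt
        (hS.mem_nhds hzS)).hasFDerivAt.hasFDerivWithinAt
    · rintro z hz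
      have h1 : dist (fderiv ℝ f z) (fderiv ℝ f x) < ε / 2 := (hrt hz).1
      have h2 : dist (fderiv ℝ f y) (fderiv ℝ f x) < ε / 2 := (hrt hyr).1
      rw [← dist_eq_norm]
      have := dist_triangle_right (fderiv ℝ f z) (fderiv ℝ f y) (fderiv ℝ f x)
      linarith

theorem norm_single_one {n : ℕ} (l : Fin n) : ‖(Pi.single l 1 : Fin n → ℝ)‖ = 1 := by
  rw [Pi.norm_single]; simp

theorem contDiffOn_pd {n : ℕ} {m : ℕ} {u : (Fin n → ℝ) → ℝ} {S : Set (Fin n → ℝ)} (hS : IsOpen S)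
    (hu : ContDiffOn ℝ (m + 1) u S) (l : Fin n) : ContDiffOn ℝ m (pd l u) S :=
  (hu.fderiv_of_isOpen hS le_rfl).clm_apply contDiffOn_const

theorem hasDerivAt_line {n : ℕ} {u : (Fin n → ℝ) → ℝ} {z : Fin n → ℝ} {s : ℝ} (l : Fin n)
    (hu : DifferentiableAt ℝ u (z + s • (Pi.single l 1 : Fin n → ℝ))) :
    HasDerivAt (fun s : ℝ => u (z + s • (Pi.single l 1 : Fin n → ℝ)))
      (pd l u (z + s • (Pi.single l 1 : Fin n → ℝ))) s := by
  have h1 : HasDerivAt (fun s : ℝ => z + s • (Pi.single l 1 : Fin n → ℝ))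
      (Pi.single l 1 : Fin n → ℝ) s := by
    have := ((hasDerivAt_id s).smul_const (Pi.single l 1 : Fin n → ℝ)).const_add z
    simpa using this
  exact hu.hasFDerivAt.comp_hasDerivAt s h1

theorem ddq_close {n : ℕ} {u : (Fin n → ℝ) → ℝ} {S K : Set (Fin n → ℝ)}
    (hS : IsOpen S) (hu : ContDiffOn ℝ 2 u S) (hK : IsCompact K) (hKS : K ⊆ S) (l : Fin n) {ε : ℝ}
    (hε : 0 < ε) :
    ∃ δ > 0, ∀ z ∈ K, ∀ h, 0 < h → h < δ → |ddq l h u z - pd l (pd l u) z| ≤ ε := by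
  have hp : ContDiffOn ℝ 1 (pd l u) S := contDiffOn_pd (m := 1) hS hu l
  obtain ⟨δ, hδ, H⟩ := taylorC1 hS hp hK hKS (half_pos hε)
  refine ⟨δ, hδ, fun z hz h hh hhδ => ?_⟩
  set e : Fin n → ℝ := Pi.single l 1 with he
  have hen : ‖e‖ = 1 := norm_single_one l
  set a := pd l (pd l u) z with ha
  have hin : ∀ s : ℝ, |s| ≤ h → z + s • e ∈ S ∧ |pd l u (z + s • e) - pd l u z - s * a| ≤ ε / 2 * |s| := by
    intro s hs
    have h1 : ‖z + s • e - z‖ = |s| := by rw [add_sub_cancel_left, norm_smul, hen]; simp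
    have h2 := H z hz (z + s • e) (by rw [h1]; linarith)
    rw [h1, add_sub_cancel_left, map_smul] at h2
    exact h2
  have hdu : ∀ y ∈ S, DifferentiableAt ℝ u y := fun y hy =>
    (hu.differentiableOn (by norm_num) y hy).differentiableAt (hS.mem_nhds hy)
  have hder : ∀ s ∈ Icc 0 h, HasDerivWithinAt (fun s : ℝ => u (z + s • e) + u (z + (-s) • e) - s ^ 2 * a)
      (pd l u (z + s • e) - pd l u (z + (-s) • e) - 2 * s * a) (Icc 0 h) s := by
    intro s hs
    have d1 := hasDerivAt_line (u := u) (z := z) (s := s) l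
      (hdu _ (hin s (by rw [abs_of_nonneg hs.1]; exact hs.2)).1)
    have d2 := (hasDerivAt_line (u := u) (z := z) (s := -s) l
      (hdu _ (hin (-s) (by rw [abs_neg, abs_of_nonneg hs.1]; exact hs.2)).1)).scomp s (hasDerivAt_neg s)
    have d3 := ((hasDerivAt_pow 2 s).mul_const a)
    refine (((d1.add d2).sub d3).congr_deriv ?_).hasDerivWithinAt
    simp; ring
  have key := (convex_Icc (0:ℝ) h).norm_image_sub_le_of_norm_hasDerivWithin_le hder (C := ε * h) ?_
    (left_mem_Icc.2 hh.le) (right_mem_Icc.2 hh.le)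
  · have e1 : ddq l h u z - a = ((u (z + h • e) + u (z + (-h) • e) - h ^ 2 * a) -
        (u (z + (0:ℝ) • e) + u (z + (-(0:ℝ)) • e) - 0 ^ 2 * a)) / h ^ 2 := by
      unfold ddq
      rw [← he]
      simp only [neg_smul, zero_smul, neg_zero, add_zero, ← sub_eq_add_neg]
      field_simp
      ring
    rw [e1, abs_div, abs_of_pos (by positivity : 0 < h ^ 2), div_le_iff₀ (by positivity)]
    rw [Real.norm_eq_abs, Real.norm_eq_abs, sub_zero, abs_of_pos hh] at key
    calc _ ≤ _ := key
      _ = _ := by ring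
  · intro s hs
    have h1 := (hin s (by rw [abs_of_nonneg hs.1]; exact hs.2)).2
    have h2 := (hin (-s) (by rw [abs_neg, abs_of_nonneg hs.1]; exact hs.2)).2
    rw [abs_neg] at h2
    rw [abs_of_nonneg hs.1, abs_le] at h1 h2
    rw [Real.norm_eq_abs, abs_le]
    have : ε * s ≤ ε * h := by gcongr; exact hs.2
    constructor <;> linarith [h1.1, h1.2, h2.1, h2.2]

theorem vnorm_eq {n : ℕ} (x : Fin n → ℝ) : vnorm x = ‖(WithLp.toLp 2 x : EuclideanSpace ℝ (Fin n))‖ := by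
  rw [EuclideanSpace.norm_eq]; simp [vnorm]

theorem vnorm_add_le {n : ℕ} (x y : Fin n → ℝ) : vnorm (x + y) ≤ vnorm x + vnorm y := by
  rw [vnorm_eq, vnorm_eq, vnorm_eq, WithLp.toLp_add]; exact norm_add_le _ _

theorem vnorm_smul {n : ℕ} (c : ℝ) (x : Fin n → ℝ) : vnorm (c • x) = |c| * vnorm x := by
  rw [vnorm_eq, vnorm_eq, WithLp.toLp_smul, norm_smul]; simp

theorem vnorm_nonneg {n : ℕ} (x : Fin n → ℝ) : 0 ≤ vnorm x := Real.sqrt_nonneg _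

theorem normSq_nonneg' {n : ℕ} (x : Fin n → ℝ) : 0 ≤ normSq x := Finset.sum_nonneg fun i _ => sq_nonneg _

theorem vnorm_sq {n : ℕ} (x : Fin n → ℝ) : vnorm x ^ 2 = normSq x := by
  exact Real.sq_sqrt (normSq_nonneg' x)

theorem sq_le_normSq {n : ℕ} (x : Fin n → ℝ) (i : Fin n) : x i ^ 2 ≤ normSq x :=
  Finset.single_le_sum (f := fun i => x i ^ 2) (fun i _ => sq_nonneg _) (Finset.mem_univ i)

theorem abs_le_vnorm {n : ℕ} (x : Fin n → ℝ) (i : Fin n) : |x i| ≤ vnorm x := by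
  apply abs_le_of_sq_le_sq _ (vnorm_nonneg x)
  rw [vnorm_sq]; exact sq_le_normSq x i

theorem vnorm_pos {n : ℕ} {x : Fin n → ℝ} (hx : x ≠ 0) : 0 < vnorm x := by
  rw [vnorm_eq]; rw [norm_pos_iff]; simpa using hx

theorem dot_self_eq {n : ℕ} (x : Fin n → ℝ) : x ⬝ᵥ x = vnorm x ^ 2 := by
  rw [vnorm_sq]; simp [dotProduct, normSq, sq]

theorem continuous_normSq {n : ℕ} : Continuous (normSq (n := n)) := by
  unfold normSq; fun_prop

theorem normSq_lt_iff {n : ℕ} {x : Fin n → ℝ} {r : ℝ} (hr : 0 < r) : normSq x < r ^ 2 ↔ vnorm x < r := by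
  rw [← vnorm_sq]; exact pow_lt_pow_iff_left₀ (vnorm_nonneg x) hr.le (by norm_num)

theorem dot_abs_le {n : ℕ} (x y : Fin n → ℝ) : |x ⬝ᵥ y| ≤ vnorm x * vnorm y := by
  apply abs_le_of_sq_le_sq _ (mul_nonneg (vnorm_nonneg _) (vnorm_nonneg _))
  rw [mul_pow, vnorm_sq, vnorm_sq]
  exact Finset.sum_mul_sq_le_sq_mul_sq _ _ _

theorem fderiv_eq_dot {n : ℕ} (w : (Fin n → ℝ) → ℝ) (z d : Fin n → ℝ) :
    fderiv ℝ w z d = grad w z ⬝ᵥ d := by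
  conv_lhs => rw [pi_eq_sum_univ' d]
  rw [map_sum]
  simp only [map_smul, dotProduct, grad, pd, smul_eq_mul]
  refine Finset.sum_congr rfl fun i _ => ?_
  rw [mul_comm]

theorem hess_symm {n : ℕ} {w : (Fin n → ℝ) → ℝ} {S : Set (Fin n → ℝ)} (hS : IsOpen S)
    (hw : ContDiffOn ℝ 2 w S) {z : Fin n → ℝ} (hz : z ∈ S) : (hess w z).IsSymm := by
  have h := (hw.contDiffAt (hS.mem_nhds hz)).isSymmSndFDerivAt (by simp)
  have hd : DifferentiableAt ℝ (fderiv ℝ w) z :=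
    (((hw.fderiv_of_isOpen (m := 1) hS (by norm_num)).differentiableOn (by norm_num)) z hz).differentiableAt
      (hS.mem_nhds hz)
  have e : ∀ i j, pd i (pd j w) z = fderiv ℝ (fderiv ℝ w) z (Pi.single i 1) (Pi.single j 1) := by
    intro i j
    unfold pd
    rw [fderiv_clm_apply hd (by fun_prop)]
    simp
  ext i j
  simp only [transpose_apply, hess, of_apply, e]
  exact h _ _

theorem closedEBall_compact {n : ℕ} (x₁ : Fin n → ℝ) {r : ℝ} (hr : 0 < r) :
    IsCompact {x : Fin n → ℝ | normSq (x - x₁) ≤ r ^ 2} := by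
  refine Metric.isCompact_of_isClosed_isBounded ?_ ?_
  · exact isClosed_le (continuous_normSq.comp (by fun_prop)) continuous_const
  · refine (isBounded_closedBall (x := x₁) (r := r)).subset ?_
    intro x hx
    rw [mem_closedBall, dist_pi_le_iff hr.le]
    intro i
    rw [Real.dist_eq]
    exact abs_le_of_sq_le_sq ((sq_le_normSq (x - x₁) i).trans hx) hr.le

/-- contact set -/
def contactSet {n : ℕ} (w : (Fin n → ℝ) → ℝ) (x₁ : Fin n → ℝ) (r : ℝ) : Set (Fin n → ℝ) :=
  {z | normSq (z - x₁) < r ^ 2 ∧ 0 < w z ∧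
    ∀ x, normSq (x - x₁) ≤ r ^ 2 → w x ≤ w z + grad w z ⬝ᵥ (x - z)}

theorem contact_nonpos {n : ℕ} {w : (Fin n → ℝ) → ℝ} {V : Set (Fin n → ℝ)} (hV : IsOpen V)
    (hw : ContDiffOn ℝ 2 w V) {x₁ : Fin n → ℝ} {r : ℝ}
    (hB : {x | normSq (x - x₁) ≤ r ^ 2} ⊆ V) {z : Fin n → ℝ} (hz : z ∈ contactSet w x₁ r) :
    (-hess w z).PosSemidef := by
  obtain ⟨hz1, hz2, hz3⟩ := hz
  have hzV : z ∈ V := hB hz1.le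
  have hsym := hess_symm hV hw hzV
  have hdw : ∀ y ∈ V, DifferentiableAt ℝ w y := fun y hy =>
    (hw.differentiableOn (by norm_num) y hy).differentiableAt (hV.mem_nhds hy)
  refine PosSemidef.of_dotProduct_mulVec_nonneg ?_ ?_
  · rw [IsHermitian, conjTranspose_eq_transpose_of_trivial, transpose_neg, hsym]
  intro d
  simp only [star_trivial, neg_mulVec, dotProduct_neg, Left.nonneg_neg_iff]
  by_contra hpos
  push Not at hpos
  have hline : ∀ s : ℝ, HasDerivAt (fun s : ℝ => z + s • d) d s := by
    intro s
    simpa using ((hasDerivAt_id s).smul_const d).const_add z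
  have hcl : Continuous fun s : ℝ => z + s • d := by fun_prop
  have hnear : ∀ᶠ s : ℝ in nhds 0, normSq (z + s • d - x₁) < r ^ 2 := by
    have : Continuous fun s : ℝ => normSq (z + s • d - x₁) := continuous_normSq.comp (by fun_prop)
    apply this.continuousAt.eventually_lt continuousAt_const
    simpa using hz1
  set φ : ℝ → ℝ := fun s => w (z + s • d) - s * (grad w z ⬝ᵥ d) with hφ
  have hφ' : ∀ᶠ s : ℝ in nhds 0, HasDerivAt φ (fderiv ℝ w (z + s • d) d - grad w z ⬝ᵥ d) s := by
    filter_upwards [hnear] with s hs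
    have h1 := (hdw _ (hB hs.le)).hasFDerivAt.comp_hasDerivAt s (hline s)
    have h2 := (hasDerivAt_id s).mul_const (grad w z ⬝ᵥ d)
    exact (h1.sub h2).congr_deriv (by simp)
  have hφd : deriv φ =ᶠ[nhds 0] fun s => fderiv ℝ w (z + s • d) d - grad w z ⬝ᵥ d := by
    filter_upwards [hφ'] with s hs using hs.deriv
  have hpdd : ∀ j, DifferentiableAt ℝ (pd j w) z := fun j =>
    ((contDiffOn_pd (m := 1) hV hw j).differentiableOn (by norm_num) z hzV).differentiableAt
      (hV.mem_nhds hzV)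
  have hdd : HasDerivAt (fun s : ℝ => fderiv ℝ w (z + s • d) d - grad w z ⬝ᵥ d)
      (d ⬝ᵥ (hess w z *ᵥ d)) 0 := by
    have e : (fun s : ℝ => fderiv ℝ w (z + s • d) d - grad w z ⬝ᵥ d) =
        fun s : ℝ => (∑ j, pd j w (z + s • d) * d j) - grad w z ⬝ᵥ d := by
      ext s; rw [fderiv_eq_dot]; rfl
    rw [e]
    have h1 : HasDerivAt (fun s : ℝ => ∑ j, pd j w (z + s • d) * d j)
        (∑ j, (grad (pd j w) z ⬝ᵥ d) * d j) 0 := by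
      apply HasDerivAt.fun_sum
      intro j _
      have h2 : HasFDerivAt (pd j w) (fderiv ℝ (pd j w) z) (z + (0:ℝ) • d) := by
        simpa using (hpdd j).hasFDerivAt
      have h3 := h2.comp_hasDerivAt (0:ℝ) (hline 0)
      rw [fderiv_eq_dot] at h3
      exact h3.mul_const (d j)
    refine (h1.sub_const _).congr_deriv ?_
    simp only [dotProduct, mulVec, grad, hess, of_apply, Finset.sum_mul, Finset.mul_sum]
    rw [Finset.sum_comm]
    refine Finset.sum_congr rfl fun i _ => Finset.sum_congr rfl fun j _ => by ring
  have hφ2 : deriv (deriv φ) 0 = d ⬝ᵥ (hess w z *ᵥ d) := by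
    rw [hφd.deriv_eq]; exact hdd.deriv
  have hφ1 : deriv φ 0 = 0 := by
    rw [hφd.eq_of_nhds]; simp [fderiv_eq_dot]
  have hmin := isLocalMin_of_deriv_deriv_pos (f := φ) (x₀ := 0) (by rw [hφ2]; exact hpos) hφ1
    (hφ'.self_of_nhds).continuousAt
  have hconst : φ =ᶠ[nhds 0] fun _ => φ 0 := by
    filter_upwards [hmin, hnear] with s hs hs2
    refine le_antisymm ?_ hs
    have := hz3 _ hs2.le
    simp only [hφ]
    simp only [add_sub_cancel_left, dotProduct_smul, smul_eq_mul] at this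
    simp only [zero_smul, add_zero, zero_mul, sub_zero]
    linarith
  have h0 : deriv (deriv φ) 0 = 0 := by
    rw [hconst.deriv.deriv_eq]; simp
  rw [hφ2] at h0
  linarith

theorem contact_grad {n : ℕ} {w : (Fin n → ℝ) → ℝ} {x₁ : Fin n → ℝ} {r : ℝ} (hr : 0 < r)
    (hw0 : ∀ x, normSq (x - x₁) = r ^ 2 → w x = 0) {z : Fin n → ℝ} (hz : z ∈ contactSet w x₁ r) :
    vnorm (grad w z) * (r - vnorm (z - x₁)) ≤ w z := by
  obtain ⟨hz1, hz2, hz3⟩ := hz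
  by_cases hξ : grad w z = 0
  · rw [hξ]
    have : vnorm (0 : Fin n → ℝ) = 0 := by simp [vnorm]
    rw [this]; linarith
  set ξ := grad w z with hξd
  have ha := vnorm_pos hξ
  set a := vnorm ξ with had
  set b := vnorm (z - x₁) with hb
  have hbr : b < r := (normSq_lt_iff hr).1 hz1
  have hnu : vnorm (a⁻¹ • ξ) = 1 := by
    rw [vnorm_smul, abs_of_pos (inv_pos.2 ha), ← had]; field_simp
  have hc : Continuous fun s : ℝ => vnorm (z - x₁ + (-s) • (a⁻¹ • ξ)) := by
    unfold vnorm; fun_prop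
  have hivt := intermediate_value_Icc (show (0:ℝ) ≤ r + b by linarith [vnorm_nonneg (z - x₁)]) hc.continuousOn
  have h0 : vnorm (z - x₁ + (-(0:ℝ)) • (a⁻¹ • ξ)) = b := by simp [hb]
  have h1 : r ≤ vnorm (z - x₁ + (-(r + b)) • (a⁻¹ • ξ)) := by
    have h2 := vnorm_add_le (z - x₁ + (-(r + b)) • (a⁻¹ • ξ)) ((-1 : ℝ) • (z - x₁))
    have e : z - x₁ + (-(r + b)) • (a⁻¹ • ξ) + (-1 : ℝ) • (z - x₁) = (-(r + b)) • (a⁻¹ • ξ) := by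
      rw [neg_one_smul]; abel
    rw [e, vnorm_smul, hnu, vnorm_smul, abs_neg, abs_of_nonneg (by linarith [vnorm_nonneg (z - x₁)])] at h2
    rw [abs_neg, abs_one, one_mul, mul_one] at h2
    linarith
  obtain ⟨s, ⟨hs0, hs1⟩, hs⟩ := hivt (show r ∈ _ from ⟨by simpa using h0.trans_le hbr.le, h1⟩)
  simp only at hs
  set x := z + (-s) • (a⁻¹ • ξ) with hx
  have hxe : x - x₁ = z - x₁ + (-s) • (a⁻¹ • ξ) := by rw [hx]; abel
  have hx1 : normSq (x - x₁) = r ^ 2 := by rw [← vnorm_sq, hxe, hs]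
  have h3 := hz3 x hx1.le
  rw [hw0 x hx1, hx, add_sub_cancel_left, dotProduct_smul, dotProduct_smul, dot_self_eq, ← had] at h3
  have h4 : r ≤ b + s := by
    have := vnorm_add_le (z - x₁) ((-s) • (a⁻¹ • ξ))
    rw [hs, vnorm_smul, hnu, abs_neg, abs_of_nonneg hs0] at this
    linarith
  have h5 : (-s) • a⁻¹ • a ^ 2 = - (a * s) := by
    simp only [smul_eq_mul]; field_simp
  rw [h5] at h3
  nlinarith

theorem contact_measurable {n : ℕ} {w : (Fin n → ℝ) → ℝ} {V : Set (Fin n → ℝ)} (hV : IsOpen V)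
    (hw : ContDiffOn ℝ 2 w V) {x₁ : Fin n → ℝ} {r : ℝ}
    (hB : {x | normSq (x - x₁) ≤ r ^ 2} ⊆ V) : MeasurableSet (contactSet w x₁ r) := by
  have hcl : IsClosed {x : Fin n → ℝ | normSq (x - x₁) ≤ r ^ 2} :=
    isClosed_le (continuous_normSq.comp (by fun_prop)) continuous_const
  have hop : IsOpen {x : Fin n → ℝ | normSq (x - x₁) < r ^ 2} :=
    isOpen_lt (continuous_normSq.comp (by fun_prop)) continuous_const
  have hgc : ContinuousOn (grad w) V := by
    apply continuousOn_pi.2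
    intro i
    exact (contDiffOn_pd (m := 1) hV hw i).continuousOn
  have hwc := hw.continuousOn
  have e : contactSet w x₁ r = ({x : Fin n → ℝ | normSq (x - x₁) < r ^ 2} ∩ w ⁻¹' Ioi 0) ∩
      ⋂ x : {x : Fin n → ℝ | normSq (x - x₁) ≤ r ^ 2}, ({x : Fin n → ℝ | normSq (x - x₁) ≤ r ^ 2} ∩
        (fun z => w x - w z - grad w z ⬝ᵥ (x - z)) ⁻¹' Iic 0) := by
    ext z
    simp only [contactSet, mem_ofPred_eq, mem_inter_iff, mem_preimage, mem_Ioi, mem_iInter, mem_Iic,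
      Subtype.forall]
    constructor
    · rintro ⟨h1, h2, h3⟩
      exact ⟨⟨h1, h2⟩, fun x hx => ⟨h1.le, by linarith [h3 x hx]⟩⟩
    · rintro ⟨⟨h1, h2⟩, h3⟩
      exact ⟨h1, h2, fun x hx => by linarith [(h3 x hx).2]⟩
  rw [e]
  apply MeasurableSet.inter
  · exact (ContinuousOn.isOpen_inter_preimage (hwc.mono (fun x (hx : normSq (x - x₁) < r ^ 2) => hB hx.le)) hop isOpen_Ioi).measurableSet
  · apply IsClosed.measurableSet
    apply isClosed_iInter
    intro x
    apply ContinuousOn.preimage_isClosed_of_isClosed _ hcl isClosed_Iic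
    apply ContinuousOn.sub
    · exact continuousOn_const.sub (hwc.mono hB)
    · apply continuousOn_finsetSum
      intro i _
      exact ((contDiffOn_pd (m := 1) hV hw i).continuousOn.mono hB).mul
        (Continuous.continuousOn (by fun_prop))

theorem abp {n : ℕ} (hn : 1 ≤ n) {w : (Fin n → ℝ) → ℝ} {V : Set (Fin n → ℝ)} (hV : IsOpen V)
    (hw : ContDiffOn ℝ 2 w V) {x₁ : Fin n → ℝ} {r : ℝ} (hr : 0 < r)
    (hB : {x | normSq (x - x₁) ≤ r ^ 2} ⊆ V)
    (hw0 : ∀ x, normSq (x - x₁) = r ^ 2 → w x = 0) {y₀ : Fin n → ℝ}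
    (hy : normSq (y₀ - x₁) ≤ r ^ 2) {m : ℝ} (hm : 0 < m) (hym : w y₀ = m) :
    ENNReal.ofReal ((m / (r * n)) ^ n) ≤
      ∫⁻ z in contactSet w x₁ r, ENNReal.ofReal |(hess w z).det| := by
  have hn0 : (0:ℝ) < n := by exact_mod_cast hn
  have hpdd : ∀ z ∈ V, ∀ j, DifferentiableAt ℝ (pd j w) z := fun z hz j =>
    ((contDiffOn_pd (m := 1) hV hw j).differentiableOn (by norm_num) z hz).differentiableAt
      (hV.mem_nhds hz)
  set t := m / (2 * r * n) with ht
  have ht0 : 0 < t := by positivity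
  have hsub : ball (0 : Fin n → ℝ) t ⊆ grad w '' contactSet w x₁ r := by
    intro ξ hξ
    rw [mem_ball_zero_iff] at hξ
    have hξn : vnorm ξ < m / (2 * r) := by
      have h1 : vnorm ξ ≤ n * ‖ξ‖ := by
        apply Real.sqrt_le_iff.2 ⟨by positivity, ?_⟩
        calc ∑ i, ξ i ^ 2 ≤ ∑ i : Fin n, ‖ξ‖ ^ 2 := by
              apply Finset.sum_le_sum
              intro i _
              rw [← sq_abs]
              have := norm_le_pi_norm ξ i
              rw [Real.norm_eq_abs] at this
              gcongr
          _ = n * ‖ξ‖ ^ 2 := by simp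
          _ ≤ (n * ‖ξ‖) ^ 2 := by
              rw [mul_pow]
              gcongr
              have : (1:ℝ) ≤ n := by exact_mod_cast hn
              nlinarith
      calc vnorm ξ ≤ n * ‖ξ‖ := h1
        _ < n * t := by gcongr
        _ = _ := by rw [ht]; field_simp
    have hcont : ContinuousOn (fun x => w x - ξ ⬝ᵥ x) {x | normSq (x - x₁) ≤ r ^ 2} :=
      (hw.continuousOn.mono hB).sub (Continuous.continuousOn (by unfold dotProduct; fun_prop))
    obtain ⟨z, hz, hzm⟩ := (closedEBall_compact x₁ hr).exists_isMaxOn ⟨y₀, hy⟩ hcont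
    have hzm' : ∀ x, normSq (x - x₁) ≤ r ^ 2 → w x ≤ w z + ξ ⬝ᵥ (x - z) := by
      intro x hx
      have : w x - ξ ⬝ᵥ x ≤ w z - ξ ⬝ᵥ z := hzm hx
      rw [dotProduct_sub]; linarith
    have hnle : ∀ x, normSq (x - x₁) ≤ r ^ 2 → vnorm (x - x₁) ≤ r := fun x hx => by
      rw [← vnorm_sq] at hx
      exact le_of_sq_le_sq hx hr.le
    have hwz : 0 < w z := by
      have h1 := hzm' y₀ hy
      have h2 := dot_abs_le ξ (y₀ - z)
      have h3 : vnorm (y₀ - z) ≤ 2 * r := by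
        have := vnorm_add_le (y₀ - x₁) ((-1:ℝ) • (z - x₁))
        rw [vnorm_smul] at this
        have e : y₀ - x₁ + (-1:ℝ) • (z - x₁) = y₀ - z := by rw [neg_one_smul]; abel
        rw [e] at this
        simp at this
        linarith [hnle y₀ hy, hnle z hz]
      have h4 : vnorm ξ * vnorm (y₀ - z) ≤ vnorm ξ * (2 * r) := by
        have := vnorm_nonneg ξ
        gcongr
      have h5 : vnorm ξ * (2 * r) < m := by
        rwa [lt_div_iff₀ (by positivity)] at hξn
      have := (abs_le.1 h2).2
      rw [hym] at h1
      linarith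
    have hzi : normSq (z - x₁) < r ^ 2 := by
      refine lt_of_le_of_ne hz fun h => ?_
      rw [hw0 z h] at hwz
      exact lt_irrefl _ hwz
    have hgrad : grad w z = ξ := by
      have hop : IsOpen {x : Fin n → ℝ | normSq (x - x₁) < r ^ 2} :=
        isOpen_lt (continuous_normSq.comp (by fun_prop)) continuous_const
      have hloc : IsLocalMax (fun x => w x - ξ ⬝ᵥ x) z := by
        filter_upwards [hop.mem_nhds hzi] with x hx
        exact hzm (le_of_lt hx)
      have h0 := hloc.fderiv_eq_zero
      have hd : DifferentiableAt ℝ w z :=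
        (hw.differentiableOn (by norm_num) z (hB hz)).differentiableAt (hV.mem_nhds (hB hz))
      ext i
      have hl : ∀ s : ℝ, HasDerivAt (fun s : ℝ => z + s • (Pi.single i 1 : Fin n → ℝ)) (Pi.single i 1 : Fin n → ℝ) s := by
        intro s
        simpa using ((hasDerivAt_id s).smul_const (Pi.single i 1 : Fin n → ℝ)).const_add z
      have hf : HasFDerivAt (fun x : Fin n → ℝ => ξ ⬝ᵥ x) (∑ j, ξ j • ContinuousLinearMap.proj (R := ℝ) (φ := fun _ : Fin n => ℝ) j) z := by
        unfold dotProduct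
        apply HasFDerivAt.fun_sum
        intro j _
        exact (hasFDerivAt_apply j z).const_mul (ξ j)
      have h1 := (hd.hasFDerivAt.sub hf).fderiv
      have h2 : (fderiv ℝ w z - ∑ j, ξ j • ContinuousLinearMap.proj (R := ℝ) (φ := fun _ : Fin n => ℝ) j) (Pi.single i 1) = 0 := by
        rw [← h1]
        have : (w - fun x : Fin n → ℝ => ξ ⬝ᵥ x) = fun x => w x - ξ ⬝ᵥ x := rfl
        rw [this, h0]; rfl
      simp [Pi.single_apply] at h2
      unfold grad pd
      linarith
    exact ⟨z, ⟨hzi, hwz, by rw [hgrad]; exact hzm'⟩, hgrad⟩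
  have hmeas := contact_measurable hV hw hB
  have hjac := addHaar_image_le_lintegral_abs_det_fderiv volume (f := grad w) (f' := fun z => fderiv ℝ (grad w) z) hmeas (by
    intro z hz
    have : DifferentiableAt ℝ (grad w) z := by
      apply differentiableAt_pi.2
      intro j
      exact hpdd z (hB hz.1.le) j
    exact this.hasFDerivAt.hasFDerivWithinAt)
  have hvol : ENNReal.ofReal ((m / (r * n)) ^ n) = volume (ball (0 : Fin n → ℝ) t) := by
    rw [Real.volume_pi_ball _ ht0, Fintype.card_fin]
    congr 2
    rw [ht]; field_simp
  rw [hvol]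
  refine (measure_mono hsub).trans (hjac.trans (le_of_eq ?_))
  refine setLIntegral_congr_fun hmeas ?_
  intro z hz
  simp only
  congr 2
  have : (fderiv ℝ (grad w) z).det = LinearMap.det ((fderiv ℝ (grad w) z) : (Fin n → ℝ) →ₗ[ℝ] (Fin n → ℝ)) := rfl
  rw [this, ← LinearMap.det_toMatrix', ← det_transpose]
  congr 1
  ext i j
  rw [transpose_apply, LinearMap.toMatrix'_apply]
  have hg : HasFDerivAt (grad w) (ContinuousLinearMap.pi fun j => fderiv ℝ (pd j w) z) z := by
    apply hasFDerivAt_pi.2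
    intro j
    exact (hpdd z (hB hz.1.le) j).hasFDerivAt
  rw [hg.fderiv]
  simp [hess, pd]

/-- size of the Hessian -/
noncomputable def gU {n : ℕ} (u : (Fin n → ℝ) → ℝ) (z : Fin n → ℝ) : ℝ := 1 + ∑ i, ∑ j, |hess u z i j|

theorem one_le_gU {n : ℕ} (u : (Fin n → ℝ) → ℝ) (z : Fin n → ℝ) : 1 ≤ gU u z := by
  unfold gU
  have : 0 ≤ ∑ i, ∑ j, |hess u z i j| :=
    Finset.sum_nonneg fun i _ => Finset.sum_nonneg fun j _ => abs_nonneg _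
  linarith

theorem hess_le_gU {n : ℕ} (u : (Fin n → ℝ) → ℝ) (z : Fin n → ℝ) (i j : Fin n) :
    |hess u z i j| + 1 ≤ gU u z := by
  unfold gU
  have h1 : |hess u z i j| ≤ ∑ j, |hess u z i j| :=
    Finset.single_le_sum (f := fun j => |hess u z i j|) (fun j _ => abs_nonneg _) (Finset.mem_univ j)
  have h2 : ∑ j, |hess u z i j| ≤ ∑ i, ∑ j, |hess u z i j| :=
    Finset.single_le_sum (f := fun i => ∑ j, |hess u z i j|)
      (fun i _ => Finset.sum_nonneg fun j _ => abs_nonneg _) (Finset.mem_univ i)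
  linarith

theorem entry_le_matNorm {n : ℕ} (M : Matrix (Fin n) (Fin n) ℝ) (i j : Fin n) : |M i j| ≤ matNorm M := by
  have h := (LinearMap.toContinuousLinearMap (Matrix.toEuclideanLin M)).le_opNorm
    (EuclideanSpace.single j (1:ℝ))
  rw [EuclideanSpace.norm_single, norm_one, mul_one] at h
  have h2 := PiLp.norm_apply_le ((LinearMap.toContinuousLinearMap (Matrix.toEuclideanLin M))
    (EuclideanSpace.single j (1:ℝ))) i
  have h3 : ((LinearMap.toContinuousLinearMap (Matrix.toEuclideanLin M))
    (EuclideanSpace.single j (1:ℝ))) i = M i j := by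
    simp [Matrix.toLpLin_apply]
  rw [h3] at h2
  exact h2.trans h

theorem matNorm_le_sum {n : ℕ} (M : Matrix (Fin n) (Fin n) ℝ) : matNorm M ≤ ∑ i, ∑ j, |M i j| := by
  apply ContinuousLinearMap.opNorm_le_bound _
    (Finset.sum_nonneg fun i _ => Finset.sum_nonneg fun j _ => abs_nonneg _)
  intro x
  have h1 : ((LinearMap.toContinuousLinearMap (Matrix.toEuclideanLin M)) x) = WithLp.toLp 2 (M *ᵥ x.ofLp) := by
    simp [Matrix.toLpLin_apply]
  rw [h1, ← vnorm_eq, vnorm]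
  have h2 : ∀ i, |(M *ᵥ x.ofLp) i| ≤ (∑ j, |M i j|) * ‖x‖ := by
    intro i
    simp only [mulVec, dotProduct]
    refine (Finset.abs_sum_le_sum_abs _ _).trans ?_
    rw [Finset.sum_mul]
    refine Finset.sum_le_sum fun j _ => ?_
    rw [abs_mul]
    gcongr
    exact PiLp.norm_apply_le x j
  rw [Finset.sum_mul]
  apply Real.sqrt_le_iff.2
  constructor
  · exact Finset.sum_nonneg fun i _ => mul_nonneg (Finset.sum_nonneg fun j _ => abs_nonneg _) (norm_nonneg _)
  · calc ∑ i, (M *ᵥ x.ofLp) i ^ 2 ≤ ∑ i, ((∑ j, |M i j|) * ‖x‖) ^ 2 := by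
          refine Finset.sum_le_sum fun i _ => ?_
          rw [← sq_abs]
          exact pow_le_pow_left₀ (abs_nonneg _) (h2 i) 2
      _ ≤ _ := Finset.sum_sq_le_sq_sum_of_nonneg
          (fun i _ => mul_nonneg (Finset.sum_nonneg fun j _ => abs_nonneg _) (norm_nonneg _))

theorem fderiv_norm_le {n : ℕ} (w : (Fin n → ℝ) → ℝ) (z : Fin n → ℝ) :
    ‖fderiv ℝ w z‖ ≤ ∑ i, |pd i w z| := by
  apply ContinuousLinearMap.opNorm_le_bound _ (Finset.sum_nonneg fun i _ => abs_nonneg _)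
  intro d
  rw [fderiv_eq_dot, Real.norm_eq_abs, dotProduct, Finset.sum_mul]
  refine (Finset.abs_sum_le_sum_abs _ _).trans (Finset.sum_le_sum fun i _ => ?_)
  rw [abs_mul]
  exact mul_le_mul_of_nonneg_left (norm_le_pi_norm d i) (abs_nonneg _)

theorem continuousOn_hess {n : ℕ} {u : (Fin n → ℝ) → ℝ} {S : Set (Fin n → ℝ)} (hS : IsOpen S)
    (hu : ContDiffOn ℝ 2 u S) (i j : Fin n) : ContinuousOn (fun z => hess u z i j) S :=
  (contDiffOn_pd (m := 0) hS (contDiffOn_pd (m := 1) hS hu j) i).continuousOn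

theorem continuousOn_gU {n : ℕ} {u : (Fin n → ℝ) → ℝ} {S : Set (Fin n → ℝ)} (hS : IsOpen S)
    (hu : ContDiffOn ℝ 2 u S) : ContinuousOn (gU u) S := by
  unfold gU
  exact continuousOn_const.add (continuousOn_finsetSum _ fun i _ => continuousOn_finsetSum _ fun j _ =>
    (continuousOn_hess hS hu i j).abs)

theorem continuous_matNorm {n : ℕ} : Continuous (matNorm (n := n)) := by
  unfold matNorm
  apply Continuous.norm
  let L : Matrix (Fin n) (Fin n) ℝ →ₗ[ℝ] (EuclideanSpace ℝ (Fin n) →L[ℝ] EuclideanSpace ℝ (Fin n)) :=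
    (LinearMap.toContinuousLinearMap : _ ≃ₗ[ℝ] (EuclideanSpace ℝ (Fin n) →L[ℝ] EuclideanSpace ℝ (Fin n))).toLinearMap ∘ₗ
      (Matrix.toEuclideanLin : Matrix (Fin n) (Fin n) ℝ ≃ₗ[ℝ] _).toLinearMap
  exact L.continuous_of_finiteDimensional

theorem w2p_bounds {n : ℕ} (hn : 1 ≤ n) (p : ℝ) (hp : (n : ℝ) < p) (Ω : Set (Fin n → ℝ)) (hΩ : IsOpen Ω)
    (x₀ : Fin n → ℝ) (R : ℝ) (hR : 0 < R)
    (hball : closure (ball x₀ (2 * R)) ⊆ Ω) (M : ℝ) :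
    ∃ K : ℝ, 0 ≤ K ∧ ∀ u : (Fin n → ℝ) → ℝ, ContDiffOn ℝ 2 u Ω → W2pNorm p u (ball x₀ (2 * R)) ≤ M →
      (∀ x ∈ ball x₀ (2 * R), |u x| ≤ K ∧ ∀ i, |pd i u x| ≤ K) ∧
      ∫⁻ x in ball x₀ (2 * R), ENNReal.ofReal (gU u x ^ p) ≤ ENNReal.ofReal K := by
  have hn1 : (1:ℝ) ≤ n := by exact_mod_cast hn
  have hp0 : 0 < p := by linarith
  obtain ⟨C, hC⟩ := morrey hn p hp x₀ (2 * R) (by positivity) ((n:ℝ) ^ p * |M| ^ p)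
  set B := ball x₀ (2 * R) with hB
  have hBΩ : B ⊆ Ω := subset_closure.trans hball
  have hBm : MeasurableSet B := measurableSet_ball
  have hBfin : volume B < ⊤ := measure_ball_lt_top
  refine ⟨max |C| (2 ^ p * ((volume B).toReal + ((n:ℝ) * n) ^ p * |M| ^ p)), le_max_of_le_left (abs_nonneg _), ?_⟩
  intro u hu hW
  set I : (Fin n → ℝ) → ℝ := fun x => |u x| ^ p + vnorm (grad u x) ^ p + matNorm (hess u x) ^ p with hI
  have hvn : ∀ x, 0 ≤ vnorm (grad u x) := fun x => vnorm_nonneg _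
  have hmn : ∀ x, 0 ≤ matNorm (hess u x) := fun x => norm_nonneg _
  have hI0 : ∀ x, 0 ≤ I x := fun x => by
    have := hvn x; have := hmn x
    simp only [hI]; positivity
  have hIc : ContinuousOn I Ω := by
    have h1 : ContinuousOn (fun x => vnorm (grad u x)) Ω := by
      unfold vnorm
      apply ContinuousOn.sqrt
      apply continuousOn_finsetSum
      intro i _
      exact (contDiffOn_pd (m := 1) hΩ hu i).continuousOn.pow 2
    have h2 : ContinuousOn (fun x => matNorm (hess u x)) Ω := by
      apply continuous_matNorm.comp_continuousOn
      apply continuousOn_pi.2; intro i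
      apply continuousOn_pi.2; intro j
      exact continuousOn_hess hΩ hu i j
    refine ((hu.continuousOn.abs.rpow_const ?_).add (h1.rpow_const ?_)).add (h2.rpow_const ?_) <;>
    · intro x _; right; exact hp0.le
  have hcomp : IsCompact (closure B) := isBounded_ball.isCompact_closure
  have hIntg : IntegrableOn I B := (((hIc.mono hball).integrableOn_compact hcomp)).mono_set subset_closure
  have hIle : ∫ x in B, I x ≤ |M| ^ p := by
    have h0 : 0 ≤ ∫ x in B, I x := integral_nonneg hI0
    have h1 : (∫ x in B, I x) ^ (1 / p) ≤ |M| := hW.trans (le_abs_self M)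
    calc ∫ x in B, I x = ((∫ x in B, I x) ^ (1 / p)) ^ p := by
          rw [← Real.rpow_mul h0, one_div_mul_cancel hp0.ne', Real.rpow_one]
      _ ≤ _ := Real.rpow_le_rpow (Real.rpow_nonneg h0 _) h1 hp0.le
  have hlint : ∫⁻ x in B, ENNReal.ofReal (I x) ≤ ENNReal.ofReal (|M| ^ p) := by
    rw [← ofReal_integral_eq_lintegral_ofReal hIntg (Filter.Eventually.of_forall hI0)]
    exact ENNReal.ofReal_le_ofReal hIle
  have hdom : ∀ (φ : (Fin n → ℝ) → ℝ) (c : ℝ), 0 ≤ c → (∀ x ∈ B, φ x ≤ c * I x) →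
      ∫⁻ x in B, ENNReal.ofReal (φ x) ≤ ENNReal.ofReal (c * |M| ^ p) := by
    intro φ c hc h
    calc ∫⁻ x in B, ENNReal.ofReal (φ x) ≤ ∫⁻ x in B, ENNReal.ofReal c * ENNReal.ofReal (I x) := by
          refine setLIntegral_mono' hBm fun x hx => ?_
          rw [← ENNReal.ofReal_mul hc]
          exact ENNReal.ofReal_le_ofReal (h x hx)
      _ = ENNReal.ofReal c * ∫⁻ x in B, ENNReal.ofReal (I x) := lintegral_const_mul' _ _ ENNReal.ofReal_ne_top
      _ ≤ ENNReal.ofReal c * ENNReal.ofReal (|M| ^ p) := by gcongr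
      _ = _ := (ENNReal.ofReal_mul hc).symm
  have hnp1 : (1:ℝ) ≤ (n:ℝ) ^ p := Real.one_le_rpow hn1 hp0.le
  have hu_p : ∀ x, |u x| ^ p ≤ I x := fun x => by
    have h1 := Real.rpow_nonneg (hvn x) p; have h2 := Real.rpow_nonneg (hmn x) p
    simp only [hI]; linarith
  have hv_p : ∀ x, vnorm (grad u x) ^ p ≤ I x := fun x => by
    have h1 := Real.rpow_nonneg (abs_nonneg (u x)) p; have h2 := Real.rpow_nonneg (hmn x) p
    simp only [hI]; linarith
  have hm_p : ∀ x, matNorm (hess u x) ^ p ≤ I x := fun x => by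
    have h1 := Real.rpow_nonneg (abs_nonneg (u x)) p; have h2 := Real.rpow_nonneg (hvn x) p
    simp only [hI]; linarith
  have hone : ∀ x, I x ≤ (n:ℝ) ^ p * I x := fun x => le_mul_of_one_le_left (hI0 x) hnp1
  have hpdle : ∀ x i, |pd i u x| ≤ vnorm (grad u x) := fun x i => abs_le_vnorm (grad u x) i
  have b1 : ∀ x ∈ B, |u x| ≤ C := by
    refine hC u Ω hΩ hBΩ (hu.of_le (by norm_num)) (hdom _ _ (by positivity) fun x _ => (hu_p x).trans (hone x))
      (hdom _ _ (by positivity) fun x _ => ?_)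
    have h1 : ‖fderiv ℝ u x‖ ≤ n * vnorm (grad u x) := by
      refine (fderiv_norm_le u x).trans ((Finset.sum_le_sum fun i _ => hpdle x i).trans ?_)
      simp
    calc ‖fderiv ℝ u x‖ ^ p ≤ (n * vnorm (grad u x)) ^ p := Real.rpow_le_rpow (norm_nonneg _) h1 hp0.le
      _ = n ^ p * vnorm (grad u x) ^ p := Real.mul_rpow (by positivity) (hvn x)
      _ ≤ _ := by gcongr; exact hv_p x
  have b2 : ∀ i, ∀ x ∈ B, |pd i u x| ≤ C := by
    intro i
    refine hC (pd i u) Ω hΩ hBΩ (contDiffOn_pd (m := 1) hΩ hu i)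
      (hdom _ _ (by positivity) fun x _ => ?_) (hdom _ _ (by positivity) fun x _ => ?_)
    · exact (Real.rpow_le_rpow (abs_nonneg _) (hpdle x i) hp0.le).trans ((hv_p x).trans (hone x))
    · have h1 : ‖fderiv ℝ (pd i u) x‖ ≤ n * matNorm (hess u x) := by
        refine (fderiv_norm_le (pd i u) x).trans
          ((Finset.sum_le_sum fun j _ => entry_le_matNorm (hess u x) j i).trans ?_)
        simp
      calc ‖fderiv ℝ (pd i u) x‖ ^ p ≤ (n * matNorm (hess u x)) ^ p := Real.rpow_le_rpow (norm_nonneg _) h1 hp0.le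
        _ = n ^ p * matNorm (hess u x) ^ p := Real.mul_rpow (by positivity) (hmn x)
        _ ≤ _ := by gcongr; exact hm_p x
  refine ⟨fun x hx => ⟨(b1 x hx).trans ((le_abs_self C).trans (le_max_left _ _)),
    fun i => (b2 i x hx).trans ((le_abs_self C).trans (le_max_left _ _))⟩, ?_⟩
  have hg : ∀ x, gU u x ^ p ≤ 2 ^ p * (1 + ((n:ℝ) * n) ^ p * I x) := by
    intro x
    have h1 : gU u x ≤ 1 + n * n * matNorm (hess u x) := by
      unfold gU
      have : ∑ i, ∑ j, |hess u x i j| ≤ ∑ i : Fin n, ∑ j : Fin n, matNorm (hess u x) :=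
        Finset.sum_le_sum fun i _ => Finset.sum_le_sum fun j _ => entry_le_matNorm _ i j
      simp at this
      linarith
    set a := n * n * matNorm (hess u x) with ha
    have ha0 : 0 ≤ a := by have := hmn x; positivity
    have h2 : gU u x ≤ 2 * max 1 a := by
      have := le_max_left 1 a; have := le_max_right 1 a; linarith
    have h3 : (max 1 a) ^ p ≤ 1 + a ^ p := by
      rcases le_total 1 a with h | h
      · rw [max_eq_right h]; linarith
      · rw [max_eq_left h, Real.one_rpow]; linarith [Real.rpow_nonneg ha0 p]
    calc gU u x ^ p ≤ (2 * max 1 a) ^ p := Real.rpow_le_rpow (by linarith [one_le_gU u x]) h2 hp0.le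
      _ = 2 ^ p * (max 1 a) ^ p := Real.mul_rpow (by norm_num) (by positivity)
      _ ≤ 2 ^ p * (1 + a ^ p) := by gcongr
      _ = 2 ^ p * (1 + ((n:ℝ) * n) ^ p * matNorm (hess u x) ^ p) := by
          rw [ha, Real.mul_rpow (by positivity) (hmn x)]
      _ ≤ _ := by gcongr; exact hm_p x
  calc ∫⁻ x in B, ENNReal.ofReal (gU u x ^ p)
      ≤ ∫⁻ x in B, ENNReal.ofReal (2 ^ p) * (1 + ENNReal.ofReal (((n:ℝ) * n) ^ p) * ENNReal.ofReal (I x)) := by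
        refine setLIntegral_mono' hBm fun x hx => ?_
        rw [← ENNReal.ofReal_mul (by positivity), ← ENNReal.ofReal_one,
          ← ENNReal.ofReal_add (by norm_num) (by have := hI0 x; positivity), ← ENNReal.ofReal_mul (by positivity)]
        exact ENNReal.ofReal_le_ofReal (hg x)
    _ = ENNReal.ofReal (2 ^ p) * (volume B + ENNReal.ofReal (((n:ℝ) * n) ^ p) * ∫⁻ x in B, ENNReal.ofReal (I x)) := by
        rw [lintegral_const_mul' _ _ ENNReal.ofReal_ne_top, lintegral_add_left measurable_const,
          lintegral_const_mul' _ _ ENNReal.ofReal_ne_top]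
        simp
    _ ≤ ENNReal.ofReal (2 ^ p) * (volume B + ENNReal.ofReal (((n:ℝ) * n) ^ p) * ENNReal.ofReal (|M| ^ p)) := by
        gcongr
    _ = ENNReal.ofReal (2 ^ p * ((volume B).toReal + ((n:ℝ) * n) ^ p * |M| ^ p)) := by
        rw [ENNReal.ofReal_mul (by positivity), ENNReal.ofReal_add (by positivity) (by positivity),
          ENNReal.ofReal_mul (by positivity), ENNReal.ofReal_toReal hBfin.ne]
    _ ≤ _ := ENNReal.ofReal_le_ofReal (le_max_right _ _)

/-- sum of second differences -/
noncomputable def vU {n : ℕ} (h : ℝ) (u : (Fin n → ℝ) → ℝ) (z : Fin n → ℝ) : ℝ := ∑ l, ddq l h u z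

/-- points whose translates stay in the domain -/
def shrunk {n : ℕ} (Ω : Set (Fin n → ℝ)) (h : ℝ) : Set (Fin n → ℝ) :=
  {z | z ∈ Ω ∧ ∀ l : Fin n, z + h • (Pi.single l 1 : Fin n → ℝ) ∈ Ω ∧ z - h • (Pi.single l 1 : Fin n → ℝ) ∈ Ω}

theorem isOpen_shrunk {n : ℕ} {Ω : Set (Fin n → ℝ)} (hΩ : IsOpen Ω) (h : ℝ) : IsOpen (shrunk Ω h) := by
  have : shrunk Ω h = Ω ∩ ⋂ l : Fin n, ((fun z => z + h • (Pi.single l 1 : Fin n → ℝ)) ⁻¹' Ω ∩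
      (fun z => z - h • (Pi.single l 1 : Fin n → ℝ)) ⁻¹' Ω) := by
    ext z; simp [shrunk]
  rw [this]
  refine hΩ.inter (isOpen_iInter_of_finite fun l => ?_)
  exact (hΩ.preimage (by fun_prop)).inter (hΩ.preimage (by fun_prop))

theorem contDiffOn_vU {n : ℕ} {Ω : Set (Fin n → ℝ)} (h : ℝ) {m : ℕ} {u : (Fin n → ℝ) → ℝ}
    (hu : ContDiffOn ℝ m u Ω) : ContDiffOn ℝ m (vU h u) (shrunk Ω h) := by
  unfold vU ddq
  apply ContDiffOn.sum
  intro l _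
  apply ContDiffOn.div_const
  apply ContDiffOn.add
  · apply ContDiffOn.sub
    · exact hu.comp (ContDiff.contDiffOn (by fun_prop)) fun z hz => (hz.2 l).1
    · exact contDiffOn_const.mul (hu.mono fun z hz => hz.1)
  · exact hu.comp (ContDiff.contDiffOn (by fun_prop)) fun z hz => (hz.2 l).2

theorem pd_vU {n : ℕ} {Ω : Set (Fin n → ℝ)} (hΩ : IsOpen Ω) (h : ℝ) {u : (Fin n → ℝ) → ℝ}
    (hu : ContDiffOn ℝ 1 u Ω) {z : Fin n → ℝ} (hz : z ∈ shrunk Ω h) (i : Fin n) :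
    pd i (vU h u) z = vU h (pd i u) z := by
  have hd : ∀ y ∈ Ω, HasFDerivAt u (fderiv ℝ u y) y := fun y hy =>
    ((hu.differentiableOn (by norm_num) y hy).differentiableAt (hΩ.mem_nhds hy)).hasFDerivAt
  have key : HasFDerivAt (vU h u) (∑ l : Fin n, (h ^ 2)⁻¹ •
      (fderiv ℝ u (z + h • (Pi.single l 1 : Fin n → ℝ)) - (2:ℝ) • fderiv ℝ u z +
        fderiv ℝ u (z - h • (Pi.single l 1 : Fin n → ℝ)))) z := by
    have e : vU h u = fun z => ∑ l, (h ^ 2)⁻¹ * (u (z + h • (Pi.single l 1 : Fin n → ℝ)) - 2 * u z + u (z - h • (Pi.single l 1 : Fin n → ℝ))) := by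
      ext z; unfold vU ddq
      exact Finset.sum_congr rfl fun l _ => by rw [div_eq_mul_inv, mul_comm]
    rw [e]
    apply HasFDerivAt.fun_sum
    intro l _
    have d1 : HasFDerivAt (fun z => u (z + h • (Pi.single l 1 : Fin n → ℝ)))
        (fderiv ℝ u (z + h • (Pi.single l 1 : Fin n → ℝ))) z :=
      HasFDerivAt.comp z (hd _ (hz.2 l).1) ((hasFDerivAt_id z).add_const _)
    have d2 : HasFDerivAt (fun z => u (z - h • (Pi.single l 1 : Fin n → ℝ)))
        (fderiv ℝ u (z - h • (Pi.single l 1 : Fin n → ℝ))) z :=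
      HasFDerivAt.comp z (hd _ (hz.2 l).2) ((hasFDerivAt_id z).sub_const _)
    exact ((d1.sub ((hd z hz.1).const_mul 2)).add d2).const_mul _
  unfold pd at *
  rw [key.fderiv]
  simp only [_root_.sum_apply, _root_.smul_apply, _root_.add_apply,
    _root_.sub_apply, smul_eq_mul, vU, ddq]
  exact Finset.sum_congr rfl fun l _ => by rw [div_eq_mul_inv, mul_comm]

theorem hess_vU {n : ℕ} {Ω : Set (Fin n → ℝ)} (hΩ : IsOpen Ω) (h : ℝ) {u : (Fin n → ℝ) → ℝ}
    (hu : ContDiffOn ℝ 2 u Ω) {z : Fin n → ℝ} (hz : z ∈ shrunk Ω h) (i j : Fin n) :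
    hess (vU h u) z i j = vU h (fun x => hess u x i j) z := by
  have h1 : pd j (vU h u) =ᶠ[nhds z] vU h (pd j u) := by
    filter_upwards [(isOpen_shrunk hΩ h).mem_nhds hz] with y hy
    exact pd_vU hΩ h (hu.of_le (by norm_num)) hy j
  have h2 : hess (vU h u) z i j = pd i (pd j (vU h u)) z := rfl
  have h3 : pd i (pd j (vU h u)) z = pd i (vU h (pd j u)) z := by
    unfold pd at *; rw [h1.fderiv_eq]
  rw [h2, h3, pd_vU hΩ h (contDiffOn_pd (m := 1) hΩ hu j) hz i]
  rfl

theorem step_bound {n : ℕ} {ψ : (Fin n → ℝ) → ℝ} {Ω K : Set (Fin n → ℝ)}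
    (hΩ : IsOpen Ω) (hψ : ContDiffOn ℝ 1 ψ Ω) (hK : IsCompact K) (hKΩ : K ⊆ Ω) :
    ∀ᶠ h : ℝ in nhdsWithin 0 (Ioi 0), ∀ z ∈ K, ∀ l : Fin n, ∀ s : ℝ, |s| = h →
      z + s • (Pi.single l 1 : Fin n → ℝ) ∈ Ω ∧
      |ψ (z + s • (Pi.single l 1 : Fin n → ℝ)) - ψ z| ≤ h * (|pd l ψ z| + 1) := by
  obtain ⟨δ, hδ, H⟩ := taylorC1 hΩ hψ hK hKΩ one_pos
  filter_upwards [Ioo_mem_nhdsGT hδ] with h hh z hz l s hs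
  have h1 : ‖z + s • (Pi.single l 1 : Fin n → ℝ) - z‖ = h := by
    rw [add_sub_cancel_left, norm_smul, norm_single_one]; simp [hs]
  have h2 := H z hz _ (by rw [h1]; exact hh.2)
  refine ⟨h2.1, ?_⟩
  have h3 := h2.2
  rw [h1, add_sub_cancel_left, map_smul, smul_eq_mul] at h3
  have h4 : |s * fderiv ℝ ψ z (Pi.single l 1)| = h * |pd l ψ z| := by rw [abs_mul, hs]; rfl
  have := abs_sub_abs_le_abs_sub (ψ (z + s • (Pi.single l 1 : Fin n → ℝ)) - ψ z) (s * fderiv ℝ ψ z (Pi.single l 1))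
  rw [h4] at this
  linarith

theorem ddq_comp {n : ℕ} {Ω Kx : Set (Fin n → ℝ)} (hΩ : IsOpen Ω) (hKx : IsCompact Kx) (hKΩ : Kx ⊆ Ω)
    {φ : ((Fin n → ℝ) × ℝ × (Fin n → ℝ)) → ℝ}
    (hφ : C11On φ (Ω ×ˢ ((univ : Set ℝ) ×ˢ (univ : Set (Fin n → ℝ))))) {K : ℝ} (hK : 0 ≤ K) :
    ∃ Λ ≥ 0, ∀ u : (Fin n → ℝ) → ℝ, ContDiffOn ℝ 2 u Ω →
      (∀ x ∈ Kx, |u x| ≤ K ∧ ∀ i, |pd i u x| ≤ K) →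
      ∀ᶠ h : ℝ in nhdsWithin 0 (Ioi 0), ∀ z ∈ Kx,
        |vU h (fun x => φ (x, u x, grad u x)) z| ≤
          Λ * (|vU h u z| + ∑ i, |vU h (pd i u) z| + gU u z ^ 2) := by
  have hSo : IsOpen (Ω ×ˢ ((univ : Set ℝ) ×ˢ (univ : Set (Fin n → ℝ)))) :=
    hΩ.prod (isOpen_univ.prod isOpen_univ)
  set K₀ : Set ((Fin n → ℝ) × ℝ × (Fin n → ℝ)) := Kx ×ˢ (Icc (-K) K ×ˢ closedBall 0 K) with hK₀
  have hK₀c : IsCompact K₀ := hKx.prod (isCompact_Icc.prod (isCompact_closedBall 0 K))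
  have hK₀S : K₀ ⊆ Ω ×ˢ ((univ : Set ℝ) ×ˢ (univ : Set (Fin n → ℝ))) := fun y hy =>
    ⟨hKΩ hy.1, mem_univ _, mem_univ _⟩
  obtain ⟨δ, hδ, C, hC, hT⟩ := taylorC11 hSo hφ hK₀c hK₀S
  obtain ⟨D, hD⟩ := hK₀c.exists_bound_of_continuousOn
    ((hφ.1.continuousOn_fderiv_of_isOpen hSo le_rfl).mono hK₀S)
  refine ⟨|D| + n * (2 * C * (K + 2) ^ 2), by positivity, fun u hu hb => ?_⟩
  obtain ⟨G, hG⟩ := hKx.exists_bound_of_continuousOn ((continuousOn_gU hΩ hu).mono hKΩ)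
  have hG0 : 0 ≤ |G| := abs_nonneg G
  have ev1 := step_bound hΩ (hu.of_le (by norm_num)) hKx hKΩ
  have ev2 := Filter.eventually_all.2 fun i : Fin n =>
    step_bound hΩ (contDiffOn_pd (m := 1) hΩ hu i) hKx hKΩ
  have ev3 : Ioo (0:ℝ) (δ / ((K + 2) * (|G| + 1))) ∈ nhdsWithin (0:ℝ) (Ioi 0) := Ioo_mem_nhdsGT (by positivity)
  filter_upwards [ev1, ev2, ev3] with h e1 e2 e3 z hz
  have hh : 0 < h := e3.1
  set g := gU u z with hg
  have hg1 : 1 ≤ g := one_le_gU u z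
  set Y : (Fin n → ℝ) → (Fin n → ℝ) × ℝ × (Fin n → ℝ) := fun x => (x, u x, grad u x) with hY
  have hYz : Y z ∈ K₀ := by
    refine ⟨hz, abs_le.1 (hb z hz).1, ?_⟩
    rw [mem_closedBall_zero_iff, pi_norm_le_iff_of_nonneg hK]
    exact fun i => (hb z hz).2 i
  have hYd : ∀ l : Fin n, ∀ s : ℝ, |s| = h → ‖Y (z + s • (Pi.single l 1 : Fin n → ℝ)) - Y z‖ ≤ (K + 2) * g * h := by
    intro l s hs
    have a1 := (e1 z hz l s hs).2
    have hKg : K + 2 ≤ (K + 2) * g := le_mul_of_one_le_right (by positivity) hg1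
    have hgK : g ≤ (K + 2) * g := by nlinarith
    rw [hY]
    simp only [Prod.mk_sub_mk]
    rw [Prod.norm_mk, Prod.norm_mk]
    refine max_le ?_ (max_le ?_ ?_)
    · rw [add_sub_cancel_left, norm_smul, norm_single_one, Real.norm_eq_abs, hs]
      nlinarith
    · rw [Real.norm_eq_abs]
      refine a1.trans ?_
      rw [mul_comm]
      gcongr
      linarith [(hb z hz).2 l]
    · rw [pi_norm_le_iff_of_nonneg (by positivity)]
      intro i
      have a2 := (e2 i z hz l s hs).2
      rw [Real.norm_eq_abs]
      refine a2.trans ?_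
      rw [mul_comm]
      gcongr
      exact (hess_le_gU u z l i).trans hgK
  have hsmall : (K + 2) * g * h < δ := by
    have h1 : g ≤ |G| + 1 := by
      have := hG z hz
      rw [Real.norm_eq_abs] at this
      linarith [le_abs_self G, le_abs_self (gU u z)]
    have h2 := e3.2
    rw [lt_div_iff₀ (by positivity)] at h2
    calc (K + 2) * g * h ≤ (K + 2) * (|G| + 1) * h := by gcongr
      _ < δ := by linarith
  set L := fderiv ℝ φ (Y z) with hL
  have hTay : ∀ l : Fin n, ∀ s : ℝ, |s| = h →
      |φ (Y (z + s • (Pi.single l 1 : Fin n → ℝ))) - φ (Y z) - L (Y (z + s • (Pi.single l 1 : Fin n → ℝ)) - Y z)|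
        ≤ C * ((K + 2) * g * h) ^ 2 := by
    intro l s hs
    refine (hT (Y z) hYz _ ((hYd l s hs).trans_lt hsmall)).trans ?_
    gcongr
    exact hYd l s hs
  set W : Fin n → (Fin n → ℝ) × ℝ × (Fin n → ℝ) := fun l =>
    (0, ddq l h u z, fun i => ddq l h (pd i u) z) with hW
  have hLl : ∀ l : Fin n, |ddq l h (fun x => φ (Y x)) z - L (W l)| ≤ 2 * C * (K + 2) ^ 2 * g ^ 2 := by
    intro l
    have t1 := hTay l h (abs_of_pos hh)
    have t2 := hTay l (-h) (by rw [abs_neg, abs_of_pos hh])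
    have eW : W l = (h ^ 2)⁻¹ • ((Y (z + h • (Pi.single l 1 : Fin n → ℝ)) - Y z) +
        (Y (z + (-h) • (Pi.single l 1 : Fin n → ℝ)) - Y z)) := by
      simp only [hW, hY, Prod.mk_sub_mk, Prod.mk_add_mk, Prod.smul_mk, neg_smul, ← sub_eq_add_neg]
      refine Prod.ext ?_ (Prod.ext ?_ ?_)
      · simp
      · simp only [ddq, smul_eq_mul]; rw [div_eq_inv_mul]; ring
      · ext i
        simp only [ddq, Pi.smul_apply, Pi.add_apply, Pi.sub_apply, grad, smul_eq_mul]
        rw [div_eq_inv_mul]; ring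
    have e : ddq l h (fun x => φ (Y x)) z - L (W l) = (h ^ 2)⁻¹ *
        ((φ (Y (z + h • (Pi.single l 1 : Fin n → ℝ))) - φ (Y z) - L (Y (z + h • (Pi.single l 1 : Fin n → ℝ)) - Y z)) +
        (φ (Y (z + (-h) • (Pi.single l 1 : Fin n → ℝ))) - φ (Y z) - L (Y (z + (-h) • (Pi.single l 1 : Fin n → ℝ)) - Y z))) := by
      rw [eW, map_smul, map_add]
      simp only [ddq, smul_eq_mul, neg_smul, ← sub_eq_add_neg]
      rw [div_eq_inv_mul]; ring
    rw [e, abs_mul, abs_of_pos (by positivity : 0 < (h ^ 2)⁻¹), inv_mul_le_iff₀ (by positivity)]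
    refine (abs_add_le _ _).trans ?_
    calc _ ≤ C * ((K + 2) * g * h) ^ 2 + C * ((K + 2) * g * h) ^ 2 := add_le_add t1 t2
      _ = _ := by ring
  have hWs : ∑ l, W l = (0, vU h u z, fun i => vU h (pd i u) z) := by
    refine Prod.ext ?_ (Prod.ext ?_ ?_)
    · simp [hW, Prod.fst_sum]
    · simp [hW, Prod.fst_sum, Prod.snd_sum, vU]
    · ext i
      simp [hW, Prod.snd_sum, vU]
  have hsum : |vU h (fun x => φ (Y x)) z - L (∑ l, W l)| ≤ n * (2 * C * (K + 2) ^ 2 * g ^ 2) := by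
    unfold vU
    rw [map_sum, ← Finset.sum_sub_distrib]
    refine (Finset.abs_sum_le_sum_abs _ _).trans ((Finset.sum_le_sum fun l _ => hLl l).trans ?_)
    simp
  have hs0 : ∀ i, |vU h (pd i u) z| ≤ ∑ i, |vU h (pd i u) z| := fun i =>
    Finset.single_le_sum (f := fun i => |vU h (pd i u) z|) (fun i _ => abs_nonneg _) (Finset.mem_univ i)
  have hs1 : 0 ≤ ∑ i, |vU h (pd i u) z| := Finset.sum_nonneg fun i _ => abs_nonneg _
  have hLb : |L (∑ l, W l)| ≤ |D| * (|vU h u z| + ∑ i, |vU h (pd i u) z|) := by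
    rw [hWs]
    refine (L.le_opNorm _).trans ?_
    refine mul_le_mul ((hD _ hYz).trans (le_abs_self D)) ?_ (norm_nonneg _) (abs_nonneg _)
    rw [Prod.norm_mk, Prod.norm_mk, norm_zero]
    refine max_le (by positivity) (max_le ?_ ?_)
    · rw [Real.norm_eq_abs]; linarith
    · rw [pi_norm_le_iff_of_nonneg (by positivity)]
      intro i
      rw [Real.norm_eq_abs]
      linarith [hs0 i, abs_nonneg (vU h u z)]
  have hfin : |vU h (fun x => φ (Y x)) z| ≤ n * (2 * C * (K + 2) ^ 2 * g ^ 2) +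
      |D| * (|vU h u z| + ∑ i, |vU h (pd i u) z|) := by
    have := abs_add_le (vU h (fun x => φ (Y x)) z - L (∑ l, W l)) (L (∑ l, W l))
    rw [sub_add_cancel] at this
    linarith
  refine hfin.trans ?_
  have q1 : 0 ≤ |D| * g ^ 2 := by positivity
  have q2 : 0 ≤ n * (2 * C * (K + 2) ^ 2) * (|vU h u z| + ∑ i, |vU h (pd i u) z|) := by positivity
  linarith

theorem vU_lin {n : ℕ} (h : ℝ) (z : Fin n → ℝ) (F : Matrix (Fin n) (Fin n) ℝ)
    (b c : Fin n → Fin n → (Fin n → ℝ) → ℝ) :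
    vU h (fun x => ∑ i, ∑ j, F i j * (b i j x - c i j x)) z =
      ∑ i, ∑ j, F i j * (vU h (b i j) z - vU h (c i j) z) := by
  have hsum : ∀ (g : Fin n → (Fin n → ℝ) → ℝ), vU h (fun x => ∑ i, g i x) z = ∑ i, vU h (g i) z := by
    intro g
    unfold vU ddq
    rw [Finset.sum_comm]
    refine Finset.sum_congr rfl fun l _ => ?_
    rw [← Finset.sum_div, Finset.sum_add_distrib, Finset.sum_sub_distrib, Finset.mul_sum]
  rw [hsum]
  refine Finset.sum_congr rfl fun i _ => ?_
  rw [hsum]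
  refine Finset.sum_congr rfl fun j _ => ?_
  unfold vU ddq
  rw [← Finset.sum_sub_distrib, Finset.mul_sum]
  refine Finset.sum_congr rfl fun l _ => ?_
  ring

set_option maxHeartbeats 1000000 in
theorem main_ineq {n : ℕ} (hn : 3 ≤ n) (k : ℕ) (hk3 : 3 ≤ k) (hkn : k ≤ n)
    (Ω : Set (Fin n → ℝ)) (hΩ : IsOpen Ω)
    (f : ((Fin n → ℝ) × ℝ × (Fin n → ℝ)) → ℝ)
    (hfpos : ∀ y ∈ Ω ×ˢ ((univ : Set ℝ) ×ˢ (univ : Set (Fin n → ℝ))), 0 < f y)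
    (hf : C11On f (Ω ×ˢ ((univ : Set ℝ) ×ˢ (univ : Set (Fin n → ℝ)))))
    (H : ((Fin n → ℝ) × ℝ × (Fin n → ℝ)) → Matrix (Fin n) (Fin n) ℝ)
    (hH : ∀ i j : Fin n,
      C11On (fun y => H y i j) (Ω ×ˢ ((univ : Set ℝ) ×ˢ (univ : Set (Fin n → ℝ)))))
    (hHsymm : ∀ y ∈ Ω ×ˢ ((univ : Set ℝ) ×ˢ (univ : Set (Fin n → ℝ))), (H y).IsSymm)
    (Kx : Set (Fin n → ℝ)) (hKx : IsCompact Kx) (hKΩ : Kx ⊆ Ω) (K : ℝ) (hK : 0 ≤ K) :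
    ∃ Λ : ℝ, 1 ≤ Λ ∧ ∀ u : (Fin n → ℝ) → ℝ,
      ContDiffOn ℝ 2 u Ω →
      (∀ x ∈ Ω,
        esymmMat k (hess u x - H (x, u x, grad u x))
          = f (x, u x, grad u x) ^ k ∧
        GammaPlus k (hess u x - H (x, u x, grad u x))) →
      (∀ x ∈ Kx, |u x| ≤ K ∧ ∀ i, |pd i u x| ≤ K) →
      ∀ᶠ h : ℝ in nhdsWithin 0 (Ioi 0), Kx ⊆ shrunk Ω h ∧ ∀ z ∈ Kx,
        vU h u z ≤ 2 * gU u z ∧ gU u z ≤ Λ + n ^ 2 * vU h u z ∧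
        ∃ F : Matrix (Fin n) (Fin n) ℝ, (∀ i j, |F i j| ≤ F.trace) ∧ 1 ≤ F.trace ∧
          F.trace ≤ Λ * gU u z ^ (k - 1) ∧
          (∀ N : Matrix (Fin n) (Fin n) ℝ, N.PosSemidef → N.det ≤ (F * N).trace ^ n) ∧
          -(F * hess (vU h u) z).trace ≤
            Λ * F.trace * (|vU h u z| + ∑ i, |pd i (vU h u) z| + gU u z ^ 2) := by
  set S := Ω ×ˢ ((univ : Set ℝ) ×ˢ (univ : Set (Fin n → ℝ))) with hS
  set K₀ : Set ((Fin n → ℝ) × ℝ × (Fin n → ℝ)) := Kx ×ˢ (Icc (-K) K ×ˢ closedBall 0 K) with hK₀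
  have hK₀c : IsCompact K₀ := hKx.prod (isCompact_Icc.prod (isCompact_closedBall 0 K))
  have hK₀S : K₀ ⊆ S := fun y hy => ⟨hKΩ hy.1, mem_univ _, mem_univ _⟩
  obtain ⟨c₀, hc₀, hfc⟩ := hK₀c.exists_forall_le' (hf.1.continuousOn.mono hK₀S)
    (fun y hy => hfpos y (hK₀S hy))
  choose Hb hHb using fun i j => hK₀c.exists_bound_of_continuousOn ((hH i j).1.continuousOn.mono hK₀S)
  obtain ⟨Λf, hΛf, hf2⟩ := ddq_comp hΩ hKx hKΩ hf hK
  choose ΛH hΛH hH2 using fun i j => ddq_comp hΩ hKx hKΩ (hH i j) hK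
  set Hs := ∑ i, ∑ j, |Hb i j| with hHs
  have hHs0 : 0 ≤ Hs := Finset.sum_nonneg fun i _ => Finset.sum_nonneg fun j _ => abs_nonneg _
  set LH := ∑ i, ∑ j, ΛH j i with hLH
  have hLH0 : 0 ≤ LH := Finset.sum_nonneg fun i _ => Finset.sum_nonneg fun j _ => hΛH j i
  set Λ1 := (n:ℝ) * 2 ^ n * (1 + Hs) ^ (k - 1) * (c₀ ^ (k - 1))⁻¹ with hΛ1
  have hΛ10 : 0 ≤ Λ1 := by positivity
  set Λ2 := 1 + (n:ℝ) ^ 2 * (1 + 2 * Hs) with hΛ2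
  have hΛ20 : 0 ≤ (n:ℝ) ^ 2 * (1 + 2 * Hs) := by positivity
  refine ⟨Λ1 + Λ2 + (Λf + LH), by linarith, fun u hu heq hb => ?_⟩
  have ev1 := hf2 u hu hb
  have ev2 := Filter.eventually_all.2 fun i : Fin n => Filter.eventually_all.2 fun j : Fin n =>
    hH2 i j u hu hb
  have ev3 := step_bound hΩ (hu.of_le (by norm_num)) hKx hKΩ
  have ev4 : ∀ᶠ h : ℝ in nhdsWithin 0 (Ioi 0), ∀ l : Fin n, ∀ z ∈ Kx,
      |ddq l h u z - pd l (pd l u) z| ≤ 1 / n := by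
    refine Filter.eventually_all.2 fun l => ?_
    obtain ⟨δ, hδ, hd⟩ := ddq_close hΩ hu hKx hKΩ l (ε := 1 / n) (by positivity)
    filter_upwards [Ioo_mem_nhdsGT hδ] with h hh z hz
    exact hd z hz h hh.1 hh.2
  filter_upwards [ev1, ev2, ev3, ev4, self_mem_nhdsWithin] with h e1 e2 e3 e4 hh
  have hh : 0 < h := hh
  have hsub : Kx ⊆ shrunk Ω h := by
    intro z hz
    refine ⟨hKΩ hz, fun l => ⟨(e3 z hz l h (abs_of_pos hh)).1, ?_⟩⟩
    have := (e3 z hz l (-h) (by rw [abs_neg, abs_of_pos hh])).1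
    rwa [neg_smul, ← sub_eq_add_neg] at this
  refine ⟨hsub, fun z hz => ?_⟩
  set a : (Fin n → ℝ) → Matrix (Fin n) (Fin n) ℝ := fun x => hess u x - H (x, u x, grad u x) with ha
  have hzΩ := hKΩ hz
  have hzs := hsub hz
  have hyS : ∀ x ∈ Ω, (x, u x, grad u x) ∈ S := fun x hx => ⟨hx, mem_univ _, mem_univ _⟩
  have haS : ∀ x ∈ Ω, (a x).IsSymm := fun x hx =>
    (hess_symm hΩ hu hx).sub (hHsymm _ (hyS x hx))
  have hY0 : (z, u z, grad u z) ∈ K₀ := by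
    refine ⟨hz, abs_le.1 (hb z hz).1, ?_⟩
    rw [mem_closedBall_zero_iff, pi_norm_le_iff_of_nonneg hK]
    exact fun i => (hb z hz).2 i
  set g := gU u z with hg
  have hg1 : 1 ≤ g := one_le_gU u z
  have hHle : ∀ i j, |H (z, u z, grad u z) i j| ≤ |Hb i j| := fun i j =>
    (hHb i j _ hY0).trans (le_abs_self _)
  have hHle2 : ∀ i j, |H (z, u z, grad u z) i j| ≤ Hs := fun i j => by
    refine (hHle i j).trans ?_
    refine (Finset.single_le_sum (f := fun j => |Hb i j|) (fun j _ => abs_nonneg _) (Finset.mem_univ j)).trans ?_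
    exact Finset.single_le_sum (f := fun i => ∑ j, |Hb i j|)
      (fun i _ => Finset.sum_nonneg fun j _ => abs_nonneg _) (Finset.mem_univ i)
  have htrH : |(H (z, u z, grad u z)).trace| ≤ Hs := by
    unfold Matrix.trace
    refine (Finset.abs_sum_le_sum_abs _ _).trans (Finset.sum_le_sum fun i _ => ?_)
    exact (hHle i i).trans (Finset.single_le_sum (f := fun j => |Hb i j|) (fun j _ => abs_nonneg _) (Finset.mem_univ i))
  have htra : (a z).trace = lapl u z - (H (z, u z, grad u z)).trace := by
    simp only [ha, Matrix.trace_sub]; rfl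
  have hlapg : lapl u z ≤ g - 1 := by
    have : lapl u z ≤ ∑ i, ∑ j, |hess u z i j| := by
      unfold lapl
      refine Finset.sum_le_sum fun i _ => ?_
      refine (le_abs_self _).trans ?_
      exact Finset.single_le_sum (f := fun j => |hess u z i j|) (fun j _ => abs_nonneg _) (Finset.mem_univ i)
    rw [hg]; unfold gU; linarith
  have hvl : |vU h u z - lapl u z| ≤ 1 := by
    unfold vU lapl
    rw [← Finset.sum_sub_distrib]
    refine (Finset.abs_sum_le_sum_abs _ _).trans ((Finset.sum_le_sum fun l _ => e4 l z hz).trans ?_)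
    simp
    rw [mul_inv_cancel₀]
    positivity
  have hvl' := abs_le.1 hvl
  have htrH' := abs_le.1 htrH
  have hent := entry_bound (by omega) (by omega) (a z) (haS z hzΩ) (heq z hzΩ).2
  have hn0 : 0 < n := by omega
  have htr0 : 0 ≤ (a z).trace := (abs_nonneg _).trans (hent ⟨0, hn0⟩ ⟨0, hn0⟩)
  refine ⟨by linarith, ?_, ?_⟩
  · have h1 : ∀ i j, |hess u z i j| ≤ vU h u z + (1 + 2 * Hs) := by
      intro i j
      have h2 := hent i j
      have h3 : hess u z i j = a z i j + H (z, u z, grad u z) i j := by simp [ha]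
      rw [h3]
      refine (abs_add_le _ _).trans ?_
      linarith [hHle2 i j]
    have h2 : g ≤ 1 + ∑ i : Fin n, ∑ j : Fin n, (vU h u z + (1 + 2 * Hs)) := by
      rw [hg]; unfold gU
      have : ∑ i, ∑ j, |hess u z i j| ≤ ∑ i : Fin n, ∑ j : Fin n, (vU h u z + (1 + 2 * Hs)) :=
        Finset.sum_le_sum fun i _ => Finset.sum_le_sum fun j _ => h1 i j
      linarith
    simp only [Finset.sum_const, Finset.card_univ, Fintype.card_fin, nsmul_eq_mul] at h2
    have h3 : (n:ℝ) * (n * (vU h u z + (1 + 2 * Hs))) = (n:ℝ) ^ 2 * (1 + 2 * Hs) + n ^ 2 * vU h u z := by ring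
    rw [h3] at h2
    linarith
  have hfz := hfpos _ (hyS z hzΩ)
  obtain ⟨F, hF1, hF2, hF3, hF4, hF5, hF6⟩ := support_functional (by omega) hkn (a z) (haS z hzΩ)
    (heq z hzΩ).2 (f (z, u z, grad u z)) hfz (heq z hzΩ).1
  have hΛg : ∀ m : ℕ, 0 ≤ g ^ m := fun m => by positivity
  refine ⟨F, hF1, hF2, ?_, hF6, ?_⟩
  · have h1 : f (z, u z, grad u z) / f (z, u z, grad u z) ^ k ≤ (c₀ ^ (k - 1))⁻¹ := by
      have : f (z, u z, grad u z) / f (z, u z, grad u z) ^ k = (f (z, u z, grad u z) ^ (k - 1))⁻¹ := by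
        obtain ⟨k', rfl⟩ : ∃ k', k = k' + 1 := ⟨k - 1, by omega⟩
        simp only [Nat.add_sub_cancel]
        rw [pow_succ, div_mul_eq_div_div_swap, div_self hfz.ne', one_div]
      rw [this]
      gcongr
      exact hfc _ hY0
    have h2 : (a z).trace ≤ (1 + Hs) * g := by nlinarith
    calc F.trace ≤ n * 2 ^ n * (a z).trace ^ (k - 1) * (f (z, u z, grad u z) / f (z, u z, grad u z) ^ k) := hF3
      _ ≤ n * 2 ^ n * ((1 + Hs) * g) ^ (k - 1) * (c₀ ^ (k - 1))⁻¹ := by gcongr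
      _ = Λ1 * g ^ (k - 1) := by rw [hΛ1, mul_pow]; ring
      _ ≤ _ := by
        have := hΛg (k - 1)
        gcongr
        linarith
  · set T := |vU h u z| + ∑ i, |vU h (pd i u) z| + g ^ 2 with hT
    have hT' : |vU h u z| + ∑ i, |pd i (vU h u) z| + g ^ 2 = T := by
      rw [hT]
      congr 2
      exact Finset.sum_congr rfl fun i _ => by rw [pd_vU hΩ h (hu.of_le (by norm_num)) hzs i]
    rw [hT']
    have hT0 : 0 ≤ T := by
      have : 0 ≤ ∑ i, |vU h (pd i u) z| := Finset.sum_nonneg fun i _ => abs_nonneg _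
      positivity
    have hconc : vU h (fun x => f (x, u x, grad u x)) z ≤ vU h (fun x => (F * a x).trace) z := by
      unfold vU ddq
      refine Finset.sum_le_sum fun l _ => ?_
      have p1 := hF5 (a _) (haS _ (hzs.2 l).1) (heq _ (hzs.2 l).1).2 _ (hfpos _ (hyS _ (hzs.2 l).1)) (heq _ (hzs.2 l).1).1
      have p2 := hF5 (a _) (haS _ (hzs.2 l).2) (heq _ (hzs.2 l).2).2 _ (hfpos _ (hyS _ (hzs.2 l).2)) (heq _ (hzs.2 l).2).1
      apply div_le_div_of_nonneg_right _ (by positivity)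
      simp only [hF4]
      linarith
    have hexp : vU h (fun x => (F * a x).trace) z =
        ∑ i, ∑ j, F i j * (vU h (fun x => hess u x j i) z - vU h (fun x => H (x, u x, grad u x) j i) z) := by
      rw [← vU_lin h z F (fun i j x => hess u x j i) (fun i j x => H (x, u x, grad u x) j i)]
      congr 1
    have hFv : (F * hess (vU h u) z).trace = ∑ i, ∑ j, F i j * vU h (fun x => hess u x j i) z := by
      simp only [Matrix.trace, Matrix.diag, Matrix.mul_apply]
      exact Finset.sum_congr rfl fun i _ => Finset.sum_congr rfl fun j _ => by
        rw [hess_vU hΩ h hu hzs j i]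
    have hHT : |∑ i, ∑ j, F i j * vU h (fun x => H (x, u x, grad u x) j i) z| ≤ F.trace * LH * T := by
      rw [hLH, Finset.mul_sum, Finset.sum_mul]
      refine (Finset.abs_sum_le_sum_abs _ _).trans (Finset.sum_le_sum fun i _ => ?_)
      rw [Finset.mul_sum, Finset.sum_mul]
      refine (Finset.abs_sum_le_sum_abs _ _).trans (Finset.sum_le_sum fun j _ => ?_)
      rw [abs_mul, mul_assoc]
      exact mul_le_mul (hF1 i j) (e2 j i z hz) (abs_nonneg _) (by linarith)
    have hfT := (abs_le.1 (e1 z hz)).1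
    have hHT' := (abs_le.1 hHT)
    rw [hexp] at hconc
    simp only [mul_sub, Finset.sum_sub_distrib] at hconc
    rw [← hFv] at hconc
    have q1 : Λf * T ≤ Λf * F.trace * T := by
      have : 0 ≤ Λf * T := mul_nonneg hΛf hT0
      nlinarith
    have q2 : 0 ≤ (Λ1 + Λ2) * F.trace * T := by
      have q3 : 0 ≤ F.trace := le_trans zero_le_one hF2
      have q4 : 0 ≤ Λ2 := by rw [hΛ2]; exact add_nonneg zero_le_one hΛ20
      exact mul_nonneg (mul_nonneg (add_nonneg hΛ10 q4) q3) hT0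
    have : -(F * hess (vU h u) z).trace ≤ Λf * T + F.trace * LH * T := by linarith [hHT'.1, hHT'.2]
    calc _ ≤ _ := this
      _ ≤ _ := by linarith

theorem pd_mul' {n : ℕ} {a c : (Fin n → ℝ) → ℝ} {z : Fin n → ℝ} (ha : DifferentiableAt ℝ a z)
    (hc : DifferentiableAt ℝ c z) (i : Fin n) :
    pd i (fun x => a x * c x) z = pd i a z * c z + a z * pd i c z := by
  unfold pd
  rw [fderiv_fun_mul ha hc]
  simp
  ring

theorem pd_add' {n : ℕ} {a c : (Fin n → ℝ) → ℝ} {z : Fin n → ℝ} (ha : DifferentiableAt ℝ a z)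
    (hc : DifferentiableAt ℝ c z) (i : Fin n) :
    pd i (fun x => a x + c x) z = pd i a z + pd i c z := by
  unfold pd
  rw [fderiv_fun_add ha hc]
  simp

theorem pd_pow' {n : ℕ} {a : (Fin n → ℝ) → ℝ} {z : Fin n → ℝ} (ha : DifferentiableAt ℝ a z)
    (m : ℕ) (i : Fin n) :
    pd i (fun x => a x ^ (m + 1)) z = (m + 1) * a z ^ m * pd i a z := by
  unfold pd
  rw [fderiv_fun_pow _ ha]
  simp

theorem pd_const_mul' {n : ℕ} {a : (Fin n → ℝ) → ℝ} {z : Fin n → ℝ} (ha : DifferentiableAt ℝ a z)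
    (c : ℝ) (i : Fin n) :
    pd i (fun x => c * a x) z = c * pd i a z := by
  unfold pd
  rw [fderiv_const_mul ha]
  simp

theorem pd_congr' {n : ℕ} {a c : (Fin n → ℝ) → ℝ} {z : Fin n → ℝ} (h : a =ᶠ[nhds z] c)
    (i : Fin n) : pd i a z = pd i c z := by
  unfold pd; rw [h.fderiv_eq]

/-- cutoff -/
noncomputable def rho {n : ℕ} (x₁ : Fin n → ℝ) (r : ℝ) (x : Fin n → ℝ) : ℝ := 1 - normSq (x - x₁) / r ^ 2

theorem contDiff_rho {n : ℕ} (x₁ : Fin n → ℝ) (r : ℝ) {m : ℕ} : ContDiff ℝ m (rho x₁ r) := by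
  unfold rho normSq
  simp only [Pi.sub_apply]
  fun_prop

theorem pd_rho {n : ℕ} (x₁ : Fin n → ℝ) (r : ℝ) (i : Fin n) (z : Fin n → ℝ) :
    pd i (rho x₁ r) z = (-2 / r ^ 2) * (z i - x₁ i) := by
  have h : HasFDerivAt (rho x₁ r) (-((r ^ 2)⁻¹ • ∑ j : Fin n, (2 * (z j - x₁ j)) •
      ContinuousLinearMap.proj (R := ℝ) (φ := fun _ : Fin n => ℝ) j)) z := by
    have h1 : HasFDerivAt (fun x : Fin n → ℝ => ∑ j, (x j - x₁ j) ^ 2) (∑ j : Fin n, (2 * (z j - x₁ j)) •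
      ContinuousLinearMap.proj (R := ℝ) (φ := fun _ : Fin n => ℝ) j) z := by
      apply HasFDerivAt.fun_sum
      intro j _
      have := ((hasFDerivAt_apply (𝕜 := ℝ) j z).sub_const (x₁ j)).pow 2
      simpa using this
    have h2 := (h1.const_mul (r ^ 2)⁻¹).const_sub 1
    refine h2.congr_of_eventuallyEq (Filter.Eventually.of_forall fun x => ?_)
    simp [rho, normSq, div_eq_inv_mul]
  unfold pd
  rw [h.fderiv]
  simp [Pi.single_apply]
  ring

theorem pd_pd_rho {n : ℕ} (x₁ : Fin n → ℝ) (r : ℝ) (i j : Fin n) (z : Fin n → ℝ) :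
    pd i (pd j (rho x₁ r)) z = if i = j then -2 / r ^ 2 else 0 := by
  have e : pd j (rho x₁ r) = fun z => (-2 / r ^ 2) * (z j - x₁ j) := funext fun z => pd_rho x₁ r j z
  have h := ((hasFDerivAt_apply (𝕜 := ℝ) j z).sub_const (x₁ j)).const_mul (-2 / r ^ 2)
  rw [e]
  unfold pd
  rw [h.fderiv]
  simp [Pi.single_apply, eq_comm]

theorem cutoff_pd {n : ℕ} {v : (Fin n → ℝ) → ℝ} (x₁ : Fin n → ℝ) (r : ℝ) (b : ℕ) {z : Fin n → ℝ}
    (hv : DifferentiableAt ℝ v z) (j : Fin n) :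
    pd j (fun x => rho x₁ r x ^ (b + 2) * v x) z =
      ((b : ℝ) + 2) * (rho x₁ r z ^ (b + 1) * (pd j (rho x₁ r) z * v z)) + rho x₁ r z ^ (b + 2) * pd j v z := by
  have hr : DifferentiableAt ℝ (rho x₁ r) z := (contDiff_rho x₁ r (m := 1)).differentiable (by norm_num) z
  rw [pd_mul' (hr.fun_pow _) hv, pd_pow' hr]
  push_cast
  ring

theorem cutoff_hess {n : ℕ} {v : (Fin n → ℝ) → ℝ} {V : Set (Fin n → ℝ)} (hV : IsOpen V)
    (hv : ContDiffOn ℝ 2 v V) (x₁ : Fin n → ℝ) (r : ℝ) (b : ℕ) {z : Fin n → ℝ} (hz : z ∈ V) (i j : Fin n) :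
    hess (fun x => rho x₁ r x ^ (b + 2) * v x) z i j =
      rho x₁ r z ^ (b + 2) * hess v z i j +
      ((b:ℝ) + 2) * rho x₁ r z ^ (b + 1) * (pd i (rho x₁ r) z * pd j v z + pd j (rho x₁ r) z * pd i v z) +
      v z * (((b:ℝ) + 2) * rho x₁ r z ^ (b + 1) * pd i (pd j (rho x₁ r)) z +
        ((b:ℝ) + 2) * (b + 1) * rho x₁ r z ^ b * (pd i (rho x₁ r) z * pd j (rho x₁ r) z)) := by
  have hr : DifferentiableAt ℝ (rho x₁ r) z := (contDiff_rho x₁ r (m := 1)).differentiable (by norm_num) z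
  have hrj : DifferentiableAt ℝ (pd j (rho x₁ r)) z := by
    have e : pd j (rho x₁ r) = fun z => (-2 / r ^ 2) * (z j - x₁ j) := funext fun z => pd_rho x₁ r j z
    rw [e]; fun_prop
  have hvd : ∀ y ∈ V, DifferentiableAt ℝ v y := fun y hy =>
    (hv.differentiableOn (by norm_num) y hy).differentiableAt (hV.mem_nhds hy)
  have hvj : DifferentiableAt ℝ (pd j v) z :=
    ((contDiffOn_pd (m := 1) hV hv j).differentiableOn (by norm_num) z hz).differentiableAt (hV.mem_nhds hz)
  have e1 : pd j (fun x => rho x₁ r x ^ (b + 2) * v x) =ᶠ[nhds z] fun y =>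
      ((b : ℝ) + 2) * (rho x₁ r y ^ (b + 1) * (pd j (rho x₁ r) y * v y)) + rho x₁ r y ^ (b + 2) * pd j v y := by
    filter_upwards [hV.mem_nhds hz] with y hy
    exact cutoff_pd x₁ r b (hvd y hy) j
  have e2 : hess (fun x => rho x₁ r x ^ (b + 2) * v x) z i j =
      pd i (pd j (fun x => rho x₁ r x ^ (b + 2) * v x)) z := rfl
  have e3 : hess v z i j = pd i (pd j v) z := rfl
  have d1 := hrj.fun_mul (hvd z hz)
  have d2 := (hr.fun_pow (b + 1)).fun_mul d1
  rw [e2, e3, pd_congr' e1, pd_add' (d2.const_mul _) ((hr.fun_pow (b + 2)).fun_mul hvj), pd_const_mul' d2,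
    pd_mul' (hr.fun_pow (b + 1)) d1, pd_mul' hrj (hvd z hz), pd_mul' (hr.fun_pow (b + 2)) hvj, pd_pow' hr, pd_pow' hr]
  push_cast
  ring

theorem contact_trace {n : ℕ} {v : (Fin n → ℝ) → ℝ} {V : Set (Fin n → ℝ)} (hV : IsOpen V)
    (hv : ContDiffOn ℝ 2 v V) {x₁ : Fin n → ℝ} {r : ℝ} (hr : 0 < r) (b : ℕ)
    (hB : {x | normSq (x - x₁) ≤ r ^ 2} ⊆ V) {z : Fin n → ℝ}
    (hz : z ∈ contactSet (fun x => rho x₁ r x ^ (b + 2) * v x) x₁ r)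
    {F : Matrix (Fin n) (Fin n) ℝ} (hF : ∀ i j, |F i j| ≤ F.trace) (hF1 : 1 ≤ F.trace) {Λ g : ℝ} (hΛ : 0 ≤ Λ)
    (hineq : -(F * hess v z).trace ≤ Λ * F.trace * (|v z| + ∑ i, |pd i v z| + g ^ 2)) :
    0 < rho x₁ r z ∧ rho x₁ r z ≤ 1 ∧ 0 < v z ∧
    (F * (-hess (fun x => rho x₁ r x ^ (b + 2) * v x) z)).trace ≤
      (Λ * (1 + n * (2 * (b + 3) / r)) + n ^ 2 * ((b + 2) * (2 * (2 / r) * (2 * (b + 3) / r)) +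
        ((b + 2) * (2 / r ^ 2) + (b + 2) * (b + 1) * (4 / r ^ 2)))) * F.trace *
      (rho x₁ r z ^ b * v z + rho x₁ r z ^ (b + 2) * g ^ 2) := by
  set w := fun x => rho x₁ r x ^ (b + 2) * v x with hw
  have hzV : z ∈ V := hB hz.1.le
  have hvd : DifferentiableAt ℝ v z :=
    (hv.differentiableOn (by norm_num) z hzV).differentiableAt (hV.mem_nhds hzV)
  have hw0 : ∀ x, normSq (x - x₁) = r ^ 2 → w x = 0 := by
    intro x hx
    simp only [hw, rho, hx, div_self (by positivity : r ^ 2 ≠ 0)]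
    simp
  have hgr := contact_grad hr hw0 hz
  set ρ := rho x₁ r z with hρ
  have hρ0 : 0 < ρ := by
    rw [hρ, rho, sub_pos, div_lt_one (by positivity)]; exact hz.1
  have hρ1 : ρ ≤ 1 := by
    rw [hρ, rho]
    have : 0 ≤ normSq (z - x₁) / r ^ 2 := div_nonneg (normSq_nonneg' _) (by positivity)
    linarith
  have hv0 : 0 < v z := by
    have h1 : 0 < ρ ^ (b + 2) * v z := hz.2.1
    exact (pos_iff_pos_of_mul_pos h1).1 (by positivity)
  refine ⟨hρ0, hρ1, hv0, ?_⟩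
  set d := vnorm (z - x₁) with hd
  have hd0 : 0 ≤ d := vnorm_nonneg _
  have hdr : d < r := (normSq_lt_iff hr).1 hz.1
  have hρd : ρ * r ^ 2 = r ^ 2 - d ^ 2 := by
    rw [hρ, rho, hd, vnorm_sq, sub_mul, div_mul_cancel₀ _ (by positivity : r ^ 2 ≠ 0), one_mul]
  have hrr : r * ρ ≤ 2 * (r - d) := by
    have : r * (r * ρ) ≤ r * (2 * (r - d)) := by nlinarith
    exact le_of_mul_le_mul_left this hr
  have hρi : ∀ i, |pd i (rho x₁ r) z| ≤ 2 / r := by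
    intro i
    rw [pd_rho, abs_mul]
    have h1 : |z i - x₁ i| ≤ r := (abs_le_vnorm (z - x₁) i).trans hdr.le
    have h2 : |(-2 / r ^ 2 : ℝ)| = 2 / r ^ 2 := by
      rw [abs_div, abs_neg, abs_of_pos (by norm_num : (0:ℝ) < 2), abs_of_pos (by positivity : 0 < r ^ 2)]
    rw [h2]
    calc 2 / r ^ 2 * |z i - x₁ i| ≤ 2 / r ^ 2 * r := by gcongr
      _ = 2 / r := by field_simp
  have hρij : ∀ i j, |pd i (pd j (rho x₁ r)) z| ≤ 2 / r ^ 2 := by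
    intro i j
    rw [pd_pd_rho]
    split_ifs
    · rw [abs_div, abs_neg, abs_of_pos (by norm_num : (0:ℝ) < 2), abs_of_pos (by positivity : 0 < r ^ 2)]
    · rw [abs_zero]; positivity
  set c1 := 2 * ((b:ℝ) + 3) / r with hc1
  have hc10 : 0 ≤ c1 := by positivity
  have hvi : ∀ i, ρ * |pd i v z| ≤ c1 * v z := by
    intro i
    have h1 : |pd i w z| * (r - d) ≤ ρ ^ (b + 2) * v z := by
      refine le_trans ?_ hgr
      have := abs_le_vnorm (grad w z) i
      have h3 : 0 ≤ r - d := by linarith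
      exact mul_le_mul_of_nonneg_right this h3
    have h2 : |pd i w z| ≤ ρ ^ (b + 1) * v z * (2 / r) := by
      have h3 : |pd i w z| * (r * ρ) ≤ 2 * (ρ ^ (b + 2) * v z) := by
        calc |pd i w z| * (r * ρ) ≤ |pd i w z| * (2 * (r - d)) := by gcongr
          _ = 2 * (|pd i w z| * (r - d)) := by ring
          _ ≤ _ := by gcongr
      rw [← le_div_iff₀ (by positivity)] at h3
      refine h3.trans (le_of_eq ?_)
      field_simp
      ring
    have h4 := cutoff_pd x₁ r b hvd i
    rw [← hρ] at h4
    have h5 : ρ ^ (b + 2) * pd i v z = pd i w z - ((b:ℝ) + 2) * (ρ ^ (b + 1) * (pd i (rho x₁ r) z * v z)) := by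
      rw [hw, h4]; ring
    have h6 : |ρ ^ (b + 2) * pd i v z| ≤ ρ ^ (b + 1) * v z * (2 / r) + ((b:ℝ) + 2) * (ρ ^ (b + 1) * (2 / r * v z)) := by
      rw [h5]
      refine (abs_sub _ _).trans (add_le_add h2 ?_)
      rw [abs_mul, abs_mul, abs_mul, abs_of_pos hv0, abs_of_pos (by positivity : (0:ℝ) < (b:ℝ) + 2),
        abs_of_pos (by positivity : 0 < ρ ^ (b + 1))]
      gcongr
      exact hρi i
    rw [abs_mul, abs_of_pos (by positivity : 0 < ρ ^ (b + 2))] at h6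
    have h7 : ρ ^ (b + 1) * (ρ * |pd i v z|) ≤ ρ ^ (b + 1) * (c1 * v z) := by
      calc _ = ρ ^ (b + 2) * |pd i v z| := by ring
        _ ≤ _ := h6
        _ = _ := by rw [hc1]; field_simp; ring
    exact le_of_mul_le_mul_left h7 (by positivity)
  set c2 := ((b:ℝ) + 2) * (2 * (2 / r) * c1) + (((b:ℝ) + 2) * (2 / r ^ 2) + ((b:ℝ) + 2) * (b + 1) * (4 / r ^ 2)) with hc2
  set E : Fin n → Fin n → ℝ := fun i j => ((b:ℝ) + 2) * ρ ^ (b + 1) * (pd i (rho x₁ r) z * pd j v z + pd j (rho x₁ r) z * pd i v z) +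
      v z * (((b:ℝ) + 2) * ρ ^ (b + 1) * pd i (pd j (rho x₁ r)) z +
        ((b:ℝ) + 2) * (b + 1) * ρ ^ b * (pd i (rho x₁ r) z * pd j (rho x₁ r) z)) with hE
  have hEb : ∀ i j, |E i j| ≤ c2 * (ρ ^ b * v z) := by
    intro i j
    have hcross : ∀ i j, ρ * |pd i (rho x₁ r) z * pd j v z| ≤ 2 / r * (c1 * v z) := by
      intro i j
      rw [abs_mul]
      calc ρ * (|pd i (rho x₁ r) z| * |pd j v z|) = |pd i (rho x₁ r) z| * (ρ * |pd j v z|) := by ring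
        _ ≤ 2 / r * (c1 * v z) := mul_le_mul (hρi i) (hvi j) (by positivity) (by positivity)
    have t1 : |((b:ℝ) + 2) * ρ ^ (b + 1) * (pd i (rho x₁ r) z * pd j v z + pd j (rho x₁ r) z * pd i v z)| ≤
        ((b:ℝ) + 2) * (2 * (2 / r) * c1) * (ρ ^ b * v z) := by
      rw [abs_mul, abs_of_pos (by positivity : 0 < ((b:ℝ) + 2) * ρ ^ (b + 1))]
      calc _ ≤ ((b:ℝ) + 2) * ρ ^ (b + 1) * (|pd i (rho x₁ r) z * pd j v z| + |pd j (rho x₁ r) z * pd i v z|) := by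
            gcongr; exact abs_add_le _ _
        _ = ((b:ℝ) + 2) * ρ ^ b * (ρ * |pd i (rho x₁ r) z * pd j v z| + ρ * |pd j (rho x₁ r) z * pd i v z|) := by ring
        _ ≤ ((b:ℝ) + 2) * ρ ^ b * (2 / r * (c1 * v z) + 2 / r * (c1 * v z)) := by
            exact mul_le_mul_of_nonneg_left (add_le_add (hcross i j) (hcross j i)) (by positivity)
        _ = _ := by ring
    have t2 : |v z * (((b:ℝ) + 2) * ρ ^ (b + 1) * pd i (pd j (rho x₁ r)) z +
        ((b:ℝ) + 2) * (b + 1) * ρ ^ b * (pd i (rho x₁ r) z * pd j (rho x₁ r) z))| ≤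
        (((b:ℝ) + 2) * (2 / r ^ 2) + ((b:ℝ) + 2) * (b + 1) * (4 / r ^ 2)) * (ρ ^ b * v z) := by
      rw [abs_mul, abs_of_pos hv0]
      have s1 : |((b:ℝ) + 2) * ρ ^ (b + 1) * pd i (pd j (rho x₁ r)) z| ≤ ((b:ℝ) + 2) * ρ ^ b * (2 / r ^ 2) := by
        rw [abs_mul, abs_of_pos (by positivity : 0 < ((b:ℝ) + 2) * ρ ^ (b + 1))]
        have : ρ ^ (b + 1) ≤ ρ ^ b := pow_le_pow_of_le_one hρ0.le hρ1 (by omega)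
        have := hρij i j
        gcongr
      have s2 : |((b:ℝ) + 2) * (b + 1) * ρ ^ b * (pd i (rho x₁ r) z * pd j (rho x₁ r) z)| ≤
          ((b:ℝ) + 2) * (b + 1) * ρ ^ b * (4 / r ^ 2) := by
        rw [abs_mul, abs_of_pos (by positivity : 0 < ((b:ℝ) + 2) * (b + 1) * ρ ^ b), abs_mul]
        have : |pd i (rho x₁ r) z| * |pd j (rho x₁ r) z| ≤ 2 / r * (2 / r) :=
          mul_le_mul (hρi i) (hρi j) (abs_nonneg _) (by positivity)
        have e : 2 / r * (2 / r) = 4 / r ^ 2 := by field_simp; norm_num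
        rw [e] at this
        gcongr
      calc _ ≤ v z * (((b:ℝ) + 2) * ρ ^ b * (2 / r ^ 2) + ((b:ℝ) + 2) * (b + 1) * ρ ^ b * (4 / r ^ 2)) := by
            gcongr
            exact (abs_add_le _ _).trans (add_le_add s1 s2)
        _ = _ := by ring
    have t3 := (abs_add_le _ _).trans (add_le_add t1 t2)
    calc |E i j| ≤ _ := t3
      _ = _ := by rw [hc2]; ring
  have hexp : (F * (-hess w z)).trace = ρ ^ (b + 2) * (-(F * hess v z).trace) - ∑ i, ∑ j, F i j * E j i := by
    simp only [Matrix.trace, Matrix.diag, Matrix.mul_apply, Matrix.neg_apply]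
    rw [← Finset.sum_neg_distrib, Finset.mul_sum, ← Finset.sum_sub_distrib]
    refine Finset.sum_congr rfl fun i _ => ?_
    rw [← Finset.sum_neg_distrib, Finset.mul_sum, ← Finset.sum_sub_distrib]
    refine Finset.sum_congr rfl fun j _ => ?_
    rw [hw, cutoff_hess hV hv x₁ r b hzV j i]
    ring
  have hsumE : |∑ i, ∑ j, F i j * E j i| ≤ n ^ 2 * (F.trace * (c2 * (ρ ^ b * v z))) := by
    have : |∑ i, ∑ j, F i j * E j i| ≤ ∑ i : Fin n, ∑ j : Fin n, F.trace * (c2 * (ρ ^ b * v z)) := by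
      refine (Finset.abs_sum_le_sum_abs _ _).trans (Finset.sum_le_sum fun i _ => ?_)
      refine (Finset.abs_sum_le_sum_abs _ _).trans (Finset.sum_le_sum fun j _ => ?_)
      rw [abs_mul]
      exact mul_le_mul (hF i j) (hEb j i) (abs_nonneg _) (by linarith)
    simp only [Finset.sum_const, Finset.card_univ, Fintype.card_fin, nsmul_eq_mul] at this
    linarith
  have hfirst : ρ ^ (b + 2) * (-(F * hess v z).trace) ≤
      Λ * F.trace * ((1 + n * c1) * (ρ ^ b * v z) + ρ ^ (b + 2) * g ^ 2) := by
    have hΛF : 0 ≤ Λ * F.trace := mul_nonneg hΛ (by linarith)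
    have u1 : ρ ^ (b + 2) * v z ≤ ρ ^ b * v z := by
      have : ρ ^ (b + 2) ≤ ρ ^ b := pow_le_pow_of_le_one hρ0.le hρ1 (by omega)
      gcongr
    have u2 : ρ ^ (b + 2) * ∑ i, |pd i v z| ≤ n * (ρ ^ b * (c1 * v z)) := by
      rw [Finset.mul_sum]
      have : ∑ i, ρ ^ (b + 2) * |pd i v z| ≤ ∑ i : Fin n, ρ ^ b * (c1 * v z) := by
        refine Finset.sum_le_sum fun i _ => ?_
        have h1 : ρ ^ (b + 1) ≤ ρ ^ b := pow_le_pow_of_le_one hρ0.le hρ1 (by omega)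
        calc ρ ^ (b + 2) * |pd i v z| = ρ ^ (b + 1) * (ρ * |pd i v z|) := by ring
          _ ≤ ρ ^ b * (c1 * v z) := mul_le_mul h1 (hvi i) (by positivity) (by positivity)
      simpa using this
    calc ρ ^ (b + 2) * (-(F * hess v z).trace)
        ≤ ρ ^ (b + 2) * (Λ * F.trace * (|v z| + ∑ i, |pd i v z| + g ^ 2)) := by gcongr
      _ = Λ * F.trace * (ρ ^ (b + 2) * v z + ρ ^ (b + 2) * ∑ i, |pd i v z| + ρ ^ (b + 2) * g ^ 2) := by
          rw [abs_of_pos hv0]; ring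
      _ ≤ Λ * F.trace * (ρ ^ b * v z + n * (ρ ^ b * (c1 * v z)) + ρ ^ (b + 2) * g ^ 2) := by gcongr
      _ = _ := by ring
  have hc20 : 0 ≤ c2 := by positivity
  have hF0 : 0 ≤ F.trace := by linarith
  rw [hexp]
  have hfin : ρ ^ (b + 2) * (-(F * hess v z).trace) - ∑ i, ∑ j, F i j * E j i ≤
      Λ * F.trace * ((1 + n * c1) * (ρ ^ b * v z) + ρ ^ (b + 2) * g ^ 2) + n ^ 2 * (F.trace * (c2 * (ρ ^ b * v z))) := by
    linarith [(abs_le.1 hsumE).1]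
  refine hfin.trans ?_
  have w1 : 0 ≤ Λ * (n * c1) * F.trace * (ρ ^ (b + 2) * g ^ 2) := by positivity
  have w2 : 0 ≤ n ^ 2 * c2 * F.trace * (ρ ^ (b + 2) * g ^ 2) := by positivity
  linarith

theorem interp_aux {ρ v g m L θ : ℝ} {b : ℕ} (hρ0 : 0 < ρ) (hρ1 : ρ ≤ 1) (hv : 0 < v) (hg : 1 ≤ g) (hm : 1 ≤ m)
    (hL : 1 ≤ L) (hθ : θ = 2 / ((b:ℝ) + 2)) (hρv : ρ ^ (b + 2) * v ≤ m) (hvg : v ≤ 2 * g)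
    (hρg : ρ ^ (b + 2) * g ≤ L * m) :
    ρ ^ b * v + ρ ^ (b + 2) * g ^ 2 ≤ (2 + L) * (m ^ (1 - θ) * g ^ (1 + θ)) := by
  have hθ0 : 0 ≤ θ := by rw [hθ]; positivity
  have hθ1 : θ ≤ 1 := by
    rw [hθ, div_le_one (by positivity)]
    have : (0:ℝ) ≤ b := by positivity
    linarith
  have hg0 : 0 < g := by linarith
  have hm0 : 0 < m := by linarith
  have hL0 : 0 < L := by linarith
  have split : ∀ y : ℝ, 0 < y → y = y ^ (1 - θ) * y ^ θ := fun y hy => by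
    rw [← Real.rpow_add hy]; simp
  have gsplit : g ^ (1 + θ) = g * g ^ θ := by rw [Real.rpow_add hg0, Real.rpow_one]
  have e1 : ρ ^ b = (ρ ^ (b + 2)) ^ (1 - θ) := by
    rw [← Real.rpow_natCast ρ (b + 2), ← Real.rpow_mul hρ0.le, ← Real.rpow_natCast]
    congr 1
    rw [hθ]; push_cast; field_simp; ring
  have t1 : ρ ^ b * v ≤ 2 * (m ^ (1 - θ) * g ^ (1 + θ)) := by
    have h1 : ρ ^ b * v = (ρ ^ (b + 2) * v) ^ (1 - θ) * v ^ θ := by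
      rw [Real.mul_rpow (by positivity) hv.le, ← e1, mul_assoc, ← split v hv]
    have h2 : (ρ ^ (b + 2) * v) ^ (1 - θ) ≤ m ^ (1 - θ) :=
      Real.rpow_le_rpow (by positivity) hρv (by linarith)
    have h3 : v ^ θ ≤ 2 * (g * g ^ θ) := by
      calc v ^ θ ≤ (2 * g) ^ θ := Real.rpow_le_rpow hv.le hvg hθ0
        _ = 2 ^ θ * g ^ θ := Real.mul_rpow (by norm_num) hg0.le
        _ ≤ 2 * (g * g ^ θ) := by
          have h4 : (2:ℝ) ^ θ ≤ 2 := by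
            calc (2:ℝ) ^ θ ≤ 2 ^ (1:ℝ) := Real.rpow_le_rpow_of_exponent_le (by norm_num) hθ1
              _ = 2 := Real.rpow_one _
          have h5 : g ^ θ ≤ g * g ^ θ := le_mul_of_one_le_left (by positivity) hg
          exact mul_le_mul h4 h5 (by positivity) (by norm_num)
    rw [h1, gsplit]
    calc _ ≤ m ^ (1 - θ) * (2 * (g * g ^ θ)) := mul_le_mul h2 h3 (by positivity) (by positivity)
      _ = _ := by ring
  have t2 : ρ ^ (b + 2) * g ^ 2 ≤ L * (m ^ (1 - θ) * g ^ (1 + θ)) := by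
    have hy : 0 < ρ ^ (b + 2) * g := by positivity
    have h2 : (ρ ^ (b + 2) * g) ^ (1 - θ) ≤ L * m ^ (1 - θ) := by
      calc (ρ ^ (b + 2) * g) ^ (1 - θ) ≤ (L * m) ^ (1 - θ) := Real.rpow_le_rpow hy.le hρg (by linarith)
        _ = L ^ (1 - θ) * m ^ (1 - θ) := Real.mul_rpow hL0.le hm0.le
        _ ≤ L * m ^ (1 - θ) := by
          have : L ^ (1 - θ) ≤ L := by
            calc L ^ (1 - θ) ≤ L ^ (1:ℝ) := Real.rpow_le_rpow_of_exponent_le hL (by linarith)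
              _ = L := Real.rpow_one _
          gcongr
    have h3 : (ρ ^ (b + 2) * g) ^ θ ≤ g ^ θ := by
      refine Real.rpow_le_rpow hy.le ?_ hθ0
      exact mul_le_of_le_one_left hg0.le (pow_le_one₀ hρ0.le hρ1)
    calc ρ ^ (b + 2) * g ^ 2 = (ρ ^ (b + 2) * g) * g := by ring
      _ = ((ρ ^ (b + 2) * g) ^ (1 - θ) * (ρ ^ (b + 2) * g) ^ θ) * g := by rw [← split _ hy]
      _ ≤ (L * m ^ (1 - θ) * g ^ θ) * g := by
          refine mul_le_mul_of_nonneg_right (mul_le_mul h2 h3 (by positivity) (by positivity)) hg0.le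
      _ = _ := by rw [gsplit]; ring
  linarith

theorem trace_nonneg_of_det {n : ℕ} (hn : 1 ≤ n) {F : Matrix (Fin n) (Fin n) ℝ} (hF1 : 1 ≤ F.trace)
    (hF : ∀ N : Matrix (Fin n) (Fin n) ℝ, N.PosSemidef → N.det ≤ (F * N).trace ^ n)
    {N : Matrix (Fin n) (Fin n) ℝ} (hN : N.PosSemidef) : 0 ≤ (F * N).trace := by
  by_contra hneg
  push Not at hneg
  set s := -(F * N).trace / F.trace with hs
  have hs0 : 0 < s := div_pos (by linarith) (by linarith)
  have h1 : (N + s • (1 : Matrix (Fin n) (Fin n) ℝ)).PosDef :=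
    Matrix.PosDef.posSemidef_add hN (Matrix.PosDef.one.smul hs0)
  have h2 := hF _ h1.posSemidef
  have h3 : (F * (N + s • (1 : Matrix (Fin n) (Fin n) ℝ))).trace = 0 := by
    rw [Matrix.mul_add, Matrix.trace_add, Matrix.mul_smul, Matrix.mul_one, Matrix.trace_smul, smul_eq_mul, hs,
      div_mul_cancel₀ _ (by linarith)]
    ring
  rw [h3, zero_pow (by omega)] at h2
  linarith [h1.det_pos]

/-- The pointwise estimate integrated: final bound on the max. -/
theorem max_bound {n : ℕ} (hn : 1 ≤ n) {m r A Q θ : ℝ} (hm : 1 ≤ m) (hr : 0 < r) (hA : 0 ≤ A) (hQ : 0 ≤ Q)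
    (hθ : 0 < θ) (h : (m / (r * n)) ^ n ≤ (A * m ^ (1 - θ)) ^ n * Q) :
    m ≤ ((A * (r * n)) ^ n * Q) ^ (1 / (n * θ)) := by
  have hn0 : (0:ℝ) < n := by exact_mod_cast hn
  have hm0 : 0 < m := by linarith
  have e : m = m ^ (1 - θ) * m ^ θ := by rw [← Real.rpow_add hm0]; simp
  have h1 : (m ^ θ) ^ n ≤ (A * (r * n)) ^ n * Q := by
    have h2 : m ^ n ≤ (A * m ^ (1 - θ)) ^ n * Q * (r * n) ^ n := by
      rw [div_pow, div_le_iff₀ (by positivity)] at h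
      exact h
    have h3 : (m ^ (1 - θ)) ^ n * (m ^ θ) ^ n ≤ (m ^ (1 - θ)) ^ n * ((A * (r * n)) ^ n * Q) := by
      rw [← mul_pow, ← e]
      refine h2.trans (le_of_eq ?_)
      simp only [mul_pow]; ring
    exact le_of_mul_le_mul_left h3 (by positivity)
  have h2 : m = ((m ^ θ) ^ n) ^ (1 / (n * θ)) := by
    rw [← Real.rpow_natCast, ← Real.rpow_mul (by positivity), ← Real.rpow_mul hm0.le]
    have : θ * (n * (1 / (n * θ))) = 1 := by field_simp
    rw [this, Real.rpow_one]
  calc m = _ := h2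
    _ ≤ _ := Real.rpow_le_rpow (by positivity) h1 (by positivity)

/-- Interior Hessian estimate for `σ_k` augmented Hessian equations
with general `H` under stronger integrability (a priori form of Theorem 6.1). -/
theorem interior_hessian_estimate_sigmak_generalH
    {n : ℕ} (hn : 3 ≤ n) (k : ℕ) (hk3 : 3 ≤ k) (hkn : k ≤ n)
    (Ω : Set (Fin n → ℝ)) (hΩ : IsOpen Ω)
    (p : ℝ) (hp : (k * n : ℝ) < p)
    (f : ((Fin n → ℝ) × ℝ × (Fin n → ℝ)) → ℝ)
    (hfpos : ∀ y ∈ Ω ×ˢ ((univ : Set ℝ) ×ˢ (univ : Set (Fin n → ℝ))), 0 < f y)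
    (hf : C11On f (Ω ×ˢ ((univ : Set ℝ) ×ˢ (univ : Set (Fin n → ℝ)))))
    (H : ((Fin n → ℝ) × ℝ × (Fin n → ℝ)) → Matrix (Fin n) (Fin n) ℝ)
    (hH : ∀ i j : Fin n,
      C11On (fun y => H y i j) (Ω ×ˢ ((univ : Set ℝ) ×ˢ (univ : Set (Fin n → ℝ)))))
    (hHsymm : ∀ y ∈ Ω ×ˢ ((univ : Set ℝ) ×ˢ (univ : Set (Fin n → ℝ))), (H y).IsSymm)
    (x₀ : Fin n → ℝ) (R : ℝ) (hR : 0 < R)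
    (hball : closure (ball x₀ (2 * R)) ⊆ Ω)
    (M : ℝ) (hM : 0 < M) :
    ∃ C : ℝ, ∀ u : (Fin n → ℝ) → ℝ,
      ContDiffOn ℝ 2 u Ω →
      (∀ x ∈ Ω,
        esymmMat k (hess u x - H (x, u x, grad u x))
          = f (x, u x, grad u x) ^ k ∧
        GammaPlus k (hess u x - H (x, u x, grad u x))) →
      W2pNorm p u (ball x₀ (2 * R)) ≤ M →
      ∀ x ∈ ball x₀ R, matNorm (hess u x) ≤ C := by
  have hn1 : 1 ≤ n := by omega
  have hn1' : (1:ℝ) ≤ n := by exact_mod_cast hn1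
  have hk1' : (3:ℝ) ≤ k := by exact_mod_cast hk3
  have hpn : (n:ℝ) < p := by nlinarith
  obtain ⟨K, hK0, hK⟩ := w2p_bounds hn1 p hpn Ω hΩ x₀ R hR hball M
  set Kx := closedBall x₀ (3 * R / 2) with hKxd
  have hKxB : Kx ⊆ ball x₀ (2 * R) := closedBall_subset_ball (by linarith)
  have hKxΩ : Kx ⊆ Ω := hKxB.trans (subset_closure.trans hball)
  obtain ⟨Λ, hΛ1, hΛ⟩ := main_ineq hn k hk3 hkn Ω hΩ f hfpos hf H hH hHsymm Kx
    (isCompact_closedBall _ _) hKxΩ K hK0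
  obtain ⟨b, hb⟩ := exists_nat_ge (2 * n / (p - k * n))
  set θ := 2 / ((b:ℝ) + 2) with hθ
  have hθ0 : 0 < θ := by positivity
  have hθp : (n:ℝ) * (k + θ) ≤ p := by
    have h1 : 0 < p - k * n := by linarith
    rw [div_le_iff₀ h1] at hb
    have h2 : n * θ ≤ p - k * n := by
      rw [hθ, mul_div_assoc', div_le_iff₀ (by positivity)]
      nlinarith
    linarith
  set r := R / 2 with hr
  have hr0 : 0 < r := by positivity
  set D := Λ * (1 + n * (2 * (b + 3) / r)) + n ^ 2 * ((b + 2) * (2 * (2 / r) * (2 * (b + 3) / r)) +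
        ((b + 2) * (2 / r ^ 2) + (b + 2) * (b + 1) * (4 / r ^ 2))) with hD
  have hD0 : 0 ≤ D := by positivity
  set L := Λ + (n:ℝ) ^ 2 with hL
  have hL1 : 1 ≤ L := by nlinarith
  set A := D * Λ * (2 + L) with hA
  have hA0 : 0 ≤ A := by positivity
  set C1 := max 1 (((A * (r * n)) ^ n * K) ^ (1 / (n * θ))) with hC1
  refine ⟨Λ + n ^ 2 * C1, fun u hu heq hW x₁ hx₁ => ?_⟩
  obtain ⟨hub, hIntg⟩ := hK u hu hW
  obtain ⟨h, hsh, hz⟩ := (hΛ u hu heq fun x hx => hub x (hKxB hx)).exists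
  set v := vU h u with hvd
  have hV := isOpen_shrunk hΩ h
  have hv : ContDiffOn ℝ 2 v (shrunk Ω h) := contDiffOn_vU (m := 2) h hu
  have hBK : {x | normSq (x - x₁) ≤ r ^ 2} ⊆ Kx := by
    intro x hx
    have hx' : vnorm (x - x₁) ≤ r := by
      have : vnorm (x - x₁) ^ 2 ≤ r ^ 2 := by rw [vnorm_sq]; exact hx
      exact le_of_sq_le_sq this hr0.le
    have h1 : dist x x₁ ≤ r := by
      rw [dist_pi_le_iff hr0.le]
      intro i
      rw [Real.dist_eq]
      exact (abs_le_vnorm (x - x₁) i).trans hx'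
    have h2 : dist x₁ x₀ < R := hx₁
    have := dist_triangle x x₁ x₀
    rw [hKxd, mem_closedBall]
    linarith
  have hB : {x | normSq (x - x₁) ≤ r ^ 2} ⊆ shrunk Ω h := hBK.trans hsh
  set w := fun x => rho x₁ r x ^ (b + 2) * v x with hw
  have hwC : ContDiffOn ℝ 2 w (shrunk Ω h) := ((contDiff_rho x₁ r (m := 2)).pow (b + 2)).contDiffOn.mul hv
  have hw0 : ∀ x, normSq (x - x₁) = r ^ 2 → w x = 0 := by
    intro x hx
    simp only [hw, rho, hx, div_self (by positivity : r ^ 2 ≠ 0)]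
    simp
  have hx₁B : x₁ ∈ {x | normSq (x - x₁) ≤ r ^ 2} := by
    have : normSq (x₁ - x₁) = 0 := by simp [normSq]
    show normSq (x₁ - x₁) ≤ r ^ 2
    rw [this]; positivity
  obtain ⟨y₀, hy₀, hmax⟩ := (closedEBall_compact x₁ hr0).exists_isMaxOn ⟨x₁, hx₁B⟩
    (hwC.continuousOn.mono hB)
  have hmC : w y₀ ≤ C1 := by
    by_cases hm : w y₀ ≤ 1
    · exact hm.trans (le_max_left _ _)
    push Not at hm
    set m := w y₀ with hmdef
    refine le_trans ?_ (le_max_right _ _)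
    refine max_bound hn1 hm.le hr0 hA0 hK0 hθ0 ?_
    have habp := abp hn1 hV hwC hr0 hB hw0 hy₀ (by linarith : 0 < m) rfl
    have hpt : ∀ z ∈ contactSet w x₁ r, ENNReal.ofReal |(hess w z).det| ≤
        ENNReal.ofReal ((A * m ^ (1 - θ)) ^ n) * ENNReal.ofReal (gU u z ^ p) := by
      intro z hzc
      have hzK : z ∈ Kx := hBK hzc.1.le
      obtain ⟨hvg, hgv, F, hF, hF1, hFt, hFdet, hFin⟩ := hz z hzK
      obtain ⟨q1, q2, q3, q4⟩ := contact_trace hV hv hr0 b hB hzc hF hF1 (by linarith : 0 ≤ Λ) hFin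
      have hneg := contact_nonpos hV hwC hB hzc
      have hdet : |(hess w z).det| = (-hess w z).det := by
        rw [← abs_of_nonneg hneg.det_nonneg, Matrix.det_neg, abs_mul, abs_pow]; simp
      set g := gU u z with hg
      have hg1 : 1 ≤ g := one_le_gU u z
      have hg0 : 0 < g := by linarith
      set ρ := rho x₁ r z with hρ
      have hρv : ρ ^ (b + 2) * v z ≤ m := hmax hzc.1.le
      have hρp : ρ ^ (b + 2) ≤ 1 := pow_le_one₀ q1.le q2
      have hρp0 : 0 < ρ ^ (b + 2) := by positivity
      have hρg : ρ ^ (b + 2) * g ≤ L * m := by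
        calc ρ ^ (b + 2) * g ≤ ρ ^ (b + 2) * (Λ + n ^ 2 * v z) := by gcongr
          _ = ρ ^ (b + 2) * Λ + n ^ 2 * (ρ ^ (b + 2) * v z) := by ring
          _ ≤ m * Λ + n ^ 2 * m := by
              gcongr
              linarith
          _ = L * m := by rw [hL]; ring
      have hI := interp_aux q1 q2 q3 hg1 hm.le hL1 hθ hρv hvg hρg
      have htr : (F * (-hess w z)).trace ≤ (A * m ^ (1 - θ)) * g ^ (k + θ) := by
        have hm0 : 0 < m := by linarith
        calc _ ≤ _ := q4
          _ ≤ D * (Λ * g ^ (k - 1)) * ((2 + L) * (m ^ (1 - θ) * g ^ (1 + θ))) := by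
              refine mul_le_mul (mul_le_mul_of_nonneg_left hFt hD0) hI (by positivity) (by positivity)
          _ = (A * m ^ (1 - θ)) * (g ^ (k - 1) * g ^ (1 + θ)) := by rw [hA]; ring
          _ = _ := by
              rw [← Real.rpow_natCast, ← Real.rpow_add hg0, Nat.cast_sub (by omega)]
              congr 2
              push_cast; ring
      have htr0 : 0 ≤ (F * (-hess w z)).trace := trace_nonneg_of_det hn1 hF1 hFdet hneg
      have hm0 : 0 < m := by linarith
      rw [← ENNReal.ofReal_mul (by positivity), hdet]
      refine ENNReal.ofReal_le_ofReal ((hFdet _ hneg).trans ((pow_le_pow_left₀ htr0 htr n).trans ?_))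
      rw [mul_pow]
      refine mul_le_mul_of_nonneg_left ?_ (by positivity)
      rw [← Real.rpow_natCast, ← Real.rpow_mul hg0.le]
      exact Real.rpow_le_rpow_of_exponent_le hg1 (by linarith)
    have hsub : contactSet w x₁ r ⊆ ball x₀ (2 * R) := fun z hzc => hKxB (hBK hzc.1.le)
    have hfin : ENNReal.ofReal ((m / (r * n)) ^ n) ≤ ENNReal.ofReal ((A * m ^ (1 - θ)) ^ n * K) := by
      refine habp.trans ((setLIntegral_mono' (contact_measurable hV hwC hB) hpt).trans ?_)
      rw [lintegral_const_mul' _ _ ENNReal.ofReal_ne_top, ENNReal.ofReal_mul (by positivity)]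
      gcongr
      exact (lintegral_mono_set hsub).trans hIntg
    have hm0 : 0 < m := by linarith
    exact (ENNReal.ofReal_le_ofReal_iff (by positivity)).1 hfin
  have hvx : v x₁ ≤ C1 := by
    have h1 : w x₁ = v x₁ := by simp [hw, rho, normSq]
    rw [← h1]
    exact (hmax hx₁B).trans hmC
  obtain ⟨-, hgv, -⟩ := hz x₁ (hBK hx₁B)
  calc matNorm (hess u x₁) ≤ ∑ i, ∑ j, |hess u x₁ i j| := matNorm_le_sum _
    _ ≤ gU u x₁ := by unfold gU; linarith
    _ ≤ Λ + n ^ 2 * v x₁ := hgv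
    _ ≤ _ := by gcongr
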